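/- arXiv:1211.0738 — 4 statements merged into one kernel-verified Lean document; each statement's English description precedes it below -/
import Mathlib

section
/- Let S = R[A, B, C] be a polynomial ring graded with deg A = deg B = deg C = 1, and let f = x^α A + y^β B + z^γ C, g = y^{β'} A + z^{γ'} B + x^{α'} C. Then f, g is a regular sequence on S, and S/(f,g)S is isomorphic as a graded R-algebra to the Rees algebra R[It], where I = (a,b,c) is the ideal of maximal minors. -/
open scoped nonZeroDivisors

namespace MvPolynomial

variable {R : Type*} [CommRing R]

theorem C_dvd_iff_map_mk_eq_zero {σ : Type*} (u : R) (p : MvPolynomial σ R) :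
    C u ∣ p ↔ map (Ideal.Quotient.mk (Ideal.span {u})) p = 0 := by
  simp [C_dvd_iff_dvd_coeff, MvPolynomial.ext_iff, coeff_map, Ideal.Quotient.eq_zero_iff_mem,
    Ideal.mem_span_singleton]

theorem C_mem_nonZeroDivisors {σ : Type*} {u : R} (hu : u ∈ R⁰) :
    (C u : MvPolynomial σ R) ∈ (MvPolynomial σ R)⁰ := by
  refine mem_nonZeroDivisors_iff_right.2 fun p hp => ?_
  ext m
  have h := congrArg (coeff m) hp
  rw [mul_comm, coeff_C_mul, coeff_zero] at h
  simpa using (mul_left_mem_nonZeroDivisors_eq_zero_iff hu).1 h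

/-- A linear form one of whose coefficients is a nonzerodivisor is a nonzerodivisor. -/
theorem linearForm_mem_nonZeroDivisors {σ : Type*} [Fintype σ] {w : σ → R} {j : σ}
    (hw : w j ∈ R⁰) : (∑ i, C (w i) * X i : MvPolynomial σ R) ∈ (MvPolynomial σ R)⁰ := by
  classical
  refine mem_nonZeroDivisors_iff_right.2 fun q hq => ?_
  by_contra hne
  obtain ⟨m, hm, hmax⟩ := q.support.exists_max_image (fun m => m j) (support_nonempty.2 hne)
  have hcoeff := congrArg (coeff (m + Finsupp.single j 1)) hq
  rw [mul_comm, Finset.sum_mul, coeff_sum, Finset.sum_eq_single j, mul_assoc, coeff_C_mul,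
    mul_comm (X j), coeff_mul_X, coeff_zero, mul_left_mem_nonZeroDivisors_eq_zero_iff hw] at hcoeff
  · exact mem_support_iff.1 hm hcoeff
  · intro i _ hij
    rw [mul_assoc, coeff_C_mul, mul_comm (X i), coeff_mul_X']
    split_ifs
    · rw [notMem_support_iff.1, mul_zero]
      intro hmem
      have := hmax _ hmem
      simp [hij.symm] at this
    · rw [mul_zero]
  · simp

theorem coeff_aeval_C_mul_X {σ : Type*} (u : R) (p : MvPolynomial σ R) (m : σ →₀ ℕ) :
    coeff m (aeval (fun i => C u * X i : σ → MvPolynomial σ R) p) = u ^ m.degree * coeff m p := by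
  classical
  induction p using MvPolynomial.induction_on' with
  | monomial n a =>
    have : aeval (fun i => C u * X i : σ → MvPolynomial σ R) (monomial n a) =
        C (u ^ n.degree) * monomial n a := by
      rw [aeval_monomial, algebraMap_eq, monomial_eq]
      simp only [Finsupp.prod, mul_pow, Finset.prod_mul_distrib, Finset.prod_pow_eq_pow_sum,
        ← Finsupp.degree_apply, map_pow]
      ring
    rw [this, coeff_C_mul, coeff_monomial]
    split_ifs with h
    · rw [h]
    · simp
  | add p q hp hq => rw [map_add, coeff_add, coeff_add, hp, hq, mul_add]

theorem aeval_C_mul_X_injective {σ : Type*} {u : R} (hu : u ∈ R⁰) :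
    Function.Injective
      (aeval (fun i => C u * X i : σ → MvPolynomial σ R) : _ →ₐ[R] MvPolynomial σ R) := by
  refine (injective_iff_map_eq_zero _).2 fun p hp => ?_
  ext m
  have h := coeff_aeval_C_mul_X u p m
  rw [hp, coeff_zero, eq_comm, mul_left_mem_nonZeroDivisors_eq_zero_iff (pow_mem hu _)] at h
  simpa using h

/-- If `u X_j` lies in `T` modulo `J` for every variable `X_j`, then every polynomial lies in `T`
modulo `J` after multiplication by a power of `u`. -/
theorem exists_C_pow_mul_sub_mem {σ : Type*} {J : Ideal (MvPolynomial σ R)}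
    {T : Subalgebra R (MvPolynomial σ R)} {u : R} (hT : ∀ j, ∃ t ∈ T, C u * X j - t ∈ J)
    (s : MvPolynomial σ R) : ∃ N : ℕ, ∃ t ∈ T, C u ^ N * s - t ∈ J := by
  have hC (r : R) : C r ∈ T := T.algebraMap_mem r
  induction s using MvPolynomial.induction_on with
  | C r => exact ⟨0, C r, hC r, by simp⟩
  | add p q hp hq =>
    obtain ⟨N, t, ht, h⟩ := hp
    obtain ⟨N', t', ht', h'⟩ := hq
    refine ⟨N + N', C u ^ N' * t + C u ^ N * t',
      add_mem (mul_mem (pow_mem (hC u) _) ht) (mul_mem (pow_mem (hC u) _) ht'), ?_⟩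
    convert add_mem (J.mul_mem_left (C u ^ N') h) (J.mul_mem_left (C u ^ N) h') using 1
    ring
  | mul_X p j hp =>
    obtain ⟨N, t, ht, h⟩ := hp
    obtain ⟨t', ht', h'⟩ := hT j
    refine ⟨N + 1, t * t', mul_mem ht ht', ?_⟩
    convert add_mem (J.mul_mem_left (C u * X j) h) (J.mul_mem_left t h') using 1
    ring

/-- Elimination of the first variable by means of a linear form `u X₀ + v X₁ + w X₂`. -/
theorem exists_C_pow_mul_eq {u v w : R} (s : MvPolynomial (Fin 3) R) :
    ∃ (N : ℕ) (p : MvPolynomial (Fin 3) R) (t : MvPolynomial (Fin 2) R),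
      C u ^ N * s = (C u * X 0 + C v * X 1 + C w * X 2) * p + rename Fin.succ t := by
  have hX1 : (X 1 : MvPolynomial (Fin 3) R) ∈
      (rename Fin.succ : MvPolynomial (Fin 2) R →ₐ[R] _).range := ⟨X 0, by simp⟩
  have hX2 : (X 2 : MvPolynomial (Fin 3) R) ∈
      (rename Fin.succ : MvPolynomial (Fin 2) R →ₐ[R] _).range := ⟨X 1, by simp⟩
  have hC (r : R) : C r ∈ (rename Fin.succ : MvPolynomial (Fin 2) R →ₐ[R] _).range :=
    Subalgebra.algebraMap_mem _ r
  obtain ⟨N, t, ⟨t, rfl⟩, h⟩ := exists_C_pow_mul_sub_mem (u := u)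
    (J := Ideal.span {C u * X 0 + C v * X 1 + C w * X 2})
    (T := (rename Fin.succ : MvPolynomial (Fin 2) R →ₐ[R] _).range) (by
      intro j
      fin_cases j
      · refine ⟨-(C v * X 1 + C w * X 2),
          neg_mem (add_mem (mul_mem (hC _) hX1) (mul_mem (hC _) hX2)), ?_⟩
        exact Ideal.mem_span_singleton.2 ⟨1, by simp; ring⟩
      · exact ⟨C u * X 1, mul_mem (hC _) hX1, by simp⟩
      · exact ⟨C u * X 2, mul_mem (hC _) hX2, by simp⟩) s
  obtain ⟨p, hp⟩ := Ideal.mem_span_singleton.1 h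
  exact ⟨N, p, t, sub_eq_iff_eq_add.1 hp⟩

theorem dvd_of_dvd_C_pow_mul {σ : Type*} {F : MvPolynomial σ R} {u : R} (hu : u ∈ R⁰)
    (hF : map (Ideal.Quotient.mk (Ideal.span {u})) F ∈ (MvPolynomial σ (R ⧸ Ideal.span {u}))⁰)
    (N : ℕ) {q : MvPolynomial σ R} (h : F ∣ C u ^ N * q) : F ∣ q := by
  induction N with
  | zero => simpa using h
  | succ N ih =>
    refine ih ?_
    obtain ⟨p, hp⟩ := h
    have hup : C u ∣ p := by
      rw [C_dvd_iff_map_mk_eq_zero, ← mul_left_mem_nonZeroDivisors_eq_zero_iff hF, ← map_mul,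
        ← C_dvd_iff_map_mk_eq_zero, ← hp]
      exact ⟨C u ^ N * q, by ring⟩
    obtain ⟨p, rfl⟩ := hup
    refine ⟨p, (mul_cancel_left_mem_nonZeroDivisors (C_mem_nonZeroDivisors hu)).1 ?_⟩
    linear_combination hp

theorem mk_mem_nonZeroDivisors {u w : R} (h : ∀ r, u ∣ w * r → u ∣ r) :
    Ideal.Quotient.mk (Ideal.span {u}) w ∈ (R ⧸ Ideal.span {u})⁰ := by
  refine mem_nonZeroDivisors_iff_right.2 fun r hr => ?_
  obtain ⟨r, rfl⟩ := Ideal.Quotient.mk_surjective r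
  rw [← map_mul, Ideal.Quotient.eq_zero_iff_mem, Ideal.mem_span_singleton] at hr
  rw [Ideal.Quotient.eq_zero_iff_mem, Ideal.mem_span_singleton]
  exact h r (by rwa [mul_comm])

/-- Two linear forms `f = u X₀ + v X₁ + w X₂` and `g = u' X₀ + v' X₁ + w' X₂` form a regular
sequence as soon as `u, w` is one and the minor `u w' - u' w` is a nonzerodivisor. -/
theorem linearForm_dvd_of_dvd_mul {u v w u' v' w' : R} (hu : u ∈ R⁰)
    (hw : ∀ r, u ∣ w * r → u ∣ r) (hm : u * w' - u' * w ∈ R⁰) {q : MvPolynomial (Fin 3) R}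
    (h : C u * X 0 + C v * X 1 + C w * X 2 ∣ (C u' * X 0 + C v' * X 1 + C w' * X 2) * q) :
    C u * X 0 + C v * X 1 + C w * X 2 ∣ q := by
  obtain ⟨N, p, t, hN⟩ := exists_C_pow_mul_eq (u := u) (v := v) (w := w) q
  let ψ : MvPolynomial (Fin 3) R →ₐ[R] MvPolynomial (Fin 2) R :=
    aeval ![-(C v * X 0 + C w * X 1), C u * X 0, C u * X 1]
  have hC (r : R) : ψ (C r) = C r := ψ.commutes r
  have hψf : ψ (C u * X 0 + C v * X 1 + C w * X 2) = 0 := by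
    simp only [map_add, map_mul, hC]
    simp [ψ]
    ring
  have hψg : ψ (C u' * X 0 + C v' * X 1 + C w' * X 2) =
      ∑ i, C (![u * v' - u' * v, u * w' - u' * w] i) * X i := by
    simp only [map_add, map_mul, hC]
    simp [ψ]
    ring
  have hψt : ψ (rename Fin.succ t) = aeval (fun i => C u * X i) t := by
    rw [aeval_rename]
    congr 2
    ext1 i
    fin_cases i <;> simp
  have hψq : ψ q = 0 := by
    have := map_dvd ψ h
    rw [hψf, zero_dvd_iff, map_mul, hψg] at this
    exact (mul_left_mem_nonZeroDivisors_eq_zero_iff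
      (linearForm_mem_nonZeroDivisors (j := 1) (by simpa using hm))).1 this
  have ht : t = 0 := by
    have := congrArg ψ hN
    rw [map_mul, hψq, map_add, map_mul, hψf, hψt, mul_zero, zero_mul, zero_add] at this
    exact aeval_C_mul_X_injective hu (by rw [← this, map_zero])
  refine dvd_of_dvd_C_pow_mul hu ?_ N ⟨p, by rw [hN, ht]; simp⟩
  have := linearForm_mem_nonZeroDivisors (j := (2 : Fin 3))
    (w := ![Ideal.Quotient.mk (Ideal.span {u}) u, Ideal.Quotient.mk (Ideal.span {u}) v,
      Ideal.Quotient.mk (Ideal.span {u}) w]) (by simpa using mk_mem_nonZeroDivisors hw)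
  simpa [Fin.sum_univ_three] using this

/-- If `y, f, g` is a regular sequence, where `y` is a constant, then `y` is a nonzerodivisor
modulo `(f, g)`. -/
theorem mem_span_pair_of_C_pow_mul_mem {σ : Type*} {y : R} {f g : MvPolynomial σ R} (hy : y ∈ R⁰)
    (hf : map (Ideal.Quotient.mk (Ideal.span {y})) f ∈ (MvPolynomial σ (R ⧸ Ideal.span {y}))⁰)
    (hfg : ∀ q, map (Ideal.Quotient.mk (Ideal.span {y})) f ∣
      map (Ideal.Quotient.mk (Ideal.span {y})) g * q →
        map (Ideal.Quotient.mk (Ideal.span {y})) f ∣ q) (N : ℕ)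
    {s : MvPolynomial σ R} (hs : C y ^ N * s ∈ Ideal.span {f, g}) : s ∈ Ideal.span {f, g} := by
  induction N with
  | zero => simpa using hs
  | succ N ih =>
    refine ih ?_
    obtain ⟨p, q, hpq⟩ := Ideal.mem_span_pair.1 hs
    have h0 : map (Ideal.Quotient.mk (Ideal.span {y})) (p * f + q * g) = 0 := by
      rw [← C_dvd_iff_map_mk_eq_zero, hpq]
      exact ⟨C y ^ N * s, by ring⟩
    simp only [map_add, map_mul] at h0
    obtain ⟨r, hr⟩ := hfg (map (Ideal.Quotient.mk (Ideal.span {y})) q)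
      ⟨-map (Ideal.Quotient.mk (Ideal.span {y})) p, by linear_combination h0⟩
    obtain ⟨r, rfl⟩ := map_surjective _ Ideal.Quotient.mk_surjective r
    obtain ⟨q', hq'⟩ : C y ∣ q - f * r := by
      rw [C_dvd_iff_map_mk_eq_zero, map_sub, map_mul, hr, sub_self]
    obtain ⟨p', hp'⟩ : C y ∣ p + r * g := by
      rw [C_dvd_iff_map_mk_eq_zero, ← mul_left_mem_nonZeroDivisors_eq_zero_iff hf, map_add, map_mul]
      linear_combination h0 - map (Ideal.Quotient.mk (Ideal.span {y})) g * hr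
    refine Ideal.mem_span_pair.2 ⟨p', q', ?_⟩
    refine (mul_cancel_left_mem_nonZeroDivisors (C_mem_nonZeroDivisors hy)).1 ?_
    linear_combination hpq - f * hp' - g * hq'

/-- The defining equation of the Rees algebra of an ideal generated by a regular sequence
`b, c`. -/
theorem dvd_of_aeval_C_mul_X_eq_zero {b c : R} (hb : b ∈ R⁰) (hc : ∀ r, b ∣ c * r → b ∣ r)
    {t : MvPolynomial (Fin 2) R}
    (ht : aeval ![Polynomial.C b * Polynomial.X, Polynomial.C c * Polynomial.X] t =
      (0 : Polynomial R)) :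
    C c * X 0 - C b * X 1 ∣ t := by
  have hX : (X 0 : MvPolynomial (Fin 2) R) ∈
      (Polynomial.aeval (R := R) (X 0 : MvPolynomial (Fin 2) R)).range := ⟨Polynomial.X, by simp⟩
  have hC (r : R) : C r ∈ (Polynomial.aeval (R := R) (X 0 : MvPolynomial (Fin 2) R)).range :=
    Subalgebra.algebraMap_mem _ r
  obtain ⟨N, t', ⟨t', rfl⟩, h⟩ := exists_C_pow_mul_sub_mem (u := b)
    (J := Ideal.span {C c * X 0 - C b * X 1})
    (T := (Polynomial.aeval (R := R) (X 0 : MvPolynomial (Fin 2) R)).range) (by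
      intro j
      fin_cases j
      · exact ⟨C b * X 0, mul_mem (hC _) hX, by simp⟩
      · refine ⟨C c * X 0, mul_mem (hC _) hX, ?_⟩
        exact Ideal.mem_span_singleton.2 ⟨-1, by simp⟩) t
  obtain ⟨p, hp⟩ := Ideal.mem_span_singleton.1 h
  let ρ : MvPolynomial (Fin 2) R →ₐ[R] Polynomial R :=
    aeval ![Polynomial.C b * Polynomial.X, Polynomial.C c * Polynomial.X]
  have hρC (r : R) : ρ (C r) = Polynomial.C r := ρ.commutes r
  have hcomp : t'.comp (Polynomial.C b * Polynomial.X) = 0 := by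
    have h1 : ρ (Polynomial.aeval (X 0) t') = t'.comp (Polynomial.C b * Polynomial.X) := by
      rw [← Polynomial.aeval_algHom_apply, Polynomial.comp_eq_aeval]
      simp [ρ]
    have h2 : ρ (C c * X 0 - C b * X 1) = 0 := by
      simp only [map_sub, map_mul, hρC]
      simp [ρ]
      ring
    have h3 : ρ t = 0 := ht
    have h4 := congrArg ρ hp
    rw [map_sub, map_mul, map_mul, h2, h3, mul_zero, zero_mul, zero_sub, neg_eq_zero] at h4
    exact h1.symm.trans h4
  have ht' : t' = 0 := by
    ext n
    have := congrArg (fun p => Polynomial.coeff p n) hcomp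
    simp only [Polynomial.comp_C_mul_X_coeff, Polynomial.coeff_zero] at this
    simpa using (mul_right_mem_nonZeroDivisors_eq_zero_iff (pow_mem hb n)).1 this
  rw [ht', map_zero] at hp
  refine dvd_of_dvd_C_pow_mul hb ?_ N ⟨p, by simpa using hp⟩
  have := linearForm_mem_nonZeroDivisors (j := (0 : Fin 2))
    (w := ![Ideal.Quotient.mk (Ideal.span {b}) c, -Ideal.Quotient.mk (Ideal.span {b}) b])
    (by simpa using mk_mem_nonZeroDivisors hc)
  simpa [Fin.sum_univ_two, sub_eq_add_neg] using this

end MvPolynomial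

namespace RingTheory.Sequence

variable {R : Type*} [CommRing R]

theorem isWeaklyRegular_pair_iff {u v : R} :
    IsWeaklyRegular R [u, v] ↔ u ∈ R⁰ ∧ ∀ r, u ∣ v * r → u ∣ r := by
  rw [isWeaklyRegular_cons_iff, isWeaklyRegular_singleton_iff,
    isSMulRegular_quotient_iff_mem_of_smul_mem]
  refine and_congr ?_ ?_
  · rw [isSMulRegular_iff_right_eq_zero_of_smul, ← nonZeroDivisorsLeft_eq_nonZeroDivisors]
    simp [nonZeroDivisorsLeft]
  · refine forall_congr' fun r => ?_
    simp [Submodule.mem_smul_pointwise_iff_exists, dvd_def, eq_comm]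

theorem IsWeaklyRegular.of_mul_mem {u v w : R} (h : IsWeaklyRegular R [u, v, w]) {r : R}
    (hr : w * r ∈ Ideal.span {u, v}) : r ∈ Ideal.span {u, v} := by
  have := h.regular_mod_prev 2 (by simp)
  rw [isSMulRegular_quotient_iff_mem_of_smul_mem] at this
  simpa [Ideal.span_insert] using this r (by simpa [Ideal.span_insert] using hr)

theorem IsWeaklyRegular.pair {u v w : R} (h : IsWeaklyRegular R [u, v, w]) :
    IsWeaklyRegular R [u, v] :=
  ((isWeaklyRegular_append_iff R [u, v] [w]).1 h).1

/-- Modulo the first element of a regular sequence, the next two form a regular sequence. -/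
theorem IsWeaklyRegular.mk_dvd_of_mk_dvd_mul {u v w : R} (h : IsWeaklyRegular R [u, v, w])
    (r : R ⧸ Ideal.span {u})
    (hr : Ideal.Quotient.mk (Ideal.span {u}) v ∣ Ideal.Quotient.mk (Ideal.span {u}) w * r) :
    Ideal.Quotient.mk (Ideal.span {u}) v ∣ r := by
  have key (s : R) : Ideal.Quotient.mk (Ideal.span {u}) v ∣ Ideal.Quotient.mk (Ideal.span {u}) s ↔
      s ∈ Ideal.span {u, v} := by
    rw [Ideal.mem_span_pair]
    constructor
    · rintro ⟨q, hq⟩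
      obtain ⟨q, rfl⟩ := Ideal.Quotient.mk_surjective q
      rw [← map_mul, Ideal.Quotient.eq, Ideal.mem_span_singleton] at hq
      obtain ⟨p, hp⟩ := hq
      exact ⟨p, q, by linear_combination -hp⟩
    · rintro ⟨p, q, rfl⟩
      refine ⟨Ideal.Quotient.mk _ q, ?_⟩
      rw [← map_mul, Ideal.Quotient.eq, Ideal.mem_span_singleton]
      exact ⟨p, by ring⟩
  obtain ⟨r, rfl⟩ := Ideal.Quotient.mk_surjective r
  rw [← map_mul, key] at hr
  exact (key r).2 (h.of_mul_mem hr)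

end RingTheory.Sequence

open RingTheory.Sequence

theorem reesAlgebra_span_eq_adjoin {R : Type*} [CommRing R] (s : Set R) :
    reesAlgebra (Ideal.span s) =
      Algebra.adjoin R ((fun r => Polynomial.C r * Polynomial.X) '' s) := by
  rw [← adjoin_monomial_eq_reesAlgebra, Ideal.span, Submodule.map_span, Algebra.adjoin_span]
  simp [Polynomial.C_mul_X_eq_monomial]

open IsLocalRing Polynomial

/-- With `S = R[A,B,C]` (deg A = deg B = deg C = 1),
`f = x^α A + y^β B + z^γ C` and `g = y^β' A + z^γ' B + x^α' C`, the pair `f, g`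
is a regular sequence on `S` and `S/(f,g)` is isomorphic as a graded `R`-algebra
to the Rees algebra `R[It]`: the graded map `π : S → R[It] ⊆ R[t]`,
`A ↦ at, B ↦ bt, C ↦ ct`, has image `R[It]` and kernel `(f, g)`. -/
theorem rees_algebra_presentation
    {R : Type*} [CommRing R] [IsNoetherianRing R] [IsLocalRing R]
    (hdim : ringKrullDim R = 3)
    (hCM : ∀ u v w : R, (Ideal.span {u, v, w}).radical = maximalIdeal R →
      RingTheory.Sequence.IsRegular R [u, v, w])
    (x y z : R) (hsop : (Ideal.span {x, y, z}).radical = maximalIdeal R)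
    (α β γ α' β' γ' : ℕ)
    (hα : 0 < α) (hβ : 0 < β) (hγ : 0 < γ)
    (hα' : 0 < α') (hβ' : 0 < β') (hγ' : 0 < γ')
    (a b c : R)
    (ha : a = z ^ (γ + γ') - x ^ α' * y ^ β)
    (hb : b = x ^ (α + α') - y ^ β' * z ^ γ)
    (hc : c = y ^ (β + β') - x ^ α * z ^ γ')
    (I : Ideal R) (hI : I = Ideal.span {a, b, c})
    (f g : MvPolynomial (Fin 3) R)
    (hf : f = MvPolynomial.C (x ^ α) * MvPolynomial.X 0 +
      MvPolynomial.C (y ^ β) * MvPolynomial.X 1 +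
      MvPolynomial.C (z ^ γ) * MvPolynomial.X 2)
    (hg : g = MvPolynomial.C (y ^ β') * MvPolynomial.X 0 +
      MvPolynomial.C (z ^ γ') * MvPolynomial.X 1 +
      MvPolynomial.C (x ^ α') * MvPolynomial.X 2)
    (π : MvPolynomial (Fin 3) R →ₐ[R] Polynomial R)
    (hπ : π = MvPolynomial.aeval ![C a * X, C b * X, C c * X]) :
    RingTheory.Sequence.IsRegular (MvPolynomial (Fin 3) R) [f, g] ∧
      π.range = reesAlgebra I ∧
      RingHom.ker π = Ideal.span {f, g} := by
  have hm {r : R} (hr : r ∈ ({x, y, z} : Set R)) : r ∈ maximalIdeal R :=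
    hsop ▸ Ideal.le_radical (Ideal.subset_span hr)
  have hx : x ∈ maximalIdeal R := hm (by simp)
  have hy : y ∈ maximalIdeal R := hm (by simp)
  have hz : z ∈ maximalIdeal R := hm (by simp)
  have hreg (u v w : R) (hu : u ∈ maximalIdeal R) (hv : v ∈ maximalIdeal R)
      (hw : w ∈ maximalIdeal R) (hxr : x ∈ (Ideal.span {u, v, w}).radical)
      (hyr : y ∈ (Ideal.span {u, v, w}).radical) (hzr : z ∈ (Ideal.span {u, v, w}).radical) :
      IsWeaklyRegular R [u, v, w] := by
    refine (hCM u v w (le_antisymm ?_ ?_)).toIsWeaklyRegular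
    · rw [(maximalIdeal.isMaximal R).isPrime.radical_le_iff, Ideal.span_le]
      rintro r (rfl | rfl | rfl) <;> assumption
    · rw [← hsop, Ideal.radical_le_radical_iff, Ideal.span_le]
      rintro r (rfl | rfl | rfl) <;> assumption
  have hpow {r : R} {n : ℕ} (hr : r ∈ maximalIdeal R) (hn : 0 < n) : r ^ n ∈ maximalIdeal R :=
    Ideal.pow_mem_of_mem _ hr n hn
  have hxzy : IsWeaklyRegular R [x ^ α, z ^ γ, y] :=
    hreg _ _ _ (hpow hx hα) (hpow hz hγ) hy ⟨α, Ideal.subset_span (by simp)⟩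
      (Ideal.le_radical (Ideal.subset_span (by simp))) ⟨γ, Ideal.subset_span (by simp)⟩
  have hyxz : IsWeaklyRegular R [y, x, z] :=
    hreg _ _ _ hy hx hz (Ideal.le_radical (Ideal.subset_span (by simp)))
      (Ideal.le_radical (Ideal.subset_span (by simp)))
      (Ideal.le_radical (Ideal.subset_span (by simp)))
  have hyxz' : IsWeaklyRegular R [y, x ^ α, z ^ γ] :=
    hreg _ _ _ hy (hpow hx hα) (hpow hz hγ) ⟨α, Ideal.subset_span (by simp)⟩
      (Ideal.le_radical (Ideal.subset_span (by simp))) ⟨γ, Ideal.subset_span (by simp)⟩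
  have hbcz : IsWeaklyRegular R [b, c, z] := by
    have hz' : z ∈ Ideal.span {b, c, z} := Ideal.subset_span (by simp)
    refine hreg _ _ _ ?_ ?_ hz ⟨α + α', ?_⟩ ⟨β + β', ?_⟩ (Ideal.le_radical hz')
    · rw [hb]
      exact sub_mem (hpow hx (by omega)) (Ideal.mul_mem_left _ _ (hpow hz hγ))
    · rw [hc]
      exact sub_mem (hpow hy (by omega)) (Ideal.mul_mem_left _ _ (hpow hz hγ'))
    · rw [show x ^ (α + α') = b + y ^ β' * z ^ γ by rw [hb]; ring]
      exact add_mem (Ideal.subset_span (by simp))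
        (Ideal.mul_mem_left _ _ (Ideal.pow_mem_of_mem _ hz' _ hγ))
    · rw [show y ^ (β + β') = c + x ^ α * z ^ γ' by rw [hc]; ring]
      exact add_mem (Ideal.subset_span (by simp))
        (Ideal.mul_mem_left _ _ (Ideal.pow_mem_of_mem _ hz' _ hγ'))
  obtain ⟨hxα, hzγ⟩ := isWeaklyRegular_pair_iff.1 hxzy.pair
  obtain ⟨hy0, hxy⟩ := isWeaklyRegular_pair_iff.1 hyxz.pair
  obtain ⟨hb0, hcb⟩ := isWeaklyRegular_pair_iff.1 hbcz.pair
  have hxq := MvPolynomial.mk_mem_nonZeroDivisors hxy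
  have hπC (r : R) : π (MvPolynomial.C r) = C r := π.commutes r
  have hπf : π f = 0 := by
    simp only [hf, map_add, map_mul, hπC]
    simp [hπ, ha, hb, hc]
    ring
  have hπg : π g = 0 := by
    simp only [hg, map_add, map_mul, hπC]
    simp [hπ, ha, hb, hc]
    ring
  refine ⟨⟨?_, ?_⟩, ?_, le_antisymm (fun s hs => ?_) ?_⟩
  · rw [isWeaklyRegular_pair_iff]
    constructor
    · have := MvPolynomial.linearForm_mem_nonZeroDivisors (j := (0 : Fin 3))
        (w := ![x ^ α, y ^ β, z ^ γ]) (by simpa using hxα)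
      rw [hf]
      simpa [Fin.sum_univ_three] using this
    · intro q hq
      rw [hf, hg] at hq
      rw [hf]
      refine MvPolynomial.linearForm_dvd_of_dvd_mul hxα hzγ ?_ hq
      rwa [← pow_add, ← hb]
  · intro htop
    have h1 : (1 : MvPolynomial (Fin 3) R) ∈ Ideal.span {f, g} := by
      have : (1 : MvPolynomial (Fin 3) R) ∈ (⊤ : Ideal (MvPolynomial (Fin 3) R)) :=
        Submodule.mem_top
      rw [htop] at this
      simpa [Ideal.span_insert] using this
    obtain ⟨p, q, hpq⟩ := Ideal.mem_span_pair.1 h1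
    have := congrArg MvPolynomial.constantCoeff hpq
    simp [hf, hg] at this
  · rw [hπ, hI, MvPolynomial.aeval_range, reesAlgebra_span_eq_adjoin]
    congr 1
    ext p
    simp only [Matrix.range_cons, Matrix.range_empty, Set.image_insert_eq, Set.image_singleton,
      Set.mem_union, Set.mem_insert_iff, Set.mem_singleton_iff, Set.mem_empty_iff_false, or_false]
  · obtain ⟨N, p, t, hN⟩ := MvPolynomial.exists_C_pow_mul_eq (u := y ^ β') (v := z ^ γ')
      (w := x ^ α') s
    rw [← hg] at hN
    have hπt : MvPolynomial.aeval ![C b * X, C c * X] t = (0 : R[X]) := by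
      have h := congrArg π hN
      rw [map_mul, map_add, map_mul, hπg, (RingHom.mem_ker).1 hs, mul_zero, zero_mul, zero_add,
        hπ, MvPolynomial.aeval_rename] at h
      exact h.symm
    obtain ⟨q, rfl⟩ := MvPolynomial.dvd_of_aeval_C_mul_X_eq_zero hb0 hcb hπt
    have hrel : MvPolynomial.rename Fin.succ
        (MvPolynomial.C c * MvPolynomial.X 0 - MvPolynomial.C b * MvPolynomial.X 1) =
        MvPolynomial.C (y ^ β') * f - MvPolynomial.C (x ^ α) * g := by
      simp [hf, hg, hb, hc]
      ring
    have hmem : MvPolynomial.C y ^ (β' * N) * s ∈ Ideal.span {f, g} := by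
      rw [pow_mul, ← map_pow, hN, map_mul, hrel]
      exact Ideal.mem_span_pair.2 ⟨MvPolynomial.C (y ^ β') * MvPolynomial.rename Fin.succ q,
        p - MvPolynomial.C (x ^ α) * MvPolynomial.rename Fin.succ q, by ring⟩
    refine MvPolynomial.mem_span_pair_of_C_pow_mul_mem hy0 ?_ (fun q hq => ?_) _ hmem
    · have := MvPolynomial.linearForm_mem_nonZeroDivisors (j := (0 : Fin 3))
        (w := Ideal.Quotient.mk (Ideal.span {y}) ∘ ![x ^ α, y ^ β, z ^ γ])
        (by simpa using pow_mem hxq α)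
      rw [hf]
      simpa [Fin.sum_univ_three] using this
    · simp only [hf, hg, map_add, map_mul, MvPolynomial.map_C, MvPolynomial.map_X] at hq ⊢
      refine MvPolynomial.linearForm_dvd_of_dvd_mul ?_ hyxz'.mk_dvd_of_mk_dvd_mul ?_ hq
      · rw [map_pow]
        exact pow_mem hxq α
      · have hy' : Ideal.Quotient.mk (Ideal.span {y}) (y ^ β') = 0 :=
          Ideal.Quotient.eq_zero_iff_mem.2
            (Ideal.pow_mem_of_mem _ (Ideal.mem_span_singleton_self y) _ hβ')
        rw [hy', zero_mul, sub_zero, map_pow, map_pow, ← pow_add]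
        exact pow_mem hxq _
  · rw [Ideal.span_le]
    rintro r (rfl | rfl)
    · exact hπf
    · exact hπg
end

section
/- Let Q = (x^{α''}, y^{β''}, z^{γ''})R where α'' = min(α, α'), β'' = min(β, β'), γ'' = min(γ, γ'). Then for every n ≥ 2, (Iⁿ :_R Q)/Iⁿ ≅ (R/Q)^{⊕ C(n,2)}, where C(n,2) = n(n−1)/2. -/
open IsLocalRing

section ReesAlgebra

open Polynomial

/-- `r` is a nonzerodivisor on `A ⧸ J`. -/
def IsRegularMod {A : Type*} [CommRing A] (J : Ideal A) (r : A) : Prop :=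
  ∀ w, r * w ∈ J → w ∈ J

namespace IsRegularMod

variable {A : Type*} [CommRing A] {J : Ideal A} {r s : A}

lemma mul (hr : IsRegularMod J r) (hs : IsRegularMod J s) : IsRegularMod J (r * s) :=
  fun w hw ↦ hs w (hr _ (by rwa [← mul_assoc]))

lemma neg (hr : IsRegularMod J r) : IsRegularMod J (-r) :=
  fun w hw ↦ hr w (by simpa using J.neg_mem hw)

lemma pow (hr : IsRegularMod J r) (k : ℕ) : IsRegularMod J (r ^ k) := by
  induction k with
  | zero => exact fun w hw ↦ by simpa using hw
  | succ k ih => rw [pow_succ]; exact ih.mul hr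

lemma of_sub_mem (hr : IsRegularMod J r) (h : s - r ∈ J) : IsRegularMod J s := fun w hw ↦ by
  refine hr w ?_
  have : r * w = s * w - (s - r) * w := by ring
  rw [this]
  exact J.sub_mem hw (J.mul_mem_right _ h)

/-- Exchanging the two members of a regular sequence, as far as regularity of the first one
modulo the second is concerned. -/
lemma swap (hr : IsRegularMod J r) (hs : IsRegularMod (J ⊔ Ideal.span {r}) s) :
    IsRegularMod (J ⊔ Ideal.span {s}) r := by
  intro w hw
  obtain ⟨j, hj, _, hv, e⟩ := Submodule.mem_sup.1 hw
  obtain ⟨v, rfl⟩ := Ideal.mem_span_singleton'.1 hv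
  have hsv : s * v ∈ J ⊔ Ideal.span {r} := by
    have : s * v = -j + w * r := by linear_combination e
    rw [this]
    exact Submodule.add_mem_sup (J.neg_mem hj)
      (Ideal.mul_mem_left _ _ (Ideal.mem_span_singleton_self r))
  obtain ⟨j', hj', _, hv', e'⟩ := Submodule.mem_sup.1 (hs v hsv)
  obtain ⟨v', rfl⟩ := Ideal.mem_span_singleton'.1 hv'
  have hJ : w - s * v' ∈ J := by
    refine hr _ ?_
    have : r * (w - s * v') = j + s * j' := by linear_combination -e - s * e'
    rw [this]
    exact J.add_mem hj (J.mul_mem_left _ hj')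
  rw [show w = (w - s * v') + v' * s by ring]
  exact Submodule.add_mem_sup hJ (Ideal.mul_mem_left _ _ (Ideal.mem_span_singleton_self s))

lemma swap_bot (hr : IsRegularMod ⊥ r) (hs : IsRegularMod (Ideal.span {r}) s) :
    IsRegularMod (Ideal.span {s}) r := by
  have := swap hr (s := s) (by rwa [bot_sup_eq])
  rwa [bot_sup_eq] at this

lemma map_C (hr : IsRegularMod J r) : IsRegularMod (J.map C) (C r) := by
  intro w hw
  rw [Ideal.mem_map_C_iff] at hw ⊢
  exact fun n ↦ hr _ (by simpa using hw n)

/-- A linear polynomial is regular as soon as its leading coefficient is. -/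
lemma linear (hr : IsRegularMod J r) (s : A) : IsRegularMod (J.map C) (C r * X + C s) := by
  intro w hw
  rw [Ideal.mem_map_C_iff] at hw ⊢
  have key : ∀ k n, w.natDegree < n + k → w.coeff n ∈ J := by
    intro k
    induction k with
    | zero =>
      exact fun n hn ↦ by simp [coeff_eq_zero_of_natDegree_lt (show w.natDegree < n from hn)]
    | succ k ih =>
      intro n hn
      refine hr _ ?_
      have h1 := hw (n + 1)
      rw [add_mul, mul_assoc, coeff_add, coeff_C_mul, coeff_C_mul, coeff_X_mul] at h1
      exact (Ideal.add_mem_iff_left _ (J.mul_mem_left s (ih (n + 1) (by omega)))).1 h1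
  exact fun n ↦ key (w.natDegree + 1) n (by omega)

end IsRegularMod

/-- Modulo a linear polynomial, a polynomial times a power of the leading coefficient is
congruent to a constant. -/
lemma exists_pow_mul_sub_C_mem_span_linear {A : Type*} [CommRing A] (r s : A) (F : A[X]) :
    ∃ (N : ℕ) (F₀ : A), C (r ^ N) * F - C F₀ ∈ Ideal.span {C r * X + C s} := by
  simp only [Ideal.mem_span_singleton]
  induction F using Polynomial.induction_on' with
  | add p q hp hq =>
    obtain ⟨N, p₀, P, hP⟩ := hp
    obtain ⟨M, q₀, Q, hQ⟩ := hq
    refine ⟨N + M, r ^ M * p₀ + r ^ N * q₀, C (r ^ M) * P + C (r ^ N) * Q, ?_⟩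
    simp only [map_add, map_mul, map_pow, pow_add] at hP hQ ⊢
    linear_combination C r ^ M * hP + C r ^ N * hQ
  | monomial n a =>
    refine ⟨n, (-s) ^ n * a, ?_⟩
    rw [← C_mul_X_pow_eq_monomial]
    have := (sub_dvd_pow_sub_pow (C r * X) (-C s) n).mul_right (C a)
    rw [sub_neg_eq_add] at this
    refine this.trans (dvd_of_eq ?_)
    simp only [map_mul, map_pow, map_neg]
    ring

/-- The map from polynomials in three variables onto the Rees algebra of the ideal `(a, b, c)`. -/
noncomputable def reesEval {R : Type*} [CommRing R] (a b c : R) : R[X][X][X] →+* R[X] :=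
  eval₂RingHom (eval₂RingHom (eval₂RingHom C (C b * X)) (C c * X)) (C a * X)

section ReesEval

variable {R : Type*} [CommRing R] (a b c : R)

@[simp] lemma reesEval_X : reesEval a b c X = C a * X := by simp [reesEval]

@[simp] lemma reesEval_C_X : reesEval a b c (C X) = C c * X := by simp [reesEval]

@[simp] lemma reesEval_C_C_X : reesEval a b c (C (C X)) = C b * X := by simp [reesEval]

@[simp] lemma reesEval_C_C_C (r : R) : reesEval a b c (C (C (C r))) = C r := by simp [reesEval]

lemma reesEval_C_C (p : R[X]) : reesEval a b c (C (C p)) = p.comp (C b * X) := by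
  simp [reesEval, comp]

end ReesEval

lemma eq_zero_of_comp_C_mul_X {R : Type*} [CommRing R] {b : R} (hb : IsRegularMod ⊥ b) {p : R[X]}
    (hp : p.comp (C b * X) = 0) : p = 0 := by
  ext n
  have := congrArg (coeff · n) hp
  simp only [comp_C_mul_X_coeff, coeff_zero] at this ⊢
  simpa using hb.pow n (p.coeff n) (by simpa [mul_comm] using this)

/-- For a regular sequence `b, c`, the two-variable part of the kernel of the map to the Rees
algebra is generated by the Koszul relation. -/
lemma mem_span_of_reesEval_C_eq_zero {R : Type*} [CommRing R] (a : R) {b c : R}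
    (hb : IsRegularMod ⊥ b) (hc : IsRegularMod (Ideal.span {b}) c) (F : R[X][X])
    (hF : reesEval a b c (C F) = 0) :
    F ∈ Ideal.span {C (C b) * X + C (C (-c) * X)} := by
  obtain ⟨N, F₀, h⟩ := exists_pow_mul_sub_C_mem_span_linear (C b) (C (-c) * X) F
  set k : R[X][X] := C (C b) * X + C (C (-c) * X) with hk
  have hk0 : reesEval a b c (C k) = 0 := by
    simp only [hk, map_add, map_mul, reesEval_C_C_C, reesEval_C_X, reesEval_C_C_X, map_neg]
    ring
  obtain ⟨G, hG⟩ := Ideal.mem_span_singleton.1 h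
  have hF0 : F₀ = 0 := by
    refine eq_zero_of_comp_C_mul_X hb ?_
    rw [← reesEval_C_C a b c]
    have := congrArg (fun p ↦ reesEval a b c (C p)) hG
    simpa [hk0, hF] using this
  have hreg : IsRegularMod (Ideal.span {k}) (C (C b)) := by
    have hb' : IsRegularMod ⊥ (C (C b)) := by
      have := hb.map_C.map_C
      simpa [Ideal.map_bot] using this
    refine hb'.swap_bot ?_
    have h1 : IsRegularMod ((Ideal.span {b}).map C) (C c * X + C 0) := hc.linear 0
    have h2 := h1.neg.map_C
    rw [Ideal.map_span, Ideal.map_span] at h2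
    simp only [Set.image_singleton] at h2
    refine h2.of_sub_mem ?_
    rw [Ideal.mem_span_singleton]
    refine ⟨X, ?_⟩
    simp [hk]
  refine hreg.pow N F ?_
  simpa [hF0] using h

section HilbertBurch

variable {R : Type*} [CommRing R]

/-- The linear form attached to the first row `(x, y, z)` of a `2 × 3` matrix; the variables
`A, B, C` dual to the minors are `X`, `C (C X)`, `C X`. -/
noncomputable def rowForm (x y z : R) : R[X][X][X] :=
  C (C (C x)) * X + C (C (C z) * X + C (C y * X))

variable {x₁ y₁ z₁ x₂ y₂ z₂ : R}

/-- The two rows of the matrix give a regular sequence modulo which `x₁` is regular. -/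
lemma rowForm_regular (hx₁ : IsRegularMod ⊥ x₁)
    (hy₂ : IsRegularMod (Ideal.span {x₁}) y₂) (hz₁ : IsRegularMod (Ideal.span {x₁}) z₁)
    (hz₁' : IsRegularMod (Ideal.span {x₁, y₂}) z₁)
    (hb : IsRegularMod ⊥ (x₁ * x₂ - y₂ * z₁)) :
    IsRegularMod ⊥ (rowForm x₁ y₁ z₁) ∧
    IsRegularMod (Ideal.span {rowForm x₁ y₁ z₁}) (rowForm y₂ z₂ x₂) ∧
    IsRegularMod (Ideal.span {rowForm x₁ y₁ z₁} ⊔ Ideal.span {rowForm y₂ z₂ x₂})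
      (C (C (C x₁))) := by
  set f := rowForm x₁ y₁ z₁ with hf
  set g := rowForm y₂ z₂ x₂ with hg
  set f₀ : R[X][X] := C (C z₁) * X + C (C y₁ * X) with hf₀
  set h : R[X][X] := C (C (x₁ * x₂ - y₂ * z₁)) * X + C (C (x₁ * z₂ - y₁ * y₂) * X) with hh
  have hx₁' : IsRegularMod ⊥ (C (C x₁)) := by
    simpa only [Ideal.map_bot] using hx₁.map_C.map_C
  have hx₁'' : IsRegularMod ⊥ (C (C (C x₁))) := by
    simpa only [Ideal.map_bot] using hx₁'.map_C
  have hfreg : IsRegularMod ⊥ f := by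
    have := hx₁'.linear f₀
    rwa [Ideal.map_bot] at this
  have hf₀reg : IsRegularMod (Ideal.span {C (C x₁)}) f₀ := by
    simpa only [Ideal.map_span, Set.image_singleton] using hz₁.map_C.linear (C y₁ * X)
  have hfx : IsRegularMod (Ideal.span {C (C (C x₁))}) f := by
    have := hf₀reg.map_C
    simp only [Ideal.map_span, Set.image_singleton] at this
    exact this.of_sub_mem (Ideal.mem_span_singleton.2 ⟨X, by simp [hf, rowForm, hf₀]⟩)
  have hgx : IsRegularMod (Ideal.span {f} ⊔ Ideal.span {C (C (C x₁))}) g := by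
    have h1 : IsRegularMod (Ideal.span {C (C x₁)} ⊔ Ideal.span {C (C y₂)}) f₀ := by
      have := hz₁'.map_C.linear (C y₁ * X)
      simpa only [Ideal.span_insert, Ideal.map_sup, Ideal.map_span, Set.image_singleton] using this
    have h2 : IsRegularMod (Ideal.span {C (C x₁)}) (C (C y₂)) := by
      simpa only [Ideal.map_span, Set.image_singleton] using hy₂.map_C.map_C
    have h3 := (h2.swap h1).linear (C (C x₂) * X + C (C z₂ * X))
    have e : (Ideal.span {C (C x₁)} ⊔ Ideal.span {f₀}).map C =
        Ideal.span {f} ⊔ Ideal.span {C (C (C x₁))} := by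
      have : f = C f₀ + X * C (C (C x₁)) := by simp only [hf, rowForm, hf₀]; ring
      rw [Ideal.map_sup, Ideal.map_span, Ideal.map_span, Set.image_singleton, Set.image_singleton,
        ← Ideal.span_insert, ← Ideal.span_insert, Set.pair_comm, this]
      exact (Ideal.span_pair_add_mul_right (C f₀) (C (C (C x₁))) X).symm
    rwa [e] at h3
  have hhreg : IsRegularMod (Ideal.span {C (C x₁)}) h := by
    have h1 : IsRegularMod (Ideal.span {x₁}) (x₁ * x₂ - y₂ * z₁) :=
      (hy₂.mul hz₁).neg.of_sub_mem (Ideal.mem_span_singleton.2 ⟨x₂, by ring⟩)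
    simpa only [Ideal.map_span, Set.image_singleton] using
      h1.map_C.linear (C (x₁ * z₂ - y₁ * y₂) * X)
  have hh0 : IsRegularMod ⊥ (C h) := by
    have := (hb.map_C.linear (C (x₁ * z₂ - y₁ * y₂) * X)).map_C
    simpa only [Ideal.map_bot] using this
  refine ⟨hfreg, ?_, ?_⟩
  · have hfh : IsRegularMod (Ideal.span {C h}) f := by
      have := (hx₁'.swap_bot hhreg).linear f₀
      rwa [Ideal.map_span, Set.image_singleton] at this
    intro w hw
    refine hh0.swap_bot hfh w ?_
    have e : C h * w = C (C (C x₁)) * (g * w) - C (C (C y₂)) * w * f := by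
      simp only [hh, hg, hf, rowForm, map_add, map_mul, map_sub]
      ring
    rw [e]
    exact Ideal.sub_mem _ (Ideal.mul_mem_left _ _ hw)
      (Ideal.mul_mem_left _ _ (Ideal.mem_span_singleton_self _))
  · exact (hx₁''.swap_bot hfx).swap hgx

/-- The ideal of maximal minors is of linear type. -/
lemma mem_span_rowForm_of_reesEval_eq_zero (hx₁ : IsRegularMod ⊥ x₁)
    (hy₂ : IsRegularMod (Ideal.span {x₁}) y₂) (hz₁ : IsRegularMod (Ideal.span {x₁}) z₁)
    (hz₁' : IsRegularMod (Ideal.span {x₁, y₂}) z₁) {a b c : R}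
    (ha : a = z₁ * z₂ - x₂ * y₁) (hb : b = x₁ * x₂ - y₂ * z₁) (hc : c = y₁ * y₂ - x₁ * z₂)
    (hbreg : IsRegularMod ⊥ b) (hcreg : IsRegularMod (Ideal.span {b}) c)
    (F : R[X][X][X]) (hF : reesEval a b c F = 0) :
    F ∈ Ideal.span {rowForm x₁ y₁ z₁} ⊔ Ideal.span {rowForm y₂ z₂ x₂} := by
  obtain ⟨-, -, hreg⟩ := rowForm_regular (y₁ := y₁) (x₂ := x₂) (z₂ := z₂) hx₁ hy₂ hz₁
    hz₁' (hb ▸ hbreg)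
  obtain ⟨N, F₀, G, hG⟩ : ∃ (N : ℕ) (F₀ : R[X][X]) (G : R[X][X][X]),
      C (C (C x₁)) ^ N * F = C F₀ + rowForm x₁ y₁ z₁ * G := by
    obtain ⟨N, F₀, h⟩ :=
      exists_pow_mul_sub_C_mem_span_linear (C (C x₁)) (C (C z₁) * X + C (C y₁ * X)) F
    obtain ⟨G, hG⟩ := Ideal.mem_span_singleton.1 h
    exact ⟨N, F₀, G, by rw [← C_pow]; exact eq_add_of_sub_eq' hG⟩
  have hf0 : reesEval a b c (rowForm x₁ y₁ z₁) = 0 := by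
    simp only [rowForm, map_add, map_mul, reesEval_X, reesEval_C_C_C, reesEval_C_X,
      reesEval_C_C_X, ha, hb, hc, map_sub]
    ring
  have hF₀ : reesEval a b c (C F₀) = 0 := by
    have := congrArg (reesEval a b c) hG
    rw [map_add, map_mul, map_mul, hf0, hF, mul_zero, zero_mul, add_zero] at this
    exact this.symm
  obtain ⟨H, hH⟩ := Ideal.mem_span_singleton.1
    (mem_span_of_reesEval_C_eq_zero a hbreg hcreg F₀ hF₀)
  refine hreg.pow N F ?_
  have hf : rowForm x₁ y₁ z₁ ∈ Ideal.span {rowForm x₁ y₁ z₁} ⊔ Ideal.span {rowForm y₂ z₂ x₂} :=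
    Ideal.mem_sup_left (Ideal.mem_span_singleton_self _)
  have hg : rowForm y₂ z₂ x₂ ∈ Ideal.span {rowForm x₁ y₁ z₁} ⊔ Ideal.span {rowForm y₂ z₂ x₂} :=
    Ideal.mem_sup_right (Ideal.mem_span_singleton_self _)
  rw [hG, hH, C_mul]
  refine Ideal.add_mem _ (Ideal.mul_mem_right _ _ ?_) (Ideal.mul_mem_right _ _ hf)
  refine (Ideal.add_mem_iff_left _ (Ideal.mul_mem_left _ (C (C (C y₂))) hf)).1 ?_
  convert Ideal.mul_mem_left _ (C (C (C x₁))) hg using 1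
  simp only [rowForm, map_add, map_mul, map_sub, map_neg, hb, hc]
  ring

end HilbertBurch

section Koszul

variable {S : Type*} [CommRing S] {q₁ q₂ q₃ : S}

lemma IsRegularMod.eq_of_mul_eq {r s t : S} (hr : IsRegularMod ⊥ r) (h : r * s = r * t) :
    s = t := by
  simpa [sub_eq_zero] using hr (s - t) (by simp [mul_sub, h])

lemma IsRegularMod.exists_mul_eq {r s t u : S} (hr : IsRegularMod (Ideal.span {s}) r)
    (h : r * t = s * u) : ∃ v, t = s * v :=
  Ideal.mem_span_singleton.1 (hr t (Ideal.mem_span_singleton.2 ⟨u, h⟩))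

lemma exists_eq_mul_of_cross_eq_zero (h₁ : IsRegularMod ⊥ q₁)
    (h₂ : IsRegularMod (Ideal.span {q₁}) q₂) {u₁ u₂ u₃ : S}
    (hu₃ : q₁ * u₂ = q₂ * u₁) (hu₂ : q₁ * u₃ = q₃ * u₁) :
    ∃ v, u₁ = q₁ * v ∧ u₂ = q₂ * v ∧ u₃ = q₃ * v := by
  obtain ⟨v, rfl⟩ := h₂.exists_mul_eq hu₃.symm
  exact ⟨v, rfl, h₁.eq_of_mul_eq (by rw [hu₃]; ring), h₁.eq_of_mul_eq (by rw [hu₂]; ring)⟩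

lemma exists_cross_of_dot_eq_zero (h₁ : IsRegularMod ⊥ q₁)
    (h₂ : IsRegularMod (Ideal.span {q₁}) q₂) (h₃ : IsRegularMod (Ideal.span {q₁, q₂}) q₃)
    {v₁ v₂ v₃ : S} (hv : q₁ * v₁ + q₂ * v₂ + q₃ * v₃ = 0) :
    ∃ m₁ m₂ m₃, v₁ = q₂ * m₃ - q₃ * m₂ ∧ v₂ = q₃ * m₁ - q₁ * m₃ ∧ v₃ = q₁ * m₂ - q₂ * m₁ := by
  obtain ⟨s, t, hst⟩ := Ideal.mem_span_pair.1 (h₃ v₃ (Ideal.mem_span_pair.2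
    ⟨-v₁, -v₂, by linear_combination -hv⟩))
  obtain ⟨r, hr⟩ := h₂.exists_mul_eq (t := v₂ + q₃ * t) (u := -(v₁ + q₃ * s))
    (by linear_combination hv + q₃ * hst)
  refine ⟨-t, s, -r, ?_, by linear_combination hr, by linear_combination -hst⟩
  exact h₁.eq_of_mul_eq (by linear_combination hv + q₃ * hst - q₂ * hr)

variable {f₁ f₂ f₃ g₁ g₂ g₃ f g : S}

/-- If `q × U` vanishes modulo a regular sequence `f, g` of members of `(q₁, q₂, q₃)`, then modulo
`f, g` the vector `U` is a combination of `q` and the vector of minors of the coefficients. -/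
lemma exists_mem_of_cross_mem (h₁ : IsRegularMod ⊥ q₁)
    (h₂ : IsRegularMod (Ideal.span {q₁}) q₂) (h₃ : IsRegularMod (Ideal.span {q₁, q₂}) q₃)
    (hf : f = q₁ * f₁ + q₂ * f₂ + q₃ * f₃) (hg : g = q₁ * g₁ + q₂ * g₂ + q₃ * g₃)
    (hfreg : IsRegularMod ⊥ f) (hgreg : IsRegularMod (Ideal.span {f}) g) {u₁ u₂ u₃ : S}
    (hu₁ : q₂ * u₃ - q₃ * u₂ ∈ Ideal.span {f} ⊔ Ideal.span {g})
    (hu₂ : q₃ * u₁ - q₁ * u₃ ∈ Ideal.span {f} ⊔ Ideal.span {g})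
    (hu₃ : q₁ * u₂ - q₂ * u₁ ∈ Ideal.span {f} ⊔ Ideal.span {g}) :
    ∃ e v, u₁ + (f₂ * g₃ - f₃ * g₂) * e - q₁ * v ∈ Ideal.span {f} ⊔ Ideal.span {g} := by
  rw [← Ideal.span_insert] at *
  obtain ⟨a₁, b₁, hab₁⟩ := Ideal.mem_span_pair.1 hu₁
  obtain ⟨a₂, b₂, hab₂⟩ := Ideal.mem_span_pair.1 hu₂
  obtain ⟨a₃, b₃, hab₃⟩ := Ideal.mem_span_pair.1 hu₃
  obtain ⟨e, he⟩ := hgreg.exists_mul_eq (t := q₁ * b₁ + q₂ * b₂ + q₃ * b₃)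
    (u := -(q₁ * a₁ + q₂ * a₂ + q₃ * a₃))
    (by linear_combination q₁ * hab₁ + q₂ * hab₂ + q₃ * hab₃)
  have he' : q₁ * a₁ + q₂ * a₂ + q₃ * a₃ = -(g * e) := hfreg.eq_of_mul_eq
    (by linear_combination q₁ * hab₁ + q₂ * hab₂ + q₃ * hab₃ - g * he)
  obtain ⟨m₁, m₂, m₃, hm₁, hm₂, hm₃⟩ := exists_cross_of_dot_eq_zero h₁ h₂ h₃
    (v₁ := a₁ + g₁ * e) (v₂ := a₂ + g₂ * e) (v₃ := a₃ + g₃ * e)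
    (by linear_combination he' - e * hg)
  obtain ⟨n₁, n₂, n₃, hn₁, hn₂, hn₃⟩ := exists_cross_of_dot_eq_zero h₁ h₂ h₃
    (v₁ := b₁ - f₁ * e) (v₂ := b₂ - f₂ * e) (v₃ := b₃ - f₃ * e)
    (by linear_combination he + e * hf)
  obtain ⟨v, hv, -⟩ := exists_eq_mul_of_cross_eq_zero h₁ h₂ (q₃ := q₃)
    (u₁ := u₁ - (f₂ * g₃ - f₃ * g₂) * e - f * m₁ - g * n₁)
    (u₂ := u₂ - (f₃ * g₁ - f₁ * g₃) * e - f * m₂ - g * n₂)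
    (u₃ := u₃ - (f₁ * g₂ - f₂ * g₁) * e - f * m₃ - g * n₃)
    (by linear_combination -hab₃ + f * hm₃ + g * hn₃ + f₃ * e * hg - g₃ * e * hf)
    (by linear_combination hab₂ - f * hm₂ - g * hn₂ - f₂ * e * hg + g₂ * e * hf)
  exact ⟨-e, v, Ideal.mem_span_pair.2 ⟨m₁, n₁, by linear_combination -hv⟩⟩

/-- If the vector of minors of the coefficients, times `e`, is a multiple of `q` modulo the regular
sequence `f, g`, then `e` lies in `(q₁, q₂, q₃)`. -/
lemma mem_span_of_mul_sub_mem
    (hf : f = q₁ * f₁ + q₂ * f₂ + q₃ * f₃) (hg : g = q₁ * g₁ + q₂ * g₂ + q₃ * g₃)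
    (hfreg : IsRegularMod ⊥ f) (hgreg : IsRegularMod (Ideal.span {f}) g) {e v : S}
    (hu₁ : q₁ * v - (f₂ * g₃ - f₃ * g₂) * e ∈ Ideal.span {f} ⊔ Ideal.span {g})
    (hu₂ : q₂ * v - (f₃ * g₁ - f₁ * g₃) * e ∈ Ideal.span {f} ⊔ Ideal.span {g})
    (hu₃ : q₃ * v - (f₁ * g₂ - f₂ * g₁) * e ∈ Ideal.span {f} ⊔ Ideal.span {g}) :
    e ∈ Ideal.span {q₁, q₂, q₃} := by
  rw [← Ideal.span_insert] at *
  obtain ⟨a₁, b₁, hab₁⟩ := Ideal.mem_span_pair.1 hu₁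
  obtain ⟨a₂, b₂, hab₂⟩ := Ideal.mem_span_pair.1 hu₂
  obtain ⟨a₃, b₃, hab₃⟩ := Ideal.mem_span_pair.1 hu₃
  obtain ⟨w₁, hw₁⟩ := hgreg.exists_mul_eq (t := f₁ * e + (q₂ * b₃ - q₃ * b₂))
    (u := g₁ * e - (q₂ * a₃ - q₃ * a₂))
    (by linear_combination q₂ * hab₃ - q₃ * hab₂ + f₁ * e * hg - g₁ * e * hf)
  obtain ⟨w₂, hw₂⟩ := hgreg.exists_mul_eq (t := f₂ * e + (q₃ * b₁ - q₁ * b₃))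
    (u := g₂ * e - (q₃ * a₁ - q₁ * a₃))
    (by linear_combination q₃ * hab₁ - q₁ * hab₃ + f₂ * e * hg - g₂ * e * hf)
  obtain ⟨w₃, hw₃⟩ := hgreg.exists_mul_eq (t := f₃ * e + (q₁ * b₂ - q₂ * b₁))
    (u := g₃ * e - (q₁ * a₂ - q₂ * a₁))
    (by linear_combination q₁ * hab₂ - q₂ * hab₁ + f₃ * e * hg - g₃ * e * hf)
  have he : e = q₁ * w₁ + q₂ * w₂ + q₃ * w₃ := hfreg.eq_of_mul_eq
    (by linear_combination q₁ * hw₁ + q₂ * hw₂ + q₃ * hw₃ + e * hf)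
  rw [he]
  refine Ideal.add_mem _ (Ideal.add_mem _ ?_ ?_) ?_ <;>
    exact Ideal.mul_mem_right _ _ (Ideal.subset_span (by simp))

end Koszul

lemma reesEval_coeff_mem {R : Type*} [CommRing R] (a b c : R) (F : R[X][X][X]) (n : ℕ) :
    (reesEval a b c F).coeff n ∈ Ideal.span {a, b, c} ^ n := by
  suffices h : reesEval a b c F ∈ reesAlgebra (Ideal.span {a, b, c}) from h n
  have hX : ∀ r ∈ ({a, b, c} : Set R), C r * X ∈ reesAlgebra (Ideal.span {a, b, c}) := by
    intro r hr
    rw [C_mul_X_eq_monomial, reesAlgebra.monomial_mem, pow_one]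
    exact Ideal.subset_span hr
  have hev : ∀ {A : Type _} [CommRing A] (ψ : A →+* R[X]) (r : R[X]) (p : A[X]),
      (∀ s, ψ s ∈ reesAlgebra (Ideal.span {a, b, c})) → r ∈ reesAlgebra (Ideal.span {a, b, c}) →
      eval₂RingHom ψ r p ∈ reesAlgebra (Ideal.span {a, b, c}) := by
    intro A _ ψ r p hψ hr
    rw [coe_eval₂RingHom, eval₂_eq_sum_range]
    exact sum_mem fun i _ ↦ mul_mem (hψ _) (pow_mem hr _)
  refine hev _ _ _ (fun p ↦ hev _ _ _ (fun q ↦ hev _ _ _ (fun s ↦ ?_) (hX b (by simp)))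
    (hX c (by simp))) (hX a (by simp))
  exact algebraMap_mem (reesAlgebra (Ideal.span {a, b, c})) s

section MvPolynomial

variable (R : Type*) [CommRing R]

/-- Polynomials in three variables as iterated polynomials. -/
noncomputable def toIterated : MvPolynomial (Fin 3) R →+* R[X][X][X] :=
  MvPolynomial.eval₂Hom (S₁ := R[X][X][X]) (C.comp (C.comp C)) ![X, C (C X), C X]

/-- Iterated polynomials as polynomials in three variables. -/
noncomputable def ofIterated : R[X][X][X] →+* MvPolynomial (Fin 3) R :=
  eval₂RingHom (eval₂RingHom (eval₂RingHom MvPolynomial.C (MvPolynomial.X 1))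
    (MvPolynomial.X 2)) (MvPolynomial.X 0)

variable {R}

lemma ofIterated_C_C_C (r : R) : ofIterated R (C (C (C r))) = MvPolynomial.C r := by
  simp [ofIterated]

lemma ofIterated_toIterated (p : MvPolynomial (Fin 3) R) : ofIterated R (toIterated R p) = p := by
  suffices h : (ofIterated R).comp (toIterated R) = RingHom.id _ from RingHom.congr_fun h p
  refine MvPolynomial.ringHom_ext (fun r ↦ ?_) (fun i ↦ ?_)
  · simp [toIterated, ofIterated]
  · fin_cases i <;> simp [toIterated, ofIterated]

lemma reesEval_toIterated (a b c : R) {p : MvPolynomial (Fin 3) R} {n : ℕ}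
    (hp : p.IsHomogeneous n) :
    reesEval a b c (toIterated R p) = C (MvPolynomial.eval ![a, b, c] p) * X ^ n := by
  have h : (reesEval a b c).comp (toIterated R) =
      MvPolynomial.eval₂Hom C (fun i ↦ C (![a, b, c] i) * X) := by
    refine MvPolynomial.ringHom_ext (fun r ↦ ?_) (fun i ↦ ?_)
    · simp [toIterated]
    · fin_cases i <;> simp [toIterated]
  have h' := RingHom.congr_fun h p
  rw [RingHom.comp_apply] at h'
  rw [h', MvPolynomial.coe_eval₂Hom, MvPolynomial.eval₂_eq, MvPolynomial.eval_eq, map_sum,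
    Finset.sum_mul]
  refine Finset.sum_congr rfl fun d hd ↦ ?_
  have hdeg : ∑ i ∈ d.support, d i = n := by
    simpa [Finsupp.weight_apply, Finsupp.sum] using hp (MvPolynomial.mem_support_iff.1 hd)
  simp only [mul_pow, Finset.prod_mul_distrib, Finset.prod_pow_eq_pow_sum, hdeg, map_mul, map_prod,
    map_pow, mul_assoc]

/-- The polynomial with prescribed coefficients at the monomials of degree `m`. -/
noncomputable def polyOfCoeffs (m : ℕ) :
    (Finset.finsuppAntidiag (Finset.univ : Finset (Fin 3)) m → R) →ₗ[R] MvPolynomial (Fin 3) R :=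
  ∑ i, (MvPolynomial.monomial i.1).comp (LinearMap.proj i)

lemma coeff_polyOfCoeffs (m : ℕ) (e : Finset.finsuppAntidiag (Finset.univ : Finset (Fin 3)) m → R)
    (i : Finset.finsuppAntidiag (Finset.univ : Finset (Fin 3)) m) :
    (polyOfCoeffs m e).coeff i.1 = e i := by
  classical
  simp [polyOfCoeffs, MvPolynomial.coeff_sum, MvPolynomial.coeff_monomial]

lemma mem_finsuppAntidiag_iff_degree {m : ℕ} {d : Fin 3 →₀ ℕ} :
    d ∈ Finset.finsuppAntidiag (Finset.univ : Finset (Fin 3)) m ↔ d.degree = m := by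
  simp [Finset.mem_finsuppAntidiag, Finsupp.degree_eq_sum]

lemma isHomogeneous_polyOfCoeffs (m : ℕ)
    (e : Finset.finsuppAntidiag (Finset.univ : Finset (Fin 3)) m → R) :
    (polyOfCoeffs m e).IsHomogeneous m := by
  simp only [polyOfCoeffs, LinearMap.sum_apply, LinearMap.comp_apply]
  exact MvPolynomial.IsHomogeneous.sum _ _ _ fun i _ ↦
    MvPolynomial.isHomogeneous_monomial _ (mem_finsuppAntidiag_iff_degree.1 i.2)

lemma MvPolynomial.IsHomogeneous.exists_polyOfCoeffs_eq {m : ℕ} {p : MvPolynomial (Fin 3) R}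
    (hp : p.IsHomogeneous m) : ∃ e, polyOfCoeffs m e = p := by
  refine ⟨fun i ↦ p.coeff i.1, ?_⟩
  ext d
  by_cases hd : d ∈ Finset.finsuppAntidiag (Finset.univ : Finset (Fin 3)) m
  · exact coeff_polyOfCoeffs m _ ⟨d, hd⟩
  · rw [mem_finsuppAntidiag_iff_degree] at hd
    rw [hp.coeff_eq_zero hd, (isHomogeneous_polyOfCoeffs m _).coeff_eq_zero hd]

lemma mem_span_triple_pow_iff_exists_isHomogeneous {a b c u : R} {n : ℕ} :
    u ∈ Ideal.span {a, b, c} ^ n ↔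
      ∃ p : MvPolynomial (Fin 3) R, p.IsHomogeneous n ∧ MvPolynomial.eval ![a, b, c] p = u := by
  have hr : ({a, b, c} : Set R) = Set.range ![a, b, c] := by
    ext r
    simp only [Matrix.range_cons, Matrix.range_empty, Set.union_empty, Set.mem_union,
      Set.mem_insert_iff, Set.mem_singleton_iff]
  rw [hr, Ideal.mem_span_pow_iff_exists_isHomogeneous]

end MvPolynomial

/-- Two surjections with the same kernel have isomorphic targets. -/
lemma nonempty_linearEquiv_of_ker_eq_pi {R M ι : Type*} [CommRing R] [AddCommGroup M] [Module R M]
    [Fintype ι] {k : ℕ} (hk : Fintype.card ι = k) (Q : Ideal R) (Ψ : (ι → R) →ₗ[R] M)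
    (hΨ : Function.Surjective Ψ) (hker : ∀ e, Ψ e = 0 ↔ ∀ i, e i ∈ Q) :
    Nonempty (M ≃ₗ[R] (Fin k → R ⧸ Q)) := by
  let π : (ι → R) →ₗ[R] (ι → R ⧸ Q) := LinearMap.pi fun i ↦ Q.mkQ.comp (LinearMap.proj i)
  have hπ : Function.Surjective π := fun v ↦ by
    choose w hw using fun i ↦ Q.mkQ_surjective (v i)
    exact ⟨w, funext hw⟩
  have e : LinearMap.ker Ψ = LinearMap.ker π := by
    ext v
    rw [LinearMap.mem_ker, LinearMap.mem_ker, hker, funext_iff]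
    simp [π, Ideal.Quotient.eq_zero_iff_mem]
  exact ⟨(Ψ.quotKerEquivOfSurjective hΨ).symm ≪≫ₗ Submodule.quotEquivOfEq _ _ e ≪≫ₗ
    π.quotKerEquivOfSurjective hπ ≪≫ₗ
    LinearEquiv.funCongrLeft R (R ⧸ Q) (Fintype.equivFinOfCardEq hk).symm⟩

section RingHom

variable {S T : Type*} [CommRing S] [CommRing T] (φ : S →+* T)

lemma RingHom.map_mul_sub_mul (p q r s : S) : φ (p * q - r * s) = φ p * φ q - φ r * φ s := by
  simp

lemma RingHom.map_add_minor_mul_sub_mul (u v e q f₂ f₃ g₂ g₃ : S) :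
    φ (u + (f₂ * g₃ - f₃ * g₂) * e - q * v) =
      φ u + (φ f₂ * φ g₃ - φ f₃ * φ g₂) * φ e - φ q * φ v := by
  simp

lemma RingHom.map_mul_sub_minor_mul (v e q f₂ f₃ g₂ g₃ : S) :
    φ (q * v - (f₂ * g₃ - f₃ * g₂) * e) =
      φ q * φ v - (φ f₂ * φ g₃ - φ f₃ * φ g₂) * φ e := by
  simp

end RingHom

section Colon

variable {R : Type*} [CommRing R] {q₁ q₂ q₃ x₁ y₁ z₁ x₂ y₂ z₂ : R}

lemma rowForm_eq_dot_left (q₁ q₂ q₃ x₁ y₁ z₁ : R) :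
    rowForm (q₁ * x₁) (q₂ * y₁) (q₃ * z₁) = C (C (C q₁)) * (C (C (C x₁)) * X) +
      C (C (C q₂)) * (C (C (C y₁)) * C (C X)) + C (C (C q₃)) * (C (C (C z₁)) * C X) := by
  simp only [rowForm, map_add, map_mul]
  ring

lemma rowForm_eq_dot_right (q₁ q₂ q₃ x₂ y₂ z₂ : R) :
    rowForm (q₂ * y₂) (q₃ * z₂) (q₁ * x₂) = C (C (C q₁)) * (C (C (C x₂)) * C X) +
      C (C (C q₂)) * (C (C (C y₂)) * X) + C (C (C q₃)) * (C (C (C z₂)) * C (C X)) := by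
  simp only [rowForm, map_add, map_mul]
  ring

/-- The data of a matrix `((q₁x₁, q₂y₁, q₃z₁), (q₂y₂, q₃z₂, q₁x₂))` with maximal minors `a, b, c`,
with the regularity properties used to describe the powers of the ideal of minors. -/
structure IsRegularMatrix (q₁ q₂ q₃ x₁ y₁ z₁ x₂ y₂ z₂ a b c : R) : Prop where
  reg_q₁ : IsRegularMod ⊥ q₁
  reg_q₂ : IsRegularMod (Ideal.span {q₁}) q₂
  reg_q₃ : IsRegularMod (Ideal.span {q₁, q₂}) q₃
  reg_x : IsRegularMod ⊥ (q₁ * x₁)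
  reg_y : IsRegularMod (Ideal.span {q₁ * x₁}) (q₂ * y₂)
  reg_z : IsRegularMod (Ideal.span {q₁ * x₁}) (q₃ * z₁)
  reg_z' : IsRegularMod (Ideal.span {q₁ * x₁, q₂ * y₂}) (q₃ * z₁)
  eq_a : a = (q₃ * z₁) * (q₃ * z₂) - (q₁ * x₂) * (q₂ * y₁)
  eq_b : b = (q₁ * x₁) * (q₁ * x₂) - (q₂ * y₂) * (q₃ * z₁)
  eq_c : c = (q₂ * y₁) * (q₂ * y₂) - (q₁ * x₁) * (q₃ * z₂)
  reg_b : IsRegularMod ⊥ b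
  reg_c : IsRegularMod (Ideal.span {b}) c

namespace IsRegularMatrix

variable {a b c : R} (h : IsRegularMatrix q₁ q₂ q₃ x₁ y₁ z₁ x₂ y₂ z₂ a b c)

include h

lemma mem_of_reesEval_eq_zero {F : R[X][X][X]} (hF : reesEval a b c F = 0) :
    F ∈ Ideal.span {rowForm (q₁ * x₁) (q₂ * y₁) (q₃ * z₁)} ⊔
      Ideal.span {rowForm (q₂ * y₂) (q₃ * z₂) (q₁ * x₂)} :=
  mem_span_rowForm_of_reesEval_eq_zero h.reg_x h.reg_y h.reg_z h.reg_z' h.eq_a h.eq_b h.eq_c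
    h.reg_b h.reg_c F hF

lemma reesEval_eq_zero_of_mem {F : R[X][X][X]}
    (hF : F ∈ Ideal.span {rowForm (q₁ * x₁) (q₂ * y₁) (q₃ * z₁)} ⊔
      Ideal.span {rowForm (q₂ * y₂) (q₃ * z₂) (q₁ * x₂)}) : reesEval a b c F = 0 := by
  rw [← RingHom.mem_ker]
  refine (sup_le ?_ ?_ : _ ≤ RingHom.ker (reesEval a b c)) hF
  all_goals
    rw [Ideal.span_singleton_le_iff_mem, RingHom.mem_ker]
    simp only [rowForm, map_add, map_mul, reesEval_X, reesEval_C_C_C, reesEval_C_X,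
      reesEval_C_C_X, h.eq_a, h.eq_b, h.eq_c, map_sub]
    ring

/-- The element whose multiples by `q₁, q₂, q₃` are quadratic in the minors. -/
lemma exists_generator : ∃ d, q₁ * d = y₁ * b * (z₂ * b) - z₁ * c * (y₂ * a) ∧
    q₂ * d = z₁ * c * (x₂ * c) - x₁ * a * (z₂ * b) ∧
    q₃ * d = x₁ * a * (y₂ * a) - y₁ * b * (x₂ * c) := by
  obtain ⟨d, h₁, h₂, h₃⟩ := exists_eq_mul_of_cross_eq_zero h.reg_q₁ h.reg_q₂ (q₃ := q₃)
    (u₁ := y₁ * b * (z₂ * b) - z₁ * c * (y₂ * a))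
    (u₂ := z₁ * c * (x₂ * c) - x₁ * a * (z₂ * b))
    (u₃ := x₁ * a * (y₂ * a) - y₁ * b * (x₂ * c))
    (by rw [h.eq_a, h.eq_b, h.eq_c]; ring) (by rw [h.eq_a, h.eq_b, h.eq_c]; ring)
  exact ⟨d, h₁.symm, h₂.symm, h₃.symm⟩

lemma rowForm_regular : IsRegularMod ⊥ (rowForm (q₁ * x₁) (q₂ * y₁) (q₃ * z₁)) ∧
    IsRegularMod (Ideal.span {rowForm (q₁ * x₁) (q₂ * y₁) (q₃ * z₁)})
      (rowForm (q₂ * y₂) (q₃ * z₂) (q₁ * x₂)) := by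
  have := _root_.rowForm_regular (y₁ := q₂ * y₁) (x₂ := q₁ * x₂) (z₂ := q₃ * z₂) h.reg_x h.reg_y
    h.reg_z h.reg_z' (h.eq_b ▸ h.reg_b)
  exact ⟨this.1, this.2.1⟩

lemma mul_mem_sq {d : R} (hd₁ : q₁ * d = y₁ * b * (z₂ * b) - z₁ * c * (y₂ * a))
    (hd₂ : q₂ * d = z₁ * c * (x₂ * c) - x₁ * a * (z₂ * b))
    (hd₃ : q₃ * d = x₁ * a * (y₂ * a) - y₁ * b * (x₂ * c))
    {s : R} (hs : s ∈ Ideal.span {q₁, q₂, q₃}) : s * d ∈ Ideal.span {a, b, c} ^ 2 := by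
  have key : ∀ r s t u : R, t ∈ ({a, b, c} : Set R) → u ∈ ({a, b, c} : Set R) →
      r * t * (s * u) ∈ Ideal.span {a, b, c} ^ 2 := fun r s t u ht hu ↦ by
    rw [sq]
    exact Ideal.mul_mem_mul (Ideal.mul_mem_left _ _ (Ideal.subset_span ht))
      (Ideal.mul_mem_left _ _ (Ideal.subset_span hu))
  induction hs using Submodule.span_induction with
  | mem s hs =>
    rcases hs with rfl | rfl | rfl
    · rw [hd₁]; exact sub_mem (key _ _ _ _ (by simp) (by simp)) (key _ _ _ _ (by simp) (by simp))
    · rw [hd₂]; exact sub_mem (key _ _ _ _ (by simp) (by simp)) (key _ _ _ _ (by simp) (by simp))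
    · rw [hd₃]; exact sub_mem (key _ _ _ _ (by simp) (by simp)) (key _ _ _ _ (by simp) (by simp))
  | zero => simp
  | add s t _ _ hs ht => rw [add_mul]; exact add_mem hs ht
  | smul r s _ hs => rw [smul_mul_assoc]; exact Submodule.smul_mem _ _ hs

/-- Elements multiplying `(q₁, q₂, q₃)` into `Iⁿ⁺²` are, up to `Iⁿ⁺²`, multiples of the
generator by elements of `Iⁿ`. -/
lemma exists_sub_mem_pow {d : R} (hd₁ : q₁ * d = y₁ * b * (z₂ * b) - z₁ * c * (y₂ * a))
    {m : ℕ} {u : R} (hu₁ : q₁ * u ∈ Ideal.span {a, b, c} ^ (m + 2))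
    (hu₂ : q₂ * u ∈ Ideal.span {a, b, c} ^ (m + 2))
    (hu₃ : q₃ * u ∈ Ideal.span {a, b, c} ^ (m + 2)) :
    ∃ v ∈ Ideal.span {a, b, c} ^ m, u - d * v ∈ Ideal.span {a, b, c} ^ (m + 2) := by
  obtain ⟨p₁, hp₁, e₁⟩ := mem_span_triple_pow_iff_exists_isHomogeneous.1 hu₁
  obtain ⟨p₂, hp₂, e₂⟩ := mem_span_triple_pow_iff_exists_isHomogeneous.1 hu₂
  obtain ⟨p₃, hp₃, e₃⟩ := mem_span_triple_pow_iff_exists_isHomogeneous.1 hu₃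
  have E₁ := reesEval_toIterated a b c hp₁
  have E₂ := reesEval_toIterated a b c hp₂
  have E₃ := reesEval_toIterated a b c hp₃
  rw [e₁] at E₁; rw [e₂] at E₂; rw [e₃] at E₃
  have hcross : ∀ (r s : R) (P P' : R[X][X][X]), reesEval a b c P = C (s * u) * X ^ (m + 2) →
      reesEval a b c P' = C (r * u) * X ^ (m + 2) →
      C (C (C r)) * P - C (C (C s)) * P' ∈
        Ideal.span {rowForm (q₁ * x₁) (q₂ * y₁) (q₃ * z₁)} ⊔
          Ideal.span {rowForm (q₂ * y₂) (q₃ * z₂) (q₁ * x₂)} := fun r s P P' hP hP' ↦ by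
    refine h.mem_of_reesEval_eq_zero ?_
    refine (RingHom.map_mul_sub_mul (S := R[X][X][X]) (T := R[X]) (reesEval a b c) _ _ _ _).trans ?_
    rw [hP, hP', reesEval_C_C_C, reesEval_C_C_C, C_mul, C_mul]
    ring
  have r₁ : IsRegularMod ⊥ (C (C (C q₁))) := by
    simpa only [Ideal.map_bot] using h.reg_q₁.map_C.map_C.map_C
  have r₂ : IsRegularMod (Ideal.span {C (C (C q₁))}) (C (C (C q₂))) := by
    simpa only [Ideal.map_span, Set.image_singleton] using h.reg_q₂.map_C.map_C.map_C
  have r₃ : IsRegularMod (Ideal.span {C (C (C q₁)), C (C (C q₂))}) (C (C (C q₃))) := by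
    simpa only [Ideal.span_insert, Ideal.map_sup, Ideal.map_span, Set.image_singleton] using
      h.reg_q₃.map_C.map_C.map_C
  obtain ⟨e, v, hev⟩ := exists_mem_of_cross_mem r₁ r₂ r₃
    (rowForm_eq_dot_left q₁ q₂ q₃ x₁ y₁ z₁) (rowForm_eq_dot_right q₁ q₂ q₃ x₂ y₂ z₂)
    h.rowForm_regular.1 h.rowForm_regular.2
    (hcross _ _ _ _ E₃ E₂) (hcross _ _ _ _ E₁ E₃) (hcross _ _ _ _ E₂ E₁)
  have hz := (RingHom.map_add_minor_mul_sub_mul (S := R[X][X][X]) (T := R[X]) (reesEval a b c)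
    _ _ _ _ _ _ _ _).symm.trans (h.reesEval_eq_zero_of_mem hev)
  rw [E₁] at hz
  simp only [RingHom.map_mul, reesEval_C_C_C, reesEval_X, reesEval_C_X,
    reesEval_C_C_X] at hz
  have hz' : C (q₁ * u) * X ^ (m + 2) + C (q₁ * d) * reesEval a b c e * X ^ 2 -
      C q₁ * reesEval a b c v = 0 := by
    rw [← hz, hd₁]
    simp only [C_mul, C_sub]
    ring
  have hm := congrArg (coeff · (m + 2)) hz'
  simp only [coeff_sub, coeff_add, coeff_C_mul, coeff_mul_X_pow, coeff_X_pow, coeff_zero,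
    if_true, mul_one] at hm
  have hq : u + d * (reesEval a b c e).coeff m = (reesEval a b c v).coeff (m + 2) :=
    h.reg_q₁.eq_of_mul_eq (by linear_combination hm)
  refine ⟨-(reesEval a b c e).coeff m, neg_mem (reesEval_coeff_mem a b c e m), ?_⟩
  rw [mul_neg, sub_neg_eq_add, hq]
  exact reesEval_coeff_mem a b c v (m + 2)

/-- If the generator times the value of a form of degree `n` at the minors lies in `Iⁿ⁺²`, then
the form has coefficients in `(q₁, q₂, q₃)`. -/
lemma coeff_mem_of_mul_mem_pow {d : R} (hd₁ : q₁ * d = y₁ * b * (z₂ * b) - z₁ * c * (y₂ * a))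
    (hd₂ : q₂ * d = z₁ * c * (x₂ * c) - x₁ * a * (z₂ * b))
    (hd₃ : q₃ * d = x₁ * a * (y₂ * a) - y₁ * b * (x₂ * c))
    {m : ℕ} {p : MvPolynomial (Fin 3) R} (hp : p.IsHomogeneous m)
    (hpd : d * MvPolynomial.eval ![a, b, c] p ∈ Ideal.span {a, b, c} ^ (m + 2)) (i : Fin 3 →₀ ℕ) :
    p.coeff i ∈ Ideal.span {q₁, q₂, q₃} := by
  obtain ⟨r, hr, er⟩ := mem_span_triple_pow_iff_exists_isHomogeneous.1 hpd
  have Er := reesEval_toIterated a b c hr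
  have Ep := reesEval_toIterated a b c hp
  rw [er] at Er
  have hmem := mem_span_of_mul_sub_mem
    (rowForm_eq_dot_left q₁ q₂ q₃ x₁ y₁ z₁) (rowForm_eq_dot_right q₁ q₂ q₃ x₂ y₂ z₂)
    h.rowForm_regular.1 h.rowForm_regular.2 (e := toIterated R p) (v := toIterated R r)
    (h.mem_of_reesEval_eq_zero ?_) (h.mem_of_reesEval_eq_zero ?_) (h.mem_of_reesEval_eq_zero ?_)
  · have := Ideal.mem_map_of_mem (ofIterated R) hmem
    rw [ofIterated_toIterated, Ideal.map_span] at this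
    simp only [Set.image_insert_eq, Set.image_singleton, ofIterated_C_C_C] at this
    have hmap : Ideal.span {MvPolynomial.C q₁, MvPolynomial.C q₂, MvPolynomial.C q₃} =
        (Ideal.span {q₁, q₂, q₃}).map (MvPolynomial.C (σ := Fin 3)) := by
      rw [Ideal.map_span, Set.image_insert_eq, Set.image_insert_eq, Set.image_singleton]
    rw [hmap, MvPolynomial.mem_map_C_iff] at this
    exact this i
  all_goals
    refine (RingHom.map_mul_sub_minor_mul (S := R[X][X][X]) (T := R[X]) (reesEval a b c)
      _ _ _ _ _ _ _).trans ?_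
    rw [Er, Ep]
    simp only [RingHom.map_mul, reesEval_C_C_C, reesEval_X, reesEval_C_X,
      reesEval_C_C_X]
  · have := congrArg C hd₁
    simp only [C_mul, C_sub] at this ⊢
    linear_combination C (MvPolynomial.eval ![a, b, c] p) * X ^ (m + 2) * this
  · have := congrArg C hd₂
    simp only [C_mul, C_sub] at this ⊢
    linear_combination C (MvPolynomial.eval ![a, b, c] p) * X ^ (m + 2) * this
  · have := congrArg C hd₃
    simp only [C_mul, C_sub] at this ⊢
    linear_combination C (MvPolynomial.eval ![a, b, c] p) * X ^ (m + 2) * this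

theorem nonempty_colon_linearEquiv {I Q : Ideal R} (hI : I = Ideal.span {a, b, c})
    (hQ : Q = Ideal.span {q₁, q₂, q₃}) (m : ℕ) :
    Nonempty
      ((↥(Submodule.colon (I ^ (m + 2)) (Q : Set R)) ⧸
          Submodule.comap (Submodule.colon (I ^ (m + 2)) (Q : Set R)).subtype (I ^ (m + 2)))
        ≃ₗ[R] (Fin ((m + 2).choose 2) → R ⧸ Q)) := by
  obtain ⟨d, hd₁, hd₂, hd₃⟩ := h.exists_generator
  have hsq : ∀ s ∈ Q, s * d ∈ I ^ 2 := fun s hs ↦ by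
    rw [hI]; exact h.mul_mem_sq hd₁ hd₂ hd₃ (hQ ▸ hs)
  let Θ : (Finset.finsuppAntidiag (Finset.univ : Finset (Fin 3)) m → R) →ₗ[R] R :=
    (LinearMap.mulLeft R d).comp
      ((MvPolynomial.aeval ![a, b, c]).toLinearMap.comp (polyOfCoeffs m))
  have hΘ : ∀ e, Θ e = d * MvPolynomial.eval ![a, b, c] (polyOfCoeffs m e) := fun e ↦ by
    simp [Θ, MvPolynomial.aeval_eq_eval]
  have hpow : ∀ p : MvPolynomial (Fin 3) R, p.IsHomogeneous m →
      MvPolynomial.eval ![a, b, c] p ∈ I ^ m := fun p hp ↦ by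
    rw [hI]
    exact mem_span_triple_pow_iff_exists_isHomogeneous.2 ⟨p, hp, rfl⟩
  have hcolon : ∀ e, Θ e ∈ Submodule.colon (I ^ (m + 2)) (Q : Set R) := fun e ↦ by
    rw [Submodule.mem_colon]
    intro s hs
    rw [hΘ, smul_eq_mul, mul_comm, ← mul_assoc, add_comm, pow_add]
    exact Ideal.mul_mem_mul (hsq s hs) (hpow _ (isHomogeneous_polyOfCoeffs m e))
  refine nonempty_linearEquiv_of_ker_eq_pi (ι := Finset.finsuppAntidiag Finset.univ m) ?_ Q
    ((Submodule.mkQ _).comp (Θ.codRestrict _ hcolon)) ?_ fun e ↦ ?_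
  · rw [Fintype.card_coe, Finset.card_finsuppAntidiag_nat_eq_choose]
    simp only [Finset.card_univ, Fintype.card_fin]
    rw [show 3 + m - 1 = m + 2 by omega]
    exact Nat.choose_symm_add
  · intro v
    obtain ⟨⟨u, hu⟩, rfl⟩ := Submodule.mkQ_surjective _ v
    rw [Submodule.mem_colon] at hu
    have hq : ∀ q ∈ ({q₁, q₂, q₃} : Set R), q * u ∈ Ideal.span {a, b, c} ^ (m + 2) :=
      fun q hq ↦ by
        have := hu q (hQ ▸ Ideal.subset_span hq)
        rwa [smul_eq_mul, mul_comm, hI] at this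
    obtain ⟨w, hw, hudw⟩ := h.exists_sub_mem_pow hd₁ (hq q₁ (by simp)) (hq q₂ (by simp))
      (hq q₃ (by simp))
    obtain ⟨p, hp, rfl⟩ := mem_span_triple_pow_iff_exists_isHomogeneous.1 hw
    obtain ⟨e, rfl⟩ := hp.exists_polyOfCoeffs_eq
    refine ⟨e, ?_⟩
    rw [LinearMap.comp_apply, ← sub_eq_zero, ← map_sub, Submodule.mkQ_apply,
      Submodule.Quotient.mk_eq_zero, Submodule.mem_comap]
    simp only [Submodule.subtype_apply, Submodule.coe_sub, LinearMap.codRestrict_apply]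
    rw [hΘ, hI]
    simpa using neg_mem hudw
  · rw [LinearMap.comp_apply, Submodule.mkQ_apply, Submodule.Quotient.mk_eq_zero,
      Submodule.mem_comap, Submodule.subtype_apply, LinearMap.codRestrict_apply]
    constructor
    · intro he i
      rw [hΘ, hI] at he
      rw [hQ, ← coeff_polyOfCoeffs m e i]
      exact h.coeff_mem_of_mul_mem_pow hd₁ hd₂ hd₃ (isHomogeneous_polyOfCoeffs m e) he i.1
    · intro he
      have : Θ e = ∑ i, (e i * d) * MvPolynomial.eval ![a, b, c] (MvPolynomial.monomial i.1 1) := by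
        rw [hΘ]
        simp only [polyOfCoeffs, LinearMap.sum_apply, LinearMap.comp_apply, LinearMap.proj_apply,
          map_sum, Finset.mul_sum, MvPolynomial.eval_monomial]
        exact Finset.sum_congr rfl fun i _ ↦ by ring
      rw [this, add_comm, pow_add]
      exact sum_mem fun i _ ↦ Ideal.mul_mem_mul (hsq _ (he i))
        (hpow _ (MvPolynomial.isHomogeneous_monomial _ (mem_finsuppAntidiag_iff_degree.1 i.2)))

end IsRegularMatrix

end Colon

end ReesAlgebra

section SystemOfParameters

variable {R : Type*} [CommRing R]

lemma isRegularMod_of_isSMulRegular {J : Ideal R} {r : R}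
    (h : IsSMulRegular (R ⧸ (J • (⊤ : Submodule R R))) r) : IsRegularMod J r := by
  intro w hw
  have hJ : (J • (⊤ : Submodule R R)) = J := by simp
  rw [hJ] at h
  rw [← Ideal.Quotient.eq_zero_iff_mem] at hw ⊢
  exact h (by simpa [Algebra.smul_def] using hw)

lemma isRegularMod_of_isRegular {u v w : R} (h : RingTheory.Sequence.IsRegular R [u, v, w]) :
    IsRegularMod ⊥ u ∧ IsRegularMod (Ideal.span {u}) v ∧ IsRegularMod (Ideal.span {u, v}) w := by
  have h' := (RingTheory.Sequence.isWeaklyRegular_iff R _).1 h.toIsWeaklyRegular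
  have h₀ := isRegularMod_of_isSMulRegular (h' 0 (by simp))
  have h₁ := isRegularMod_of_isSMulRegular (h' 1 (by simp))
  have h₂ := isRegularMod_of_isSMulRegular (h' 2 (by simp))
  simp only [List.take_zero, List.take_succ_cons, Ideal.ofList_nil, Ideal.ofList_cons,
    List.getElem_cons_zero, List.getElem_cons_succ, sup_bot_eq] at h₀ h₁ h₂
  rw [← Ideal.span_insert] at h₂
  exact ⟨h₀, h₁, h₂⟩

lemma radical_span_triple_eq {x y z u v w : R} {m : Ideal R} [m.IsPrime]
    (hm : (Ideal.span {x, y, z}).radical = m) (hu : u ∈ m) (hv : v ∈ m) (hw : w ∈ m)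
    (hx : x ∈ (Ideal.span {u, v, w}).radical) (hy : y ∈ (Ideal.span {u, v, w}).radical)
    (hz : z ∈ (Ideal.span {u, v, w}).radical) : (Ideal.span {u, v, w}).radical = m := by
  refine le_antisymm (Ideal.IsPrime.radical_le_iff ‹_› |>.2 ?_) (hm ▸ ?_)
  · rw [Ideal.span_le]
    rintro _ (rfl | rfl | rfl) <;> assumption
  · rw [Ideal.radical_le_radical_iff, Ideal.span_le]
    rintro _ (rfl | rfl | rfl) <;> assumption

end SystemOfParameters

/-- With `Q = (x^{min(α,α')}, y^{min(β,β')}, z^{min(γ,γ')})`, for every `n ≥ 2`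
one has `(Iⁿ :_R Q)/Iⁿ ≅ (R/Q)^{⊕ n(n-1)/2}`. -/
theorem colon_power_quotient_iso
    {R : Type*} [CommRing R] [IsNoetherianRing R] [IsLocalRing R]
    (hdim : ringKrullDim R = 3)
    (hCM : ∀ u v w : R, (Ideal.span {u, v, w}).radical = maximalIdeal R →
      RingTheory.Sequence.IsRegular R [u, v, w])
    (x y z : R) (hsop : (Ideal.span {x, y, z}).radical = maximalIdeal R)
    (α β γ α' β' γ' : ℕ)
    (hα : 0 < α) (hβ : 0 < β) (hγ : 0 < γ)
    (hα' : 0 < α') (hβ' : 0 < β') (hγ' : 0 < γ')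
    (a b c : R)
    (ha : a = z ^ (γ + γ') - x ^ α' * y ^ β)
    (hb : b = x ^ (α + α') - y ^ β' * z ^ γ)
    (hc : c = y ^ (β + β') - x ^ α * z ^ γ')
    (I : Ideal R) (hI : I = Ideal.span {a, b, c})
    (Q : Ideal R)
    (hQ : Q = Ideal.span {x ^ min α α', y ^ min β β', z ^ min γ γ'})
    (n : ℕ) (hn : 2 ≤ n) :
    Nonempty
      ((↥(Submodule.colon ((I ^ n : Ideal R) : Submodule R R) (Q : Submodule R R)) ⧸
          Submodule.comap
            (Submodule.colon ((I ^ n : Ideal R) : Submodule R R) (Q : Submodule R R)).subtype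
            ((I ^ n : Ideal R) : Submodule R R))
        ≃ₗ[R] (Fin (n.choose 2) → R ⧸ Q)) := by
  have hmem : ∀ r ∈ ({x, y, z} : Set R), r ∈ maximalIdeal R := fun r hr ↦
    hsop ▸ Ideal.le_radical (Ideal.subset_span hr)
  have hx := hmem x (by simp)
  have hy := hmem y (by simp)
  have hz := hmem z (by simp)
  have reg : ∀ u v w : R, u ∈ maximalIdeal R → v ∈ maximalIdeal R → w ∈ maximalIdeal R →
      x ∈ (Ideal.span {u, v, w}).radical → y ∈ (Ideal.span {u, v, w}).radical →
      z ∈ (Ideal.span {u, v, w}).radical →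
      IsRegularMod ⊥ u ∧ IsRegularMod (Ideal.span {u}) v ∧ IsRegularMod (Ideal.span {u, v}) w :=
    fun u v w hu hv hw hx hy hz ↦ isRegularMod_of_isRegular
      (hCM u v w (radical_span_triple_eq hsop hu hv hw hx hy hz))
  have rad : ∀ {r : R} {k : ℕ} {s : Set R}, r ^ k ∈ s → r ∈ (Ideal.span s).radical :=
    fun h ↦ ⟨_, Ideal.subset_span h⟩
  have pow : ∀ {r : R} {k : ℕ}, r ∈ maximalIdeal R → 0 < k → r ^ k ∈ maximalIdeal R :=
    fun hr hk ↦ Ideal.pow_mem_of_mem _ hr _ hk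
  have regxyz : ∀ {i j k : ℕ}, 0 < i → 0 < j → 0 < k → IsRegularMod ⊥ (x ^ i) ∧
      IsRegularMod (Ideal.span {x ^ i}) (y ^ j) ∧
      IsRegularMod (Ideal.span {x ^ i, y ^ j}) (z ^ k) := fun hi hj hk ↦
    reg _ _ _ (pow hx hi) (pow hy hj) (pow hz hk)
    (rad (Or.inl rfl)) (rad (Or.inr (Or.inl rfl))) (rad (Or.inr (Or.inr rfl)))
  have regxzy := reg (x ^ α) (z ^ γ) (y ^ β') (pow hx hα) (pow hz hγ) (pow hy hβ')
    (rad (Or.inl rfl)) (rad (Or.inr (Or.inr rfl))) (rad (Or.inr (Or.inl rfl)))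
  have regbcz : IsRegularMod ⊥ b ∧ IsRegularMod (Ideal.span {b}) c ∧
      IsRegularMod (Ideal.span {b, c}) z := by
    have hbm : b ∈ Ideal.span {b, c, z} := Ideal.subset_span (by simp)
    have hcm : c ∈ Ideal.span {b, c, z} := Ideal.subset_span (by simp)
    have hzm : z ∈ Ideal.span {b, c, z} := Ideal.subset_span (by simp)
    refine reg b c z ?_ ?_ hz ⟨α + α', ?_⟩ ⟨β + β', ?_⟩ (Ideal.le_radical hzm)
    · rw [hb]
      exact sub_mem (pow hx (by omega)) (Ideal.mul_mem_left _ _ (pow hz hγ))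
    · rw [hc]
      exact sub_mem (pow hy (by omega)) (Ideal.mul_mem_left _ _ (pow hz hγ'))
    · rw [show x ^ (α + α') = b + y ^ β' * z ^ γ by rw [hb]; ring]
      exact add_mem hbm (Ideal.mul_mem_left _ _ (Ideal.pow_mem_of_mem _ hzm _ hγ))
    · rw [show y ^ (β + β') = c + x ^ α * z ^ γ' by rw [hc]; ring]
      exact add_mem hcm (Ideal.mul_mem_left _ _ (Ideal.pow_mem_of_mem _ hzm _ hγ'))
  have hl : ∀ (r : R) (i j : ℕ), r ^ min i j * r ^ (i - min i j) = r ^ i := fun r i j ↦ by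
    rw [← pow_add]; congr 1; omega
  have hr : ∀ (r : R) (i j : ℕ), r ^ min i j * r ^ (j - min i j) = r ^ j := fun r i j ↦ by
    rw [← pow_add]; congr 1; omega
  obtain ⟨q₁, q₂, q₃⟩ := regxyz (lt_min hα hα') (lt_min hβ hβ') (lt_min hγ hγ')
  obtain ⟨hx₁, hy₂, hz₁'⟩ := regxyz hα hβ' hγ
  have h : IsRegularMatrix (x ^ min α α') (y ^ min β β') (z ^ min γ γ')
      (x ^ (α - min α α')) (y ^ (β - min β β')) (z ^ (γ - min γ γ'))
      (x ^ (α' - min α α')) (y ^ (β' - min β β')) (z ^ (γ' - min γ γ')) a b c := by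
    constructor <;> try simp only [hl, hr]
    exacts [q₁, q₂, q₃, hx₁, hy₂, regxzy.2.1, hz₁', by rw [ha, pow_add], by rw [hb, pow_add],
      by rw [hc, pow_add], regbcz.1, regbcz.2.1]
  obtain ⟨m, rfl⟩ := Nat.exists_eq_add_of_le' hn
  exact h.nonempty_colon_linearEquiv hI hQ m
end

section
/- With Q = (x^{α''}, y^{β''}, z^{γ''})R for α'' = min(α,α'), β'' = min(β,β'), γ'' = min(γ,γ'), one has I^{(2)} = I² :_R Q, and I^{(2)}/I² ≅ R/Q. Here I^{(2)} is the second symbolic power of I. -/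
open IsLocalRing

/-- The `n`-th symbolic power `I⁽ⁿ⁾ = ⋂_{p ∈ Min(R/I)} (IⁿR_p ∩ R)`. -/
noncomputable def symbolicPower {R : Type*} [CommRing R] (I : Ideal R) (n : ℕ) : Ideal R :=
  ⨅ p : I.minimalPrimes,
    haveI : Ideal.IsPrime (p : Ideal R) := p.2.1.1
    Ideal.comap (algebraMap R (Localization.AtPrime (p : Ideal R)))
      (Ideal.map (algebraMap R (Localization.AtPrime (p : Ideal R))) (I ^ n))

section Elementary

variable {R : Type*} [CommRing R]

lemma IsRegular.exists_of_triple {u v w : R} (h : RingTheory.Sequence.IsRegular R [u, v, w]) :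
    (∀ r, u * r = 0 → r = 0) ∧ (∀ r s, v * r = u * s → ∃ t, r = u * t) ∧
      ∀ r s t, w * r = u * s + v * t → ∃ p q, r = u * p + v * q := by
  have h := (RingTheory.Sequence.isWeaklyRegular_iff R _).1 h.toIsWeaklyRegular
  have h0 := h 0 (by simp)
  have h1 := h 1 (by simp)
  have h2 := h 2 (by simp)
  rw [isSMulRegular_quotient_iff_mem_of_smul_mem] at h0 h1 h2
  simp only [List.take, List.getElem_cons_zero, List.getElem_cons_succ,
    Ideal.ofList_cons, Ideal.ofList_nil, smul_eq_mul, Ideal.mul_top, sup_bot_eq,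
    Ideal.mem_bot, Ideal.mem_span_singleton, ← Ideal.span_insert, Ideal.mem_span_pair] at h0 h1 h2
  refine ⟨h0, fun r s hr => h1 r ⟨s, hr⟩, fun r s t hr => ?_⟩
  obtain ⟨p, q, hpq⟩ := h2 r ⟨s, t, by rw [hr]; ring⟩
  exact ⟨p, q, by rw [← hpq]; ring⟩

lemma exists_of_pow_mul_eq {u v w : R}
    (h : ∀ i j n, 0 < i → 0 < j → 0 < n →
      RingTheory.Sequence.IsRegular R [u ^ i, v ^ j, w ^ n])
    (i j n : ℕ) {r s t : R} (hr : w ^ n * r = u ^ i * s + v ^ j * t) :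
    ∃ p q, r = u ^ i * p + v ^ j * q := by
  rcases i.eq_zero_or_pos with rfl | hi
  · exact ⟨r, 0, by simp⟩
  rcases j.eq_zero_or_pos with rfl | hj
  · exact ⟨0, r, by simp⟩
  rcases n.eq_zero_or_pos with rfl | hn
  · exact ⟨s, t, by simpa using hr⟩
  exact (IsRegular.exists_of_triple (h i j n hi hj hn)).2.2 r s t hr

variable {x y z : R}
  (cancel_y : ∀ (i j n : ℕ) {r s t : R}, y ^ n * r = x ^ i * s + z ^ j * t →
    ∃ p q, r = x ^ i * p + z ^ j * q)
  (cancel_z : ∀ (i j n : ℕ) {r s t : R}, z ^ n * r = x ^ i * s + y ^ j * t →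
    ∃ p q, r = x ^ i * p + y ^ j * q)

include cancel_y cancel_z

lemma exists_of_monomial_mul_eq (n i j k l : ℕ) {r s t w : R}
    (h : y ^ i * z ^ j * r = x ^ n * s + y ^ (i + k) * t + z ^ (j + l) * w) :
    ∃ p q e, r = x ^ n * p + y ^ k * q + z ^ l * e := by
  obtain ⟨p, q, h1⟩ := cancel_z n (i + k) j (r := y ^ i * r - z ^ l * w) (s := s) (t := t)
    (by linear_combination h)
  obtain ⟨p', q', h2⟩ := cancel_y n l i (r := r - y ^ k * q) (s := p) (t := w)
    (by linear_combination h1)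
  exact ⟨p', q, q', by linear_combination h2⟩

lemma exists_of_mul_mem_monomials (n k l B B' G G' : ℕ) (hB : B = 0 ∨ B' = 0)
    (hG : G = 0 ∨ G' = 0) {p s1 t1 u1 v1 s2 t2 u2 v2 : R}
    (hy : y ^ (k + B) * p = x ^ n * s1 + z ^ (l + G + (l + G')) * t1
      + y ^ (k + B') * z ^ (l + G) * u1 + y ^ (k + B + (k + B')) * v1)
    (hz : z ^ (l + G) * p = x ^ n * s2 + z ^ (l + G + (l + G')) * t2
      + y ^ (k + B') * z ^ (l + G) * u2 + y ^ (k + B + (k + B')) * v2) :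
    ∃ s t u e, p = x ^ n * s + y ^ (k + B') * t + z ^ (l + G + (l + G')) * u
      + y ^ B' * z ^ (l + G + G') * e := by
  obtain ⟨p1, q1, h1⟩ := cancel_z n (k + B') (l + G) (r := p - z ^ (l + G') * t2)
    (s := s2) (t := z ^ (l + G) * u2 + y ^ (k + B) * v2) (by linear_combination hz)
  suffices H : ∃ s t u e, t2 = x ^ n * s + y ^ (k + B') * t + z ^ (l + G) * u
      + y ^ B' * z ^ G * e by
    obtain ⟨s, t, u, e, h⟩ := H
    exact ⟨p1 + z ^ (l + G') * s, q1 + z ^ (l + G') * t, u, e,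
      by linear_combination h1 + z ^ (l + G') * h⟩
  obtain ⟨p2, q2, h2⟩ := cancel_z n (k + B + (k + B')) l
    (r := y ^ (k + B) * z ^ G' * t2 - z ^ (l + G + G') * t1 - y ^ (k + B') * z ^ G * u1)
    (s := s1 - y ^ (k + B) * p1) (t := v1 - q1) (by
      linear_combination hy - y ^ (k + B) * h1)
  obtain ⟨p3, q3, h3⟩ := cancel_y n (l + G + G') k
    (r := y ^ B * z ^ G' * t2 - y ^ B' * z ^ G * u1 - y ^ (k + B + B') * q2)
    (s := p2) (t := t1) (by linear_combination h2)
  rcases hB with rfl | rfl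
  · rcases hG with rfl | rfl
    · obtain ⟨p4, q4, h4⟩ := cancel_z n B' G' (r := t2 - z ^ l * q3) (s := p3)
        (t := u1 + y ^ k * q2) (by linear_combination h3)
      exact ⟨p4, 0, q3, q4, by linear_combination h4⟩
    · exact ⟨p3, q2, q3, u1, by linear_combination h3⟩
  · rcases hG with rfl | rfl
    · exact ⟨0, 0, 0, t2, by ring⟩
    · obtain ⟨p4, q4, h4⟩ := cancel_y n G B (r := t2 - y ^ k * q2) (s := p3)
        (t := u1 + z ^ l * q3) (by linear_combination h3)
      exact ⟨p4, q2, 0, q4, by linear_combination h4⟩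

end Elementary

section Minors

variable {R : Type*} [CommRing R] {x y z : R} {α α' β β' γ γ' : ℕ} {a b c : R}
  (ha : a = z ^ (γ + γ') - x ^ α' * y ^ β)
  (hb : b = x ^ (α + α') - y ^ β' * z ^ γ)
  (hc : c = y ^ (β + β') - x ^ α * z ^ γ')

include ha hb hc

/-- The complete intersection `(a, c)` links `(a, b, c)` to `(y^β, z^γ')`. -/
lemma exists_of_mul_minor_eq [IsNoetherianRing R] [IsLocalRing R]
    (hx : x ∈ maximalIdeal R) (hα : 0 < α) (hαα' : α ≤ α')
    (cancel_y : ∀ (i j n : ℕ) {r s t : R}, y ^ n * r = x ^ i * s + z ^ j * t →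
      ∃ p q, r = x ^ i * p + z ^ j * q)
    (cancel_z : ∀ (i j n : ℕ) {r s t : R}, z ^ n * r = x ^ i * s + y ^ j * t →
      ∃ p q, r = x ^ i * p + y ^ j * q)
    (hacx : RingTheory.Sequence.IsRegular R [a, c, x ^ α])
    {q p s : R} (h : q * b = p * a + s * c) : ∃ u t, q = y ^ β * u + z ^ γ' * t := by
  obtain ⟨δ, rfl⟩ := Nat.exists_eq_add_of_le hαα'
  let K : Ideal R := Submodule.comap (LinearMap.mulRight R b) (Ideal.span {a, c})
  have mem_K (r : R) : r ∈ K ↔ ∃ p s, p * a + s * c = r * b := by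
    simp [K, Ideal.mem_span_pair]
  have key : K ≤ Ideal.span {y ^ β, z ^ γ'} := by
    refine Submodule.le_of_le_smul_of_le_jacobson_bot (I := maximalIdeal R)
      (IsNoetherian.noetherian _) (IsLocalRing.jacobson_eq_maximalIdeal _ bot_ne_top).ge ?_
    intro r hr
    obtain ⟨p, s, hps⟩ := (mem_K r).1 hr
    obtain ⟨q1, u, t, hq⟩ := exists_of_monomial_mul_eq cancel_y cancel_z α β' γ β γ'
      (r := r) (s := x ^ (α + δ) * r + p * x ^ δ * y ^ β + s * z ^ γ') (t := -s) (w := -p) (by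
        rw [ha, hb, hc] at hps; linear_combination hps)
    obtain ⟨p', s', h'⟩ := (IsRegular.exists_of_triple hacx).2.2 (q1 * b)
      (p + u * x ^ α + t * y ^ β') (s + u * z ^ γ + t * x ^ (α + δ)) (by
        rw [hq] at hps; rw [ha, hb, hc] at hps ⊢; linear_combination -hps)
    have hq1 : q1 ∈ K := (mem_K _).2 ⟨p', s', by rw [h']; ring⟩
    rw [hq, show x ^ α * q1 + y ^ β * u + z ^ γ' * t = (u * y ^ β + t * z ^ γ') + x ^ α * q1 by
      ring]
    refine Submodule.add_mem_sup (Ideal.mem_span_pair.2 ⟨u, t, rfl⟩) ?_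
    exact Submodule.smul_mem_smul (Ideal.pow_mem_of_mem _ hx _ hα) hq1
  obtain ⟨u, t, hut⟩ := Ideal.mem_span_pair.1 (key ((mem_K q).2 ⟨p, s, h.symm⟩))
  exact ⟨u, t, by rw [← hut]; ring⟩

/-- The syzygies of the three minors are generated by the rows of the matrix. -/
lemma exists_of_minor_syzygy
    (hacx : RingTheory.Sequence.IsRegular R [a, c, x ^ α])
    (link : ∀ {q p s : R}, q * b = p * a + s * c → ∃ u t, q = y ^ β * u + z ^ γ' * t)
    {p q s : R} (h : p * a + q * b + s * c = 0) :
    ∃ u t, p = x ^ α * u + y ^ β' * t ∧ q = y ^ β * u + z ^ γ' * t ∧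
      s = z ^ γ * u + x ^ α' * t := by
  obtain ⟨u, t, hq⟩ := link (q := q) (p := -p) (s := -s) (by linear_combination h)
  have h' : c * (s - z ^ γ * u - x ^ α' * t) = a * -(p - x ^ α * u - y ^ β' * t) := by
    rw [hq] at h
    rw [hb] at h
    linear_combination h - (x ^ α * u + y ^ β' * t) * ha - (z ^ γ * u + x ^ α' * t) * hc
  obtain ⟨reg_a, reg_c, -⟩ := IsRegular.exists_of_triple hacx
  obtain ⟨e, he⟩ := reg_c _ _ h'
  have hp := reg_a (p - x ^ α * u - y ^ β' * t + c * e) (by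
    rw [he] at h'; linear_combination h')
  refine ⟨u + z ^ γ' * e, t - y ^ β * e, ?_, ?_, ?_⟩
  · rw [hc] at hp; linear_combination hp
  · linear_combination hq
  · rw [ha] at he; linear_combination he

/-- `x` is a nonzerodivisor modulo the ideal of minors. -/
lemma mem_span_minors_of_mul_mem (hα : 0 < α) (hα' : 0 < α')
    (reg_x : ∀ r, x * r = 0 → r = 0)
    (cancel_y : ∀ (i j n : ℕ) {r s t : R}, y ^ n * r = x ^ i * s + z ^ j * t →
      ∃ p q, r = x ^ i * p + z ^ j * q)
    (cancel_zx : ∀ (n : ℕ) {r s : R}, z ^ n * r = x * s → ∃ t, r = x * t)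
    {r p q s : R} (h : x * r = p * a + q * b + s * c) :
    ∃ p q s, r = p * a + q * b + s * c := by
  obtain ⟨i, rfl⟩ := Nat.exists_eq_add_of_lt hα
  obtain ⟨i', rfl⟩ := Nat.exists_eq_add_of_lt hα'
  simp only [zero_add] at *
  obtain ⟨p1, q1, h1⟩ := cancel_y 1 (γ + γ') β' (r := y ^ β * s - z ^ γ * q)
    (s := r + p * x ^ i' * y ^ β - q * x ^ (i + 1 + i') + s * x ^ i * z ^ γ') (t := -p) (by
      rw [ha, hb, hc] at h; linear_combination -h)
  obtain ⟨s1, u, h2⟩ := cancel_y 1 γ β (r := s) (s := p1) (t := q + z ^ γ' * q1) (by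
    linear_combination h1)
  obtain ⟨e, h3⟩ := cancel_zx γ (r := y ^ β * u - q - z ^ γ' * q1) (s := p1 - y ^ β * s1) (by
    linear_combination h1 - y ^ β * h2)
  have hq : q = y ^ β * u - z ^ γ' * q1 - x * e := by linear_combination -h3
  have h' : (p - u * x ^ (i + 1) + q1 * y ^ β') * a
      = x * (r + e * b - (s1 + q1 * x ^ i') * c) := by
    rw [hq, h2] at h
    rw [ha, hb, hc] at h ⊢
    linear_combination -h
  obtain ⟨e', h4⟩ := cancel_zx (γ + γ') (r := p - u * x ^ (i + 1) + q1 * y ^ β')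
    (s := r + e * b - (s1 + q1 * x ^ i') * c
      + (p - u * x ^ (i + 1) + q1 * y ^ β') * x ^ i' * y ^ β) (by
      generalize p - u * x ^ (i + 1) + q1 * y ^ β' = w at h' ⊢
      linear_combination h' - w * ha)
  have h5 := reg_x (r - (e' * a - e * b + (s1 + q1 * x ^ i') * c)) (by
    rw [h4] at h'; linear_combination -h')
  exact ⟨e', -e, s1 + q1 * x ^ i', by linear_combination h5⟩

end Minors

section Ideals

variable {R : Type*} [CommRing R] {a b c : R}

lemma Ideal.mem_span_triple_iff {r : R} :
    r ∈ Ideal.span {a, b, c} ↔ ∃ p q s, r = p * a + q * b + s * c := by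
  simp only [Ideal.mem_span_insert, Ideal.mem_span_singleton']
  constructor
  · rintro ⟨p, _, ⟨q, _, ⟨s, rfl⟩, rfl⟩, rfl⟩
    exact ⟨p, q, s, by ring⟩
  · rintro ⟨p, q, s, rfl⟩
    exact ⟨p, _, ⟨q, _, ⟨s, rfl⟩, rfl⟩, by ring⟩

lemma Ideal.mem_span_triple_sq_iff {r : R} :
    r ∈ Ideal.span {a, b, c} ^ 2 ↔ ∃ p ∈ Ideal.span {a, b, c}, ∃ q ∈ Ideal.span {a, b, c},
      ∃ s ∈ Ideal.span {a, b, c}, r = p * a + q * b + s * c := by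
  generalize hI : Ideal.span {a, b, c} = I
  have : I ^ 2 = I * Ideal.span {a} ⊔ (I * Ideal.span {b} ⊔ I * Ideal.span {c}) := by
    rw [← Ideal.mul_sup, ← Ideal.mul_sup, ← Ideal.span_insert, ← Ideal.span_insert, hI, pow_two]
  simp only [this, Submodule.mem_sup, Ideal.mem_mul_span_singleton]
  constructor
  · rintro ⟨_, ⟨p, hp, rfl⟩, _, ⟨_, ⟨q, hq, rfl⟩, _, ⟨s, hs, rfl⟩, rfl⟩, rfl⟩
    exact ⟨p, hp, q, hq, s, hs, by ring⟩
  · rintro ⟨p, hp, q, hq, s, hs, rfl⟩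
    exact ⟨_, ⟨p, hp, rfl⟩, _, ⟨_, ⟨q, hq, rfl⟩, _, ⟨s, hs, rfl⟩, rfl⟩, by ring⟩

end Ideals

lemma Nat.exists_eq_min_add (m n : ℕ) :
    ∃ k i j, m = k + i ∧ n = k + j ∧ (i = 0 ∨ j = 0) ∧ min m n = k :=
  ⟨min m n, m - min m n, n - min m n, by omega, by omega, by omega, rfl⟩

/-- The square of the ideal of minors, its saturation at `x` and the element generating the
latter modulo the former, given the syzygies of the minors and the regularity of `x`. -/
lemma exists_generator_of_syzygies {R : Type*} [CommRing R] {x y z a b c : R}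
    {α β γ α' β' γ' : ℕ} (hαα' : α ≤ α')
    (ha : a = z ^ (γ + γ') - x ^ α' * y ^ β)
    (hb : b = x ^ (α + α') - y ^ β' * z ^ γ)
    (hc : c = y ^ (β + β') - x ^ α * z ^ γ')
    (cancel_y : ∀ (i j n : ℕ) {r s t : R}, y ^ n * r = x ^ i * s + z ^ j * t →
      ∃ p q, r = x ^ i * p + z ^ j * q)
    (cancel_z : ∀ (i j n : ℕ) {r s t : R}, z ^ n * r = x ^ i * s + y ^ j * t →
      ∃ p q, r = x ^ i * p + y ^ j * q)
    (syz : ∀ {p q s : R}, p * a + q * b + s * c = 0 → ∃ u t, p = x ^ α * u + y ^ β' * t ∧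
      q = y ^ β * u + z ^ γ' * t ∧ s = z ^ γ * u + x ^ α' * t)
    (reg : ∀ r, x * r ∈ Ideal.span {a, b, c} → r ∈ Ideal.span {a, b, c}) :
    ∃ d, (∀ r ∈ Ideal.span {x ^ min α α', y ^ min β β', z ^ min γ γ'},
        r * d ∈ Ideal.span {a, b, c} ^ 2) ∧
      (∀ r, r * d ∈ Ideal.span {a, b, c} ^ 2 →
        r ∈ Ideal.span {x ^ min α α', y ^ min β β', z ^ min γ γ'}) ∧
      ∀ r n, x ^ n * r ∈ Ideal.span {a, b, c} ^ 2 → ∃ e, r - e * d ∈ Ideal.span {a, b, c} ^ 2 := by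
  rw [min_eq_left hαα']
  obtain ⟨δ, rfl⟩ := Nat.exists_eq_add_of_le hαα'
  obtain ⟨k, B, B', rfl, rfl, hB, hk⟩ := Nat.exists_eq_min_add β β'
  obtain ⟨l, G, G', rfl, rfl, hG, hl⟩ := Nat.exists_eq_min_add γ γ'
  rw [hk, hl]
  clear hk hl hαα'
  set I := Ideal.span {a, b, c} with hI
  have haI : a ∈ I := Ideal.subset_span (by simp)
  have hbI : b ∈ I := Ideal.subset_span (by simp)
  have hcI : c ∈ I := Ideal.subset_span (by simp)
  have reg_pow (n : ℕ) : ∀ r, x ^ n * r ∈ I → r ∈ I := by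
    induction n with
    | zero => simp
    | succ n ih => exact fun r hr => ih r (reg _ (by rwa [pow_succ', mul_assoc] at hr))
  have rel1 : x ^ α * a + y ^ (k + B) * b + z ^ (l + G) * c = 0 := by rw [ha, hb, hc]; ring
  have rel2 : y ^ (k + B') * a + z ^ (l + G') * b + x ^ (α + δ) * c = 0 := by
    rw [ha, hb, hc]; ring
  set p0 := y ^ B' * z ^ (l + G + G') with hp0
  set q0 := x ^ (α + δ) * y ^ B * z ^ G' with hq0
  set s0 := x ^ δ * y ^ (B' + k + B) * z ^ G with hs0
  have par1 : y ^ (k + B) * p0 - x ^ α * q0 = - (y ^ B * z ^ G') * b := by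
    rw [hb, hp0, hq0]; ring
  have par2 : z ^ (l + G) * p0 - x ^ α * s0 = y ^ B' * z ^ G * a := by
    rw [ha, hp0, hs0]; ring
  refine ⟨p0 * a + q0 * b + s0 * c, ?_, ?_, ?_⟩
  · intro r hr
    obtain ⟨u, v, w, rfl⟩ := Ideal.mem_span_triple_iff.1 hr
    have hx : x ^ α * (p0 * a + q0 * b + s0 * c) ∈ I ^ 2 := by
      rw [Ideal.mem_span_triple_sq_iff]
      exact ⟨0, I.zero_mem, y ^ B * z ^ G' * b, I.mul_mem_left _ hbI,
        - (y ^ B' * z ^ G) * a, I.mul_mem_left _ haI,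
        by linear_combination -b * par1 - c * par2 + p0 * rel1⟩
    have hy : y ^ k * (p0 * a + q0 * b + s0 * c) ∈ I ^ 2 := by
      rw [Ideal.mem_span_triple_sq_iff]
      refine ⟨0, I.zero_mem, - z ^ G' * a, I.mul_mem_left _ haI,
        x ^ δ * z ^ G * c, I.mul_mem_left _ hcI, ?_⟩
      linear_combination z ^ (l + G + G') * rel2 + b * z ^ G' * ha
        - c * x ^ δ * z ^ G * hc
    have hz : z ^ l * (p0 * a + q0 * b + s0 * c) ∈ I ^ 2 := by
      rw [Ideal.mem_span_triple_sq_iff]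
      refine ⟨y ^ B' * a, I.mul_mem_left _ haI, - (x ^ δ * y ^ B) * c, I.mul_mem_left _ hcI,
        0, I.zero_mem, ?_⟩
      linear_combination y ^ (B' + k + B) * x ^ δ * rel1 - a * y ^ B' * ha
        + b * x ^ δ * y ^ B * hc
    rw [show (u * x ^ α + v * y ^ k + w * z ^ l) * (p0 * a + q0 * b + s0 * c)
      = u * (x ^ α * (p0 * a + q0 * b + s0 * c)) + v * (y ^ k * (p0 * a + q0 * b + s0 * c))
        + w * (z ^ l * (p0 * a + q0 * b + s0 * c)) by ring]
    exact add_mem (add_mem (Ideal.mul_mem_left _ _ hx) (Ideal.mul_mem_left _ _ hy))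
      (Ideal.mul_mem_left _ _ hz)
  · intro r hr
    obtain ⟨p, hp, q, hq, s, hs, h⟩ := Ideal.mem_span_triple_sq_iff.1 hr
    obtain ⟨u, t, h1, -, -⟩ := syz (p := r * p0 - p) (q := r * q0 - q) (s := r * s0 - s)
      (by linear_combination h)
    obtain ⟨p1, q1, s1, rfl⟩ := Ideal.mem_span_triple_iff.1 hp
    obtain ⟨f, g, e, h'⟩ := exists_of_monomial_mul_eq cancel_y cancel_z α B' (l + G + G') k l
      (r := r) (s := u - p1 * x ^ δ * y ^ (k + B) + q1 * x ^ (α + δ) - s1 * z ^ (l + G'))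
      (t := t - q1 * z ^ (l + G) + s1 * y ^ (k + B)) (w := p1) (by
        rw [ha, hb, hc, hp0] at h1; linear_combination h1)
    exact Ideal.mem_span_triple_iff.2 ⟨f, g, e, by rw [h']; ring⟩
  · intro r n hr
    obtain ⟨p, q, s, rfl⟩ := Ideal.mem_span_triple_iff.1
      (reg_pow n r (Ideal.pow_le_self two_ne_zero hr))
    obtain ⟨p', hp', q', hq', s', hs', h⟩ := Ideal.mem_span_triple_sq_iff.1 hr
    obtain ⟨u, t, h1, h2, h3⟩ := syz (p := x ^ n * p - p') (q := x ^ n * q - q')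
      (s := x ^ n * s - s') (by linear_combination h)
    have hpq : y ^ (k + B) * p - x ^ α * q ∈ I := by
      refine reg_pow n _ ?_
      rw [show x ^ n * (y ^ (k + B) * p - x ^ α * q)
        = t * c + y ^ (k + B) * p' - x ^ α * q' by
          rw [hc]; linear_combination y ^ (k + B) * h1 - x ^ α * h2]
      exact sub_mem (add_mem (I.mul_mem_left _ hcI) (I.mul_mem_left _ hp')) (I.mul_mem_left _ hq')
    have hps : z ^ (l + G) * p - x ^ α * s ∈ I := by
      refine reg_pow n _ ?_
      rw [show x ^ n * (z ^ (l + G) * p - x ^ α * s)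
        = -t * b + z ^ (l + G) * p' - x ^ α * s' by
          rw [hb]; linear_combination z ^ (l + G) * h1 - x ^ α * h3]
      exact sub_mem (add_mem (I.mul_mem_left _ hbI) (I.mul_mem_left _ hp')) (I.mul_mem_left _ hs')
    obtain ⟨i1, i2, i3, hi⟩ := Ideal.mem_span_triple_iff.1 hpq
    obtain ⟨j1, j2, j3, hj⟩ := Ideal.mem_span_triple_iff.1 hps
    obtain ⟨f, g, m, e, h4⟩ := exists_of_mul_mem_monomials cancel_y cancel_z α k l B B' G G' hB hG
      (p := p) (s1 := q - i1 * x ^ δ * y ^ (k + B) + i2 * x ^ (α + δ) - i3 * z ^ (l + G'))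
      (t1 := i1) (u1 := - i2) (v1 := i3)
      (s2 := s - j1 * x ^ δ * y ^ (k + B) + j2 * x ^ (α + δ) - j3 * z ^ (l + G'))
      (t2 := j1) (u2 := - j2) (v2 := j3)
      (by rw [ha, hb, hc] at hi; linear_combination hi)
      (by rw [ha, hb, hc] at hj; linear_combination hj)
    refine ⟨e, Ideal.mem_span_triple_sq_iff.2 ?_⟩
    -- subtract the combination of the rows which makes the first coordinate vanish modulo `I`
    set f' := f + m * x ^ δ * y ^ (k + B) with hf'
    have h5 : p - e * p0 - f' * x ^ α - g * y ^ (k + B') = m * a := by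
      rw [ha, h4, hp0, hf']; ring
    refine ⟨p - e * p0 - f' * x ^ α - g * y ^ (k + B'), ?_,
      q - e * q0 - f' * y ^ (k + B) - g * z ^ (l + G'), reg_pow α _ ?_,
      s - e * s0 - f' * z ^ (l + G) - g * x ^ (α + δ), reg_pow α _ ?_, ?_⟩
    · rw [h5]; exact I.mul_mem_left _ haI
    · rw [show x ^ α * (q - e * q0 - f' * y ^ (k + B) - g * z ^ (l + G'))
        = y ^ (k + B) * m * a - e * y ^ B * z ^ G' * b + g * c
          - (y ^ (k + B) * p - x ^ α * q) by
          rw [hc]; linear_combination e * par1 + y ^ (k + B) * h5]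
      exact sub_mem (add_mem (sub_mem (I.mul_mem_left _ haI) (I.mul_mem_left _ hbI))
        (I.mul_mem_left _ hcI)) hpq
    · rw [show x ^ α * (s - e * s0 - f' * z ^ (l + G) - g * x ^ (α + δ))
        = (z ^ (l + G) * m + e * y ^ B' * z ^ G) * a - g * b
          - (z ^ (l + G) * p - x ^ α * s) by
          rw [hb]; linear_combination e * par2 + z ^ (l + G) * h5]
      exact sub_mem (sub_mem (I.mul_mem_left _ haI) (I.mul_mem_left _ hbI)) hps
    · linear_combination f' * rel1 + g * rel2

section CohenMacaulay

variable {R : Type*} [CommRing R] [IsNoetherianRing R] [IsLocalRing R]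
  (hCM : ∀ u v w : R, (Ideal.span {u, v, w}).radical = maximalIdeal R →
    RingTheory.Sequence.IsRegular R [u, v, w])
  {x y z : R} (hsop : (Ideal.span {x, y, z}).radical = maximalIdeal R)

include hsop in
omit [IsNoetherianRing R] in
lemma radical_span_triple_eq_maximalIdeal {u v w : R} (hu : u ∈ maximalIdeal R)
    (hv : v ∈ maximalIdeal R) (hw : w ∈ maximalIdeal R)
    (hx : x ∈ (Ideal.span {u, v, w}).radical) (hy : y ∈ (Ideal.span {u, v, w}).radical)
    (hz : z ∈ (Ideal.span {u, v, w}).radical) :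
    (Ideal.span {u, v, w}).radical = maximalIdeal R := by
  apply le_antisymm
  · rw [(maximalIdeal.isMaximal R).isPrime.radical_le_iff, Ideal.span_le]
    rintro _ (rfl | rfl | rfl) <;> assumption
  · rw [← hsop, (Ideal.radical_isRadical _).radical_le_iff, Ideal.span_le]
    rintro _ (rfl | rfl | rfl) <;> assumption

include hCM hsop in
omit [IsNoetherianRing R] in
lemma isRegular_pow_triple {i j k : ℕ} (hi : 0 < i) (hj : 0 < j) (hk : 0 < k) :
    RingTheory.Sequence.IsRegular R [x ^ i, y ^ j, z ^ k] := by
  have hm : ∀ t ∈ ({x, y, z} : Set R), t ∈ maximalIdeal R := fun t ht =>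
    hsop ▸ Ideal.le_radical (Ideal.subset_span ht)
  refine hCM _ _ _ (radical_span_triple_eq_maximalIdeal hsop ?_ ?_ ?_ ?_ ?_ ?_)
  · exact Ideal.pow_mem_of_mem _ (hm x (by simp)) _ hi
  · exact Ideal.pow_mem_of_mem _ (hm y (by simp)) _ hj
  · exact Ideal.pow_mem_of_mem _ (hm z (by simp)) _ hk
  · exact ⟨i, Ideal.subset_span (by simp)⟩
  · exact ⟨j, Ideal.subset_span (by simp)⟩
  · exact ⟨k, Ideal.subset_span (by simp)⟩

variable {α β γ α' β' γ' : ℕ} (hα : 0 < α) (hβ : 0 < β) (hγ : 0 < γ)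
  (hα' : 0 < α') (hβ' : 0 < β') (hγ' : 0 < γ') {a b c : R}
  (ha : a = z ^ (γ + γ') - x ^ α' * y ^ β)
  (hb : b = x ^ (α + α') - y ^ β' * z ^ γ)
  (hc : c = y ^ (β + β') - x ^ α * z ^ γ')

include hCM hsop hα hβ hγ hα' hβ' hγ' ha hb hc

/-- The ideal of minors has no `x`-torsion, and the `x`-saturation of its square is generated,
modulo the square, by one element with annihilator `Q`. -/
lemma exists_generator_of_le (hαα' : α ≤ α') :
    (∀ r, x * r ∈ Ideal.span {a, b, c} → r ∈ Ideal.span {a, b, c}) ∧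
    ∃ d, (∀ r ∈ Ideal.span {x ^ min α α', y ^ min β β', z ^ min γ γ'},
        r * d ∈ Ideal.span {a, b, c} ^ 2) ∧
      (∀ r, r * d ∈ Ideal.span {a, b, c} ^ 2 →
        r ∈ Ideal.span {x ^ min α α', y ^ min β β', z ^ min γ γ'}) ∧
      ∀ r n, x ^ n * r ∈ Ideal.span {a, b, c} ^ 2 → ∃ e, r - e * d ∈ Ideal.span {a, b, c} ^ 2 := by
  have hm : ∀ t ∈ ({x, y, z} : Set R), t ∈ maximalIdeal R := fun t ht =>
    hsop ▸ Ideal.le_radical (Ideal.subset_span ht)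
  have hx := hm x (by simp)
  have hy := hm y (by simp)
  have hz := hm z (by simp)
  have hsop' : (Ideal.span {x, z, y}).radical = maximalIdeal R := by
    rwa [Set.pair_comm z y]
  have cancel_y : ∀ (i j n : ℕ) {r s t : R}, y ^ n * r = x ^ i * s + z ^ j * t →
      ∃ p q, r = x ^ i * p + z ^ j * q := exists_of_pow_mul_eq
    fun _ _ _ hi hj hk => isRegular_pow_triple hCM hsop' hi hj hk
  have cancel_z : ∀ (i j n : ℕ) {r s t : R}, z ^ n * r = x ^ i * s + y ^ j * t →
      ∃ p q, r = x ^ i * p + y ^ j * q := exists_of_pow_mul_eq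
    fun _ _ _ hi hj hk => isRegular_pow_triple hCM hsop hi hj hk
  have cancel_zx : ∀ (n : ℕ) {r s : R}, z ^ n * r = x * s → ∃ t, r = x * t := by
    intro n r s h
    rcases n.eq_zero_or_pos with rfl | hn
    · exact ⟨s, by simpa using h⟩
    · have := isRegular_pow_triple hCM hsop' one_pos hn one_pos
      rw [pow_one] at this
      exact (IsRegular.exists_of_triple this).2.1 r s h
  have reg_x : ∀ r, x * r = 0 → r = 0 := by
    have := isRegular_pow_triple hCM hsop one_pos one_pos one_pos
    rw [pow_one] at this
    exact (IsRegular.exists_of_triple this).1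
  have hacx : RingTheory.Sequence.IsRegular R [a, c, x ^ α] := by
    have hxJ : x ∈ (Ideal.span {a, c, x ^ α}).radical := ⟨α, Ideal.subset_span (by simp)⟩
    have haJ : a ∈ (Ideal.span {a, c, x ^ α}).radical :=
      Ideal.le_radical (Ideal.subset_span (by simp))
    have hcJ : c ∈ (Ideal.span {a, c, x ^ α}).radical :=
      Ideal.le_radical (Ideal.subset_span (by simp))
    have prad := Ideal.radical_isRadical (Ideal.span {a, c, x ^ α})
    refine hCM _ _ _ (radical_span_triple_eq_maximalIdeal hsop ?_ ?_ ?_ hxJ ?_ ?_)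
    · rw [ha]
      exact sub_mem (Ideal.pow_mem_of_mem _ hz _ (by omega))
        (Ideal.mul_mem_left _ _ (Ideal.pow_mem_of_mem _ hy _ hβ))
    · rw [hc]
      exact sub_mem (Ideal.pow_mem_of_mem _ hy _ (by omega))
        (Ideal.mul_mem_left _ _ (Ideal.pow_mem_of_mem _ hz _ hγ'))
    · exact Ideal.pow_mem_of_mem _ hx _ hα
    · refine prad ⟨β + β', ?_⟩
      rw [show y ^ (β + β') = c + z ^ γ' * x ^ α by rw [hc]; ring]
      exact add_mem hcJ (Ideal.mul_mem_left _ _ (Ideal.pow_mem_of_mem _ hxJ _ hα))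
    · refine prad ⟨γ + γ', ?_⟩
      rw [show z ^ (γ + γ') = a + y ^ β * x ^ α' by rw [ha]; ring]
      exact add_mem haJ (Ideal.mul_mem_left _ _ (Ideal.pow_mem_of_mem _ hxJ _ hα'))
  have reg : ∀ r, x * r ∈ Ideal.span {a, b, c} → r ∈ Ideal.span {a, b, c} := by
    intro r hr
    obtain ⟨p, q, s, h⟩ := Ideal.mem_span_triple_iff.1 hr
    exact Ideal.mem_span_triple_iff.2
      (mem_span_minors_of_mul_mem ha hb hc hα hα' reg_x cancel_y cancel_zx h)
  exact ⟨reg, exists_generator_of_syzygies hαα' ha hb hc cancel_y cancel_z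
    (exists_of_minor_syzygy ha hb hc hacx
      (exists_of_mul_minor_eq ha hb hc hx hα hαα' cancel_y cancel_z hacx)) reg⟩

lemma exists_generator :
    (∀ r, x * r ∈ Ideal.span {a, b, c} → r ∈ Ideal.span {a, b, c}) ∧
    ∃ d, (∀ r ∈ Ideal.span {x ^ min α α', y ^ min β β', z ^ min γ γ'},
        r * d ∈ Ideal.span {a, b, c} ^ 2) ∧
      (∀ r, r * d ∈ Ideal.span {a, b, c} ^ 2 →
        r ∈ Ideal.span {x ^ min α α', y ^ min β β', z ^ min γ γ'}) ∧
      ∀ r n, x ^ n * r ∈ Ideal.span {a, b, c} ^ 2 → ∃ e, r - e * d ∈ Ideal.span {a, b, c} ^ 2 := by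
  rcases le_total α α' with h | h
  · exact exists_generator_of_le hCM hsop hα hβ hγ hα' hβ' hγ' ha hb hc h
  · have hsop' : (Ideal.span {x, z, y}).radical = maximalIdeal R := by
      rwa [Set.pair_comm z y]
    have hI : ({a, b, c} : Set R) = {c, b, a} := by
      ext; simp only [Set.mem_insert_iff, Set.mem_singleton_iff]; tauto
    rw [hI, min_comm α, min_comm β, min_comm γ, Set.pair_comm (y ^ _)]
    exact exists_generator_of_le hCM hsop' hα' hγ' hβ' hα hγ hβ
      (by rw [hc, add_comm]) (by rw [hb, add_comm, mul_comm]) (by rw [ha, add_comm]) h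

omit hCM hβ hγ hβ' hγ' in
/-- The only prime over the ideal of minors that is not minimal is the maximal ideal. -/
lemma mem_minimalPrimes_minors {P : Ideal R} [P.IsPrime] (hP : Ideal.span {a, b, c} ≤ P)
    (hxP : x ∉ P) : P ∈ (Ideal.span {a, b, c}).minimalPrimes := by
  have hxm : x ∈ maximalIdeal R := hsop ▸ Ideal.le_radical (Ideal.subset_span (by simp))
  have hlt : P < maximalIdeal R :=
    lt_of_le_of_ne (le_maximalIdeal (Ideal.IsPrime.ne_top ‹_›)) fun h => hxP (h ▸ hxm)
  refine Ideal.mem_minimalPrimes_span_of_mem_minimalPrimes_span_insert hlt x {y, z} ?_ {a, b, c}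
    (Ideal.span_le.1 hP) ?_
  · rw [← Ideal.radical_minimalPrimes, hsop]
    simp [Ideal.minimalPrimes_eq_subsingleton_self]
  · have prad := Ideal.radical_isRadical (Ideal.span {x, a, b, c})
    have hxJ : x ∈ (Ideal.span {x, a, b, c}).radical :=
      Ideal.le_radical (Ideal.subset_span (by simp))
    have haJ : a ∈ (Ideal.span {x, a, b, c}).radical :=
      Ideal.le_radical (Ideal.subset_span (by simp))
    have hcJ : c ∈ (Ideal.span {x, a, b, c}).radical :=
      Ideal.le_radical (Ideal.subset_span (by simp))
    rintro _ (rfl | rfl)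
    · refine prad ⟨β + β', ?_⟩
      rw [eq_add_of_sub_eq hc.symm]
      exact add_mem hcJ (Ideal.mul_mem_right _ _ (Ideal.pow_mem_of_mem _ hxJ _ hα))
    · refine prad ⟨γ + γ', ?_⟩
      rw [eq_add_of_sub_eq ha.symm]
      exact add_mem haJ (Ideal.mul_mem_right _ _ (Ideal.pow_mem_of_mem _ hxJ _ hα'))

end CohenMacaulay

lemma mem_symbolicPower_iff {R : Type*} [CommRing R] {I : Ideal R} {n : ℕ} {r : R} :
    r ∈ symbolicPower I n ↔ ∀ p ∈ I.minimalPrimes, ∃ s ∉ p, s * r ∈ I ^ n := by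
  simp only [symbolicPower, Ideal.mem_iInf, Subtype.forall, Ideal.mem_comap]
  refine forall₂_congr fun p hp => ?_
  have : p.IsPrime := hp.1.1
  exact IsLocalization.algebraMap_mem_map_algebraMap_iff p.primeCompl _ _ _

/-- If `J : Q = J + (d)` and `J : d = Q` then `(J : Q) / J` is isomorphic to `R / Q`. -/
lemma nonempty_colon_quotient_equiv {R : Type*} [CommRing R] {J Q : Ideal R} {d : R}
    (hd : d ∈ Submodule.colon (J : Submodule R R) (Q : Submodule R R))
    (hann : ∀ r, r * d ∈ J → r ∈ Q)
    (hgen : ∀ r ∈ Submodule.colon (J : Submodule R R) (Q : Submodule R R), ∃ e, r - e * d ∈ J) :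
    Nonempty
      ((↥(Submodule.colon (J : Submodule R R) (Q : Submodule R R)) ⧸
          Submodule.comap (Submodule.colon (J : Submodule R R) (Q : Submodule R R)).subtype
            (J : Submodule R R)) ≃ₗ[R] (R ⧸ Q)) := by
  set C := Submodule.colon (J : Submodule R R) (Q : Submodule R R)
  let f : R →ₗ[R] C ⧸ Submodule.comap C.subtype J :=
    LinearMap.toSpanSingleton R _ (Submodule.Quotient.mk ⟨d, hd⟩)
  have hf (r : R) : f r = Submodule.Quotient.mk (r • ⟨d, hd⟩) := rfl
  have hker : LinearMap.ker f = Q := by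
    ext r
    rw [LinearMap.mem_ker, hf, Submodule.Quotient.mk_eq_zero, Submodule.mem_comap]
    refine ⟨hann r, fun hr => ?_⟩
    have := Submodule.mem_colon.1 hd r hr
    rwa [smul_eq_mul, mul_comm] at this
  have hsurj : Function.Surjective f := by
    intro t
    obtain ⟨⟨r, hr⟩, rfl⟩ := Submodule.Quotient.mk_surjective _ t
    obtain ⟨e, he⟩ := hgen r hr
    refine ⟨e, ?_⟩
    rw [hf, eq_comm, Submodule.Quotient.eq]
    exact he
  exact ⟨((Submodule.quotEquivOfEq _ _ hker.symm).trans (f.quotKerEquivOfSurjective hsurj)).symm⟩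

/-- With `Q = (x^{min(α,α')}, y^{min(β,β')}, z^{min(γ,γ')})`, one has
`I⁽²⁾ = I² :_R Q` and `I⁽²⁾/I² ≅ R/Q`. -/
theorem second_symbolic_power
    {R : Type*} [CommRing R] [IsNoetherianRing R] [IsLocalRing R]
    (hdim : ringKrullDim R = 3)
    (hCM : ∀ u v w : R, (Ideal.span {u, v, w}).radical = maximalIdeal R →
      RingTheory.Sequence.IsRegular R [u, v, w])
    (x y z : R) (hsop : (Ideal.span {x, y, z}).radical = maximalIdeal R)
    (α β γ α' β' γ' : ℕ)
    (hα : 0 < α) (hβ : 0 < β) (hγ : 0 < γ)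
    (hα' : 0 < α') (hβ' : 0 < β') (hγ' : 0 < γ')
    (a b c : R)
    (ha : a = z ^ (γ + γ') - x ^ α' * y ^ β)
    (hb : b = x ^ (α + α') - y ^ β' * z ^ γ)
    (hc : c = y ^ (β + β') - x ^ α * z ^ γ')
    (I : Ideal R) (hI : I = Ideal.span {a, b, c})
    (Q : Ideal R)
    (hQ : Q = Ideal.span {x ^ min α α', y ^ min β β', z ^ min γ γ'}) :
    symbolicPower I 2 = Submodule.colon ((I ^ 2 : Ideal R) : Submodule R R) (Q : Submodule R R) ∧
      Nonempty
        ((↥(Submodule.colon ((I ^ 2 : Ideal R) : Submodule R R) (Q : Submodule R R)) ⧸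
            Submodule.comap
              (Submodule.colon ((I ^ 2 : Ideal R) : Submodule R R) (Q : Submodule R R)).subtype
              ((I ^ 2 : Ideal R) : Submodule R R))
          ≃ₗ[R] (R ⧸ Q)) := by
  subst hI hQ
  obtain ⟨reg, d, hd, hann, hgen⟩ :=
    exists_generator hCM hsop hα hβ hγ hα' hβ' hγ' ha hb hc
  set I := Ideal.span {a, b, c}
  set Q := Ideal.span {x ^ min α α', y ^ min β β', z ^ min γ γ'}
  have mem_colon (r : R) :
      r ∈ Submodule.colon ((I ^ 2 : Ideal R) : Submodule R R) (Q : Submodule R R) ↔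
        ∀ q ∈ Q, r * q ∈ I ^ 2 := Submodule.mem_colon
  have hxQ : x ^ min α α' ∈ Q := Ideal.subset_span (by simp)
  have hgen' : ∀ r ∈ Submodule.colon ((I ^ 2 : Ideal R) : Submodule R R) (Q : Submodule R R),
      ∃ e, r - e * d ∈ I ^ 2 := fun r hr =>
    hgen r _ (by rw [mul_comm]; exact (mem_colon r).1 hr _ hxQ)
  have hdC : d ∈ Submodule.colon ((I ^ 2 : Ideal R) : Submodule R R) (Q : Submodule R R) :=
    (mem_colon d).2 fun q hq => by rw [mul_comm]; exact hd q hq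
  refine ⟨le_antisymm (fun r hr => ?_) fun r hr => ?_,
    nonempty_colon_quotient_equiv hdC hann hgen'⟩
  · rw [mem_symbolicPower_iff] at hr
    let K : Ideal R := Submodule.comap (LinearMap.mulRight R r) (I ^ 2)
    have hK (s : R) : s ∈ K ↔ s * r ∈ I ^ 2 := Iff.rfl
    have hx : x ∈ K.radical := by
      rw [Ideal.radical_eq_sInf, Ideal.mem_sInf]
      rintro P ⟨hKP, hP⟩
      by_contra hxP
      have hIP : I ≤ P := hP.le_of_pow_le (n := 2) <| le_trans
        (fun s hs => (hK s).2 (Ideal.mul_mem_right _ _ hs)) hKP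
      obtain ⟨s, hsP, hs⟩ :=
        hr P (mem_minimalPrimes_minors hsop hα hα' ha hb hc hIP hxP)
      exact hsP (hKP ((hK s).2 hs))
    obtain ⟨n, hn⟩ := hx
    obtain ⟨e, he⟩ := hgen r n hn
    rw [← sub_add_cancel r (e * d)]
    exact add_mem ((mem_colon _).2 fun q _ => Ideal.mul_mem_right _ _ he)
      (Ideal.mul_mem_left _ _ hdC)
  · rw [mem_symbolicPower_iff]
    refine fun p hp => ⟨x ^ min α α', fun hxp => ?_, ?_⟩
    · obtain ⟨s, hs, hxs⟩ := Ideal.exists_mul_mem_of_mem_minimalPrimes hp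
        (hp.1.1.mem_of_pow_mem _ hxp)
      exact hs (reg s hxs)
    · rw [mul_comm]
      exact (mem_colon r).1 hr _ hxQ
end

section
/- Assume α = 1, α' = 2, 2β ≤ β', 2γ ≤ γ', and set Q = (x, y^β, z^γ)R. Then (I³ :_R Q²)/(I³ :_R Q) ≅ (R/Q)^{⊕3}. -/
open IsLocalRing

open Polynomial

section RegularModulo

variable {R : Type*} [CommRing R]

/-- `r` is a nonzerodivisor modulo the ideal `J`. -/
def RegularModulo (J : Ideal R) (r : R) : Prop :=
  ∀ s, r * s ∈ J → s ∈ J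

namespace RegularModulo

variable {J : Ideal R}

lemma mul {r s : R} (hr : RegularModulo J r) (hs : RegularModulo J s) :
    RegularModulo J (r * s) := fun t ht => hs t (hr _ (by rwa [← mul_assoc]))

lemma neg {r : R} (hr : RegularModulo J r) : RegularModulo J (-r) := fun t ht =>
  hr t (by simpa using J.neg_mem ht)

lemma map_C {r : R} (hr : RegularModulo J r) : RegularModulo (J.map C) (C r) := by
  intro s hs
  rw [Ideal.mem_map_C_iff] at hs ⊢
  intro n
  exact hr _ (by simpa using hs n)

lemma X : RegularModulo (J.map C) (X : R[X]) := by
  intro s hs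
  rw [Ideal.mem_map_C_iff] at hs ⊢
  intro n
  simpa using hs (n + 1)

lemma C_add_C_mul_X {r : R} (hr : RegularModulo J r) (s : R) :
    RegularModulo (J.map C) (C r + C s * Polynomial.X) := by
  intro p hp
  rw [Ideal.mem_map_C_iff] at hp ⊢
  intro n
  induction n with
  | zero => exact hr _ (by simpa [add_mul, mul_assoc] using hp 0)
  | succ n ih =>
    refine hr _ ?_
    have h := hp (n + 1)
    simp only [add_mul, mul_assoc, coeff_add, coeff_C_mul, coeff_X_mul] at h
    exact (J.add_mem_iff_left (J.mul_mem_left s ih)).1 h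

end RegularModulo

variable {J : Ideal R} {e k : R}

lemma mem_map_C_of_linear_mul_add_C_mem (he : RegularModulo J e) {M : R[X]} {r : R}
    (h : (C k + C e * X) * M + C r ∈ J.map C) : M ∈ J.map C := by
  rw [Ideal.mem_map_C_iff] at h ⊢
  have key : ∀ m n, M.natDegree < n + m → M.coeff n ∈ J := by
    intro m
    induction m with
    | zero =>
      intro n hn
      rw [coeff_eq_zero_of_natDegree_lt (by simpa using hn)]
      exact J.zero_mem
    | succ m ih =>
      intro n hn
      refine he _ ?_
      have h' := h (n + 1)
      simp only [add_mul, mul_assoc, coeff_add, coeff_C_mul, coeff_X_mul, coeff_C_succ,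
        add_zero] at h'
      exact (J.add_mem_iff_right (J.mul_mem_left k (ih (n + 1) (by omega)))).1 h'
  exact fun n => key (M.natDegree + 1) n (by omega)

lemma RegularModulo.linear_of_leadingCoeff (he : RegularModulo J e) :
    RegularModulo (J.map C) (C k + C e * Polynomial.X) := fun M h =>
  mem_map_C_of_linear_mul_add_C_mem (r := 0) he (by simpa using h)

lemma exists_C_pow_mul_eq_linear_mul_add_C (e k : R) (p : R[X]) :
    ∃ (n : ℕ) (M : R[X]) (r : R), C (e ^ n) * p = (C k + C e * X) * M + C r := by
  induction p using Polynomial.induction_on with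
  | C a => exact ⟨0, 0, a, by simp⟩
  | add p q hp hq =>
    obtain ⟨n, M, r, h⟩ := hp
    obtain ⟨m, N, s, h'⟩ := hq
    refine ⟨n + m, C (e ^ m) * M + C (e ^ n) * N, e ^ m * r + e ^ n * s, ?_⟩
    simp only [pow_add, map_mul, map_add] at h h' ⊢
    linear_combination C (e ^ m) * h + C (e ^ n) * h'
  | monomial m a h =>
    obtain ⟨n, M, r, h⟩ := h
    refine ⟨n + 1, C e * X * M + C r, -(k * r), ?_⟩
    simp only [pow_succ, map_mul, map_neg] at h ⊢
    linear_combination C e * X * h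

lemma exists_sub_linear_mul_mem_of_C_mul (he : RegularModulo J e)
    (hk : RegularModulo (J ⊔ Ideal.span {e}) k) {M N : R[X]}
    (h : C e * M - (C k + C e * X) * N ∈ J.map C) :
    ∃ N', M - (C k + C e * X) * N' ∈ J.map C := by
  have hN : N ∈ (J ⊔ Ideal.span {e}).map C := by
    refine hk.map_C N ?_
    rw [Ideal.map_sup, Ideal.map_span, Set.image_singleton]
    have : C k * N = -(C e * M - (C k + C e * X) * N) + C e * (M - X * N) := by ring
    rw [this]
    exact Ideal.add_mem _ (Ideal.mem_sup_left (neg_mem h))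
      (Ideal.mem_sup_right (Ideal.mul_mem_right _ _ (Ideal.mem_span_singleton_self _)))
  rw [Ideal.map_sup, Ideal.map_span, Set.image_singleton, Submodule.mem_sup] at hN
  obtain ⟨j, hj, l, hl, rfl⟩ := hN
  obtain ⟨l, rfl⟩ := Ideal.mem_span_singleton'.1 hl
  refine ⟨l, he.map_C _ ?_⟩
  have : C e * (M - (C k + C e * X) * l) =
      (C e * M - (C k + C e * X) * (j + l * C e)) + (C k + C e * X) * j := by ring
  rw [this]
  exact Ideal.add_mem _ h (Ideal.mul_mem_left _ _ hj)

lemma exists_sub_linear_mul_mem_of_C_pow_mul (he : RegularModulo J e)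
    (hk : RegularModulo (J ⊔ Ideal.span {e}) k) (n : ℕ) {M N : R[X]}
    (h : C (e ^ n) * M - (C k + C e * X) * N ∈ J.map C) :
    ∃ N', M - (C k + C e * X) * N' ∈ J.map C := by
  induction n generalizing N with
  | zero => exact ⟨N, by simpa using h⟩
  | succ n ih =>
    obtain ⟨N', h'⟩ := exists_sub_linear_mul_mem_of_C_mul (M := C (e ^ n) * M) (N := N) he hk
      (by rwa [← mul_assoc, ← C_mul, ← pow_succ'])
    exact ih h'

/-- If `h` is a nonzerodivisor modulo `J`, then `C h` is a nonzerodivisor modulo `J` and a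
linear polynomial whose coefficients form a regular sequence modulo `J`. -/
lemma exists_sub_linear_mul_mem_of_regularModulo (he : RegularModulo J e)
    (hk : RegularModulo (J ⊔ Ideal.span {e}) k) {h : R} (hh : RegularModulo J h) {M N : R[X]}
    (H : C h * M - (C k + C e * X) * N ∈ J.map C) :
    ∃ N', M - (C k + C e * X) * N' ∈ J.map C := by
  obtain ⟨n, L, r, hL⟩ := exists_C_pow_mul_eq_linear_mul_add_C e k M
  have h1 : (C k + C e * X) * (C h * L - C (e ^ n) * N) + C (h * r) ∈ J.map C := by
    have : (C k + C e * X) * (C h * L - C (e ^ n) * N) + C (h * r) =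
        C (e ^ n) * (C h * M - (C k + C e * X) * N) := by
      rw [C_mul]
      linear_combination -C h * hL
    rw [this]
    exact Ideal.mul_mem_left _ _ H
  have h2 := (Ideal.add_mem_iff_right _ (Ideal.mul_mem_left _ (C k + C e * X)
    (mem_map_C_of_linear_mul_add_C_mem he h1))).1 h1
  have h3 : r ∈ J := hh r (by simpa using (Ideal.mem_map_C_iff.1 h2) 0)
  refine exists_sub_linear_mul_mem_of_C_pow_mul he hk n (N := L) ?_
  rw [hL, add_sub_cancel_left]
  exact Ideal.mem_map_of_mem _ h3

lemma exists_eq_linear_mul_of_map_eq_zero {T : Type*} [CommRing T] (ψ : R[X] →+* T)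
    (he : RegularModulo ⊥ e) (hk : RegularModulo (Ideal.span {e}) k)
    (hψ : ψ (C k + C e * X) = 0) (hinj : ∀ r, ψ (C r) = 0 → r = 0) {p : R[X]} (hp : ψ p = 0) :
    ∃ N, p = (C k + C e * X) * N := by
  obtain ⟨n, L, r, hL⟩ := exists_C_pow_mul_eq_linear_mul_add_C e k p
  have hr : r = 0 := hinj r (by simpa [hp, hψ] using (congrArg ψ hL).symm)
  obtain ⟨N, hN⟩ := exists_sub_linear_mul_mem_of_C_pow_mul (J := ⊥) he (by simpa using hk) n
    (M := p) (N := L) (by rw [hL, hr]; simp)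
  exact ⟨N, by simpa [sub_eq_zero, Ideal.map_bot] using hN⟩

end RegularModulo

section LinearForms

variable {T : Type*} [CommRing T]

/-- The linear form `r A + s B + t C`, where `A` is the polynomial variable and `B = β`, `C = γ`
are elements of the coefficient ring. -/
noncomputable def linearForm (β γ r s t : T) : T[X] :=
  C (s * β + t * γ) + C r * X

variable {β γ u v w p q b c : T}

lemma C_sub_eq_linearForm (hb : b = u ^ 3 - v ^ 2 * p * w) (hc : c = v ^ 3 * p - u * (w ^ 2 * q)) :
    C (b * γ - c * β) = C u * linearForm β γ (v ^ 2 * p) (w ^ 2 * q) (u ^ 2) -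
        C (v ^ 2 * p) * linearForm β γ u v w := by
  simp only [hb, hc, linearForm, map_add, map_sub, map_mul, map_pow]
  ring

lemma eq_linearForm_mul_of_add_eq_zero (hb : b = u ^ 3 - v ^ 2 * p * w)
    (hc : c = v ^ 3 * p - u * (w ^ 2 * q)) (hu : RegularModulo ⊥ u)
    (hk : RegularModulo (Ideal.span {u}) (v * β + w * γ))
    (hh : RegularModulo ⊥ (b * γ - c * β)) {P Q : T[X]}
    (h : linearForm β γ u v w * P + linearForm β γ (v ^ 2 * p) (w ^ 2 * q) (u ^ 2) * Q = 0) :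
    ∃ N, P = linearForm β γ (v ^ 2 * p) (w ^ 2 * q) (u ^ 2) * N ∧
      Q = -(linearForm β γ u v w * N) := by
  obtain ⟨N, hN⟩ := exists_sub_linear_mul_mem_of_regularModulo (J := ⊥) (M := Q)
    (N := -(C u * P) - C (v ^ 2 * p) * Q) hu (by simpa using hk) hh (by
      rw [C_sub_eq_linearForm hb hc, Ideal.map_bot, Ideal.mem_bot]
      change _ - linearForm β γ u v w * _ = 0
      linear_combination C u * h)
  change Q - linearForm β γ u v w * N ∈ _ at hN
  rw [Ideal.map_bot, Ideal.mem_bot, sub_eq_zero] at hN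
  have hf : RegularModulo (Ideal.map C ⊥) (linearForm β γ u v w) :=
    hu.linear_of_leadingCoeff
  have := hf (P + linearForm β γ (v ^ 2 * p) (w ^ 2 * q) (u ^ 2) * N) (by
    rw [Ideal.map_bot, Ideal.mem_bot]
    linear_combination h - linearForm β γ (v ^ 2 * p) (w ^ 2 * q) (u ^ 2) * hN)
  rw [Ideal.map_bot, Ideal.mem_bot] at this
  exact ⟨-N, by linear_combination this, by rw [hN]; ring⟩

lemma exists_eq_of_C_mul_eq_linearForm (hu : RegularModulo ⊥ u)
    (hk : RegularModulo (Ideal.span {u}) (v * β + w * γ))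
    (hvp : RegularModulo (Ideal.span {u}) (v ^ 2 * p))
    (hwq : RegularModulo (Ideal.span {u, v ^ 2 * p}) (w ^ 2 * q * β + u ^ 2 * γ)) {P Q L : T[X]}
    (h : C u * P =
      linearForm β γ u v w * Q + linearForm β γ (v ^ 2 * p) (w ^ 2 * q) (u ^ 2) * L) :
    ∃ Q' L', P = linearForm β γ u v w * Q' +
      linearForm β γ (v ^ 2 * p) (w ^ 2 * q) (u ^ 2) * L' := by
  have hmem : ∀ L : T[X], L ∈ (Ideal.span {u}).map C ↔ ∃ L', L = C u * L' := by
    intro L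
    rw [Ideal.map_span, Set.image_singleton, Ideal.mem_span_singleton]
    rfl
  rw [Ideal.span_insert] at hwq
  obtain ⟨N, hN⟩ := exists_sub_linear_mul_mem_of_regularModulo (M := Q) (N := -L) hvp hwq hk (by
      rw [hmem]
      change ∃ L', _ - linearForm _ _ _ _ _ * _ = _
      refine ⟨P - X * Q, ?_⟩
      have : C (v * β + w * γ) = linearForm β γ u v w - C u * X := by simp [linearForm]
      rw [this]
      linear_combination -h)
  change Q - linearForm _ _ _ _ _ * N ∈ _ at hN
  obtain ⟨Q', hQ'⟩ := (hmem _).1 hN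
  have hg : RegularModulo (Ideal.map C (Ideal.span {u}))
    (linearForm β γ (v ^ 2 * p) (w ^ 2 * q) (u ^ 2)) := hvp.linear_of_leadingCoeff
  obtain ⟨L', hL'⟩ := (hmem _).1 (hg (L + linearForm β γ u v w * N) (by
    rw [hmem]
    exact ⟨P - linearForm β γ u v w * Q', by
      linear_combination -h - linearForm β γ u v w * hQ'⟩))
  have := hu.map_C (P - linearForm β γ u v w * Q' -
    linearForm β γ (v ^ 2 * p) (w ^ 2 * q) (u ^ 2) * L') (by
      rw [Ideal.map_bot, Ideal.mem_bot]
      linear_combination h + linearForm β γ u v w * hQ' +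
        linearForm β γ (v ^ 2 * p) (w ^ 2 * q) (u ^ 2) * hL')
  rw [Ideal.map_bot, Ideal.mem_bot] at this
  exact ⟨Q', L', by linear_combination this⟩

lemma exists_eq_linearForm_of_map_eq_zero {T' : Type*} [CommRing T'] (ψ : T[X] →+* T')
    (hb : b = u ^ 3 - v ^ 2 * p * w) (hc : c = v ^ 3 * p - u * (w ^ 2 * q))
    (hu : RegularModulo ⊥ u) (hk : RegularModulo (Ideal.span {u}) (v * β + w * γ))
    (hvp : RegularModulo (Ideal.span {u}) (v ^ 2 * p))
    (hwq : RegularModulo (Ideal.span {u, v ^ 2 * p}) (w ^ 2 * q * β + u ^ 2 * γ))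
    (hψ : ψ (linearForm β γ u v w) = 0)
    (hker : ∀ r, ψ (C r) = 0 → ∃ N, r = (b * γ - c * β) * N) {P : T[X]} (hP : ψ P = 0) :
    ∃ Q L, P = linearForm β γ u v w * Q +
      linearForm β γ (v ^ 2 * p) (w ^ 2 * q) (u ^ 2) * L := by
  obtain ⟨n, M, r, hM⟩ := exists_C_pow_mul_eq_linear_mul_add_C u (v * β + w * γ) P
  change _ = linearForm β γ u v w * M + _ at hM
  obtain ⟨N, rfl⟩ := hker r (by simpa [hP, hψ] using (congrArg ψ hM).symm)
  have key : ∀ (n : ℕ) (P Q L : T[X]), C u ^ n * P =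
      linearForm β γ u v w * Q + linearForm β γ (v ^ 2 * p) (w ^ 2 * q) (u ^ 2) * L →
      ∃ Q' L', P = linearForm β γ u v w * Q' +
        linearForm β γ (v ^ 2 * p) (w ^ 2 * q) (u ^ 2) * L' := by
    intro n
    induction n with
    | zero => exact fun P Q L h => ⟨Q, L, by simpa using h⟩
    | succ n ih =>
      intro P Q L h
      obtain ⟨Q', L', h'⟩ := exists_eq_of_C_mul_eq_linearForm hu hk hvp hwq
        (P := C u ^ n * P) (Q := Q) (L := L) (by rw [← h]; ring)
      exact ih P Q' L' h'
  refine key n P (M - C (v ^ 2 * p) * C N) (C u * C N) ?_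
  rw [C_mul, C_sub_eq_linearForm hb hc, map_pow] at hM
  rw [hM]
  ring

end LinearForms

section ReesPresentation

variable {R : Type*} [CommRing R]

lemma eval₂_mem_of_forall_mem {S S' : Type*} [CommRing S] [CommRing S'] {ψ : S →+* S'} {x : S'}
    {A : Subring S'} (hψ : ∀ r, ψ r ∈ A) (hx : x ∈ A) (P : S[X]) : eval₂RingHom ψ x P ∈ A := by
  rw [coe_eval₂RingHom, eval₂_eq_sum_range]
  exact sum_mem fun i _ => A.mul_mem (hψ _) (A.pow_mem hx i)

/-- Evaluation of polynomials in two variables at `B = β`, `C = γ`, where `B` is the inner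
variable. -/
noncomputable def doubleEval {S : Type*} [CommRing S] (ψ : R →+* S) (β γ : S) : R[X][X] →+* S :=
  eval₂RingHom (eval₂RingHom ψ β) γ

lemma exists_eq_mul_of_doubleEval_eq_zero {b c : R} (hb : RegularModulo ⊥ b)
    (hcb : RegularModulo (Ideal.span {b}) c) {P : R[X][X]}
    (hP : doubleEval C (C b * X) (C c * X) P = (0 : R[X])) :
    ∃ N, P = (C (C b) * X - C (C c) * C X) * N := by
  have h := exists_eq_linear_mul_of_map_eq_zero (e := C b) (k := -C c * X)
    (doubleEval C (C b * X) (C c * X)) ?_ ?_ ?_ ?_ hP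
  · obtain ⟨N, rfl⟩ := h
    refine ⟨N, ?_⟩
    simp only [map_mul, map_neg]
    ring
  · simpa [Ideal.map_bot] using hb.map_C
  · have := hcb.map_C.neg.mul RegularModulo.X
    rwa [Ideal.map_span, Set.image_singleton] at this
  · simp [doubleEval]
    ring
  · intro r hr
    have hr' : r.comp (C b * X) = 0 := by simpa [doubleEval, Polynomial.comp] using hr
    ext n
    have h := congrArg (fun s => coeff s n) hr'
    simp only [comp_C_mul_X_coeff, coeff_zero] at h ⊢
    have : ∀ (m : ℕ) (s : R), s * b ^ m = 0 → s = 0 := by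
      intro m
      induction m with
      | zero => simp
      | succ m ih =>
        intro s hs
        exact ih s (by simpa using hb (s * b ^ m) (by simp only [Ideal.mem_bot]; rw [← hs]; ring))
    exact this n _ h

lemma monomial_mem_of_mem_pow {a b c : R} {A : Subring R[X]} (hC : ∀ s, C s ∈ A)
    (ha : C a * X ∈ A) (hb : C b * X ∈ A) (hc : C c * X ∈ A) {n : ℕ} {r : R}
    (hr : r ∈ Ideal.span {a, b, c} ^ n) : monomial n r ∈ A := by
  let A' : Subalgebra R R[X] := { A with algebraMap_mem' := hC }
  suffices h : Algebra.adjoin R (Submodule.map (monomial 1 : R →ₗ[R] R[X])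
    (Ideal.span {a, b, c}) : Set R[X]) ≤ A' from h (monomial_mem_adjoin_monomial hr)
  refine Algebra.adjoin_le ?_
  rintro _ ⟨s, hs, rfl⟩
  obtain ⟨s₁, s₂, s₃, rfl⟩ := Submodule.mem_span_triple.1 hs
  change monomial 1 _ ∈ A
  rw [← C_mul_X_eq_monomial]
  have : C (s₁ • a + s₂ • b + s₃ • c) * X =
      C s₁ * (C a * X) + C s₂ * (C b * X) + C s₃ * (C c * X) := by
    simp only [smul_eq_mul, map_add, map_mul]
    ring
  rw [this]
  exact A.add_mem (A.add_mem (A.mul_mem (hC _) ha) (A.mul_mem (hC _) hb)) (A.mul_mem (hC _) hc)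

/-- A polynomial ring `S = R[A, B, C]` presenting the Rees algebra of `(a, b, c)`, recorded
through the properties that matter for colon ideals of powers of `(a, b, c)`. -/
structure ReesPresentation (u v w p q a b c : R) (S : Type*) [CommRing S] (ι : R →+* S)
    (φ : S →+* R[X]) (A B Γ : S) : Prop where
  map_coeff : ∀ r, φ (ι r) = C r
  map_A : φ A = C a * X
  map_B : φ B = C b * X
  map_C : φ Γ = C c * X
  coeff_mem : ∀ P n, (φ P).coeff n ∈ Ideal.span {a, b, c} ^ n
  exists_lift : ∀ n, ∀ r ∈ Ideal.span {a, b, c} ^ n, ∃ P, φ P = monomial n r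
  exists_eval : ∀ r s t, ∃ ε : S →+* R, (∀ x, ε (ι x) = x) ∧ ε A = r ∧ ε B = s ∧ ε Γ = t
  regular_u : RegularModulo ⊥ (ι u)
  regular_v : RegularModulo (Ideal.span {ι u}) (ι v)
  regular_w : RegularModulo (Ideal.span {ι u, ι v}) (ι w)
  syzygy : ∀ P Q, (ι u * A + ι v * B + ι w * Γ) * P +
    (ι v ^ 2 * ι p * A + ι w ^ 2 * ι q * B + ι u ^ 2 * Γ) * Q = 0 →
    ∃ N, P = (ι v ^ 2 * ι p * A + ι w ^ 2 * ι q * B + ι u ^ 2 * Γ) * N ∧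
      Q = -((ι u * A + ι v * B + ι w * Γ) * N)
  relation : ∀ P, φ P = 0 → ∃ Q L, P = (ι u * A + ι v * B + ι w * Γ) * Q +
    (ι v ^ 2 * ι p * A + ι w ^ 2 * ι q * B + ι u ^ 2 * Γ) * L

lemma linearForm_eq (r s t : R) :
    linearForm (C X) X (C (C r)) (C (C s)) (C (C t) : R[X][X]) =
      (C.comp (C.comp C)) r * X + (C.comp (C.comp C)) s * C (C X) +
        (C.comp (C.comp C)) t * C X := by
  simp only [linearForm, RingHom.comp_apply, map_add, map_mul]
  ring

lemma regularModulo_mul_X_add {J : Ideal R} {s : R} (hs : RegularModulo J s) (t : R) :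
    RegularModulo ((J.map C).map C) (C (C s) * C X + C (C t) * X : R[X][X]) := by
  have := (hs.map_C.mul RegularModulo.X).C_add_C_mul_X (C t)
  rwa [C_mul] at this

lemma exists_map_eq_monomial {S : Type*} [CommRing S] (φ : S →+* R[X]) {a b c : R}
    (hC : ∀ s, ∃ P, φ P = C s) (ha : ∃ P, φ P = C a * X) (hb : ∃ P, φ P = C b * X)
    (hc : ∃ P, φ P = C c * X) {n : ℕ} {r : R} (hr : r ∈ Ideal.span {a, b, c} ^ n) :
    ∃ P, φ P = monomial n r :=
  monomial_mem_of_mem_pow (A := φ.range) hC ha hb hc hr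

lemma reesPresentation_polynomial {u v w p q a b c : R} (ha : a = w ^ 3 * q - u ^ 2 * v)
    (hb : b = u ^ 3 - v ^ 2 * p * w) (hc : c = v ^ 3 * p - u * (w ^ 2 * q))
    (hu : RegularModulo ⊥ u) (hvu : RegularModulo (Ideal.span {u}) v)
    (hwuv : RegularModulo (Ideal.span {u, v}) w)
    (hvp : RegularModulo (Ideal.span {u}) (v ^ 2 * p))
    (hwq : RegularModulo (Ideal.span {u, v ^ 2 * p}) (w ^ 2 * q))
    (hb0 : RegularModulo ⊥ b) (hc0 : RegularModulo ⊥ c)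
    (hcb : RegularModulo (Ideal.span {b}) c) :
    ReesPresentation u v w p q a b c R[X][X][X] (C.comp (C.comp C))
      (eval₂RingHom (doubleEval C (C b * X) (C c * X)) (C a * X)) X (C (C X)) (C X) := by
  have hu2 : RegularModulo ⊥ (C (C u) : R[X][X]) := by
    simpa [Ideal.map_bot] using hu.map_C.map_C
  have hk : RegularModulo (Ideal.span {C (C u)}) (C (C v) * C X + C (C w) * X : R[X][X]) := by
    have := regularModulo_mul_X_add hvu w
    simpa only [Ideal.map_span, Set.image_singleton] using this
  have hvp2 : RegularModulo (Ideal.span {C (C u)}) (C (C v) ^ 2 * C (C p) : R[X][X]) := by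
    have := hvp.map_C.map_C
    simpa only [Ideal.map_span, Set.image_singleton, map_mul, map_pow] using this
  have hwq2 : RegularModulo (Ideal.span {C (C u), C (C v) ^ 2 * C (C p)})
      (C (C w) ^ 2 * C (C q) * C X + C (C u) ^ 2 * X : R[X][X]) := by
    have := regularModulo_mul_X_add hwq (u ^ 2)
    simpa only [Ideal.map_span, Set.image_singleton, Set.image_pair, map_mul, map_pow] using this
  have hh : RegularModulo ⊥ (C (C b) * X - C (C c) * C X : R[X][X]) := by
    have := regularModulo_mul_X_add hc0.neg b
    rw [Ideal.map_bot, Ideal.map_bot] at this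
    convert this using 1
    simp only [map_neg]
    ring
  have hb2 : (C (C b) : R[X][X]) = C (C u) ^ 3 - C (C v) ^ 2 * C (C p) * C (C w) := by
    simp only [hb, map_sub, map_mul, map_pow]
  have hc2 : (C (C c) : R[X][X]) = C (C v) ^ 3 * C (C p) - C (C u) * (C (C w) ^ 2 * C (C q)) := by
    simp only [hc, map_sub, map_mul, map_pow]
  have hf := linearForm_eq u v w
  have hg := linearForm_eq (v ^ 2 * p) (w ^ 2 * q) (u ^ 2)
  simp only [map_mul, map_pow] at hg
  refine ⟨?_, ?_, ?_, ?_, ?_, ?_, ?_, ?_, ?_, ?_, ?_, ?_⟩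
  · intro r
    simp [doubleEval]
  · simp
  · simp [doubleEval]
  · simp [doubleEval]
  · intro P n
    have hX : ∀ s ∈ ({a, b, c} : Set R), C s * X ∈ reesAlgebra (Ideal.span {a, b, c}) := by
      intro s hs
      rw [C_mul_X_eq_monomial, reesAlgebra.monomial_mem, pow_one]
      exact Ideal.subset_span hs
    refine (eval₂_mem_of_forall_mem (A := (reesAlgebra (Ideal.span {a, b, c})).toSubring)
      (fun Q => eval₂_mem_of_forall_mem (fun Q' => eval₂_mem_of_forall_mem
        (fun r => Subalgebra.algebraMap_mem (reesAlgebra (Ideal.span {a, b, c})) r) ?_ Q') ?_ Q)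
        ?_ P) n
    exacts [hX b (by simp), hX c (by simp), hX a (by simp)]
  · intro n r hr
    exact exists_map_eq_monomial (S := R[X][X][X])
      (eval₂RingHom (doubleEval C (C b * X) (C c * X)) (C a * X))
      (fun s => ⟨C (C (C s)), by simp [doubleEval]⟩)
      ⟨X, by simp⟩ ⟨C (C X), by simp [doubleEval]⟩ ⟨C X, by simp [doubleEval]⟩ hr
  · intro r s t
    exact ⟨eval₂RingHom (doubleEval (RingHom.id R) s t) r, by simp [doubleEval],
      by simp, by simp [doubleEval], by simp [doubleEval]⟩
  · have := hu2.map_C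
    rwa [Ideal.map_bot] at this
  · have := hvu.map_C.map_C.map_C
    simp only [Ideal.map_span, Set.image_singleton] at this
    exact this
  · have := hwuv.map_C.map_C.map_C
    simp only [Ideal.map_span, Set.image_pair] at this
    exact this
  · intro P Q h
    rw [← hf, ← hg] at h ⊢
    exact eq_linearForm_mul_of_add_eq_zero hb2 hc2 hu2 hk hh h
  · intro P hP
    rw [← hf, ← hg]
    refine exists_eq_linearForm_of_map_eq_zero _ hb2 hc2 hu2 hk hvp2 hwq2 ?_ ?_ hP
    · rw [hf]
      simp [doubleEval, ha, hb, hc]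
      ring
    · intro r hr
      exact exists_eq_mul_of_doubleEval_eq_zero hb0 hcb (by simpa using hr)

lemma exists_koszul {S : Type*} [CommRing S] {u v w : S} (hu : RegularModulo ⊥ u)
    (hv : RegularModulo (Ideal.span {u}) v) (hw : RegularModulo (Ideal.span {u, v}) w)
    {x₁ x₂ x₃ : S} (h : u * x₁ + v * x₂ + w * x₃ = 0) :
    ∃ m₁ m₂ m₃, x₁ = w * m₂ - v * m₃ ∧ x₂ = u * m₃ - w * m₁ ∧ x₃ = v * m₁ - u * m₂ := by
  obtain ⟨r, s, hrs⟩ := Ideal.mem_span_pair.1 (hw x₃ (Ideal.mem_span_pair.2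
    ⟨-x₁, -x₂, by linear_combination -h⟩))
  obtain ⟨t, ht⟩ := Ideal.mem_span_singleton'.1 (hv (x₂ + w * s) (Ideal.mem_span_singleton'.2
    ⟨-x₁ - w * r, by linear_combination -h - w * hrs⟩))
  have := hu (x₁ + w * r + v * t) (by
    rw [Ideal.mem_bot]
    linear_combination h + w * hrs + v * ht)
  rw [Ideal.mem_bot] at this
  exact ⟨s, -r, t, by linear_combination this, by linear_combination -ht,
    by linear_combination -hrs⟩

namespace ReesPresentation

variable {u v w p q a b c d : R} {S : Type*} [CommRing S] {ι : R →+* S} {φ : S →+* R[X]}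
  {A B Γ : S}

lemma map_linear (h : ReesPresentation u v w p q a b c S ι φ A B Γ) (s₁ s₂ s₃ : R) :
    φ (ι s₁ * A + ι s₂ * B + ι s₃ * Γ) = C (s₁ * a + s₂ * b + s₃ * c) * X := by
  simp only [map_add, map_mul, h.map_coeff, h.map_A, h.map_B, h.map_C]
  ring

lemma map_minor₁ (h : ReesPresentation u v w p q a b c S ι φ A B Γ)
    (hd : u * d = w * q * b ^ 2 - v * p * (a * c)) :
    φ (ι w * ι q * B ^ 2 - ι v * ι p * (A * Γ)) = C (u * d) * X ^ 2 := by
  simp only [hd, map_sub, map_mul, map_pow, h.map_coeff, h.map_A, h.map_B, h.map_C]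
  ring

lemma map_minor₂ (h : ReesPresentation u v w p q a b c S ι φ A B Γ)
    (hd : v * d = u * c ^ 2 - w * q * (a * b)) :
    φ (ι u * Γ ^ 2 - ι w * ι q * (A * B)) = C (v * d) * X ^ 2 := by
  simp only [hd, map_sub, map_mul, map_pow, h.map_coeff, h.map_A, h.map_B, h.map_C]
  ring

lemma map_minor₃ (h : ReesPresentation u v w p q a b c S ι φ A B Γ)
    (hd : w * d = v * p * a ^ 2 - u * (b * c)) :
    φ (ι v * ι p * A ^ 2 - ι u * (B * Γ)) = C (w * d) * X ^ 2 := by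
  simp only [hd, map_sub, map_mul, map_pow, h.map_coeff, h.map_A, h.map_B, h.map_C]
  ring

lemma exists_lift_cube (h : ReesPresentation u v w p q a b c S ι φ A B Γ) {r : R}
    (hr : r ∈ Ideal.span {a, b, c} ^ 3) : ∃ P, φ P = C r * X ^ 3 := by
  simpa only [C_mul_X_pow_eq_monomial] using h.exists_lift 3 r hr

lemma coeff_mem_of_mul_mem (h : ReesPresentation u v w p q a b c S ι φ A B Γ)
    (hd₁ : u * d = w * q * b ^ 2 - v * p * (a * c))
    (hd₂ : v * d = u * c ^ 2 - w * q * (a * b)) {s₁ s₂ s₃ : R}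
    (hs : (s₁ * a + s₂ * b + s₃ * c) * d ∈ Ideal.span {a, b, c} ^ 3) :
    s₁ ∈ Ideal.span {u, v, w} ∧ s₂ ∈ Ideal.span {u, v, w} ∧ s₃ ∈ Ideal.span {u, v, w} := by
  obtain ⟨P, hP⟩ := h.exists_lift_cube hs
  obtain ⟨M₁, N₁, h₁⟩ := h.relation ((ι s₁ * A + ι s₂ * B + ι s₃ * Γ) *
      (ι w * ι q * B ^ 2 - ι v * ι p * (A * Γ)) - ι u * P) (by
    rw [map_sub, map_mul, map_mul, h.map_linear, h.map_minor₁ hd₁, hP, h.map_coeff]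
    simp only [map_mul]
    ring)
  obtain ⟨M₂, N₂, h₂⟩ := h.relation ((ι s₁ * A + ι s₂ * B + ι s₃ * Γ) *
      (ι u * Γ ^ 2 - ι w * ι q * (A * B)) - ι v * P) (by
    rw [map_sub, map_mul, map_mul, h.map_linear, h.map_minor₂ hd₂, hP, h.map_coeff]
    simp only [map_mul]
    ring)
  obtain ⟨N, -, hN⟩ := h.syzygy
    (ι v * M₁ - ι u * M₂ - (ι s₁ * A + ι s₂ * B + ι s₃ * Γ) * (ι w * ι q * B))
    (ι v * N₁ - ι u * N₂ + (ι s₁ * A + ι s₂ * B + ι s₃ * Γ) * Γ)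
    (by linear_combination ι u * h₂ - ι v * h₁)
  have key : ∀ r s t, (s₁ * r + s₂ * s + s₃ * t) * t ∈ Ideal.span {u, v, w} := by
    intro r s t
    obtain ⟨ε, hε, hA, hB, hΓ⟩ := h.exists_eval r s t
    have h' := congrArg ε hN
    simp only [map_add, map_sub, map_mul, map_neg, hε, hA, hB, hΓ] at h'
    exact Submodule.mem_span_triple.2 ⟨-(r * ε N) + ε N₂, -(s * ε N) - ε N₁, -(t * ε N), by
      simp only [smul_eq_mul]
      linear_combination -h'⟩
  have h₃ : s₃ ∈ Ideal.span {u, v, w} := by simpa using key 0 0 1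
  refine ⟨?_, ?_, h₃⟩
  · simpa using sub_mem (key 1 0 1) h₃
  · simpa using sub_mem (key 0 1 1) h₃

lemma exists_sub_mul_mem (h : ReesPresentation u v w p q a b c S ι φ A B Γ)
    (hu : RegularModulo ⊥ u) (hf : u * a + v * b + w * c = 0)
    (hg : v ^ 2 * p * a + w ^ 2 * q * b + u ^ 2 * c = 0)
    (hd₁ : u * d = w * q * b ^ 2 - v * p * (a * c)) {ξ : R}
    (hξ₁ : u * ξ ∈ Ideal.span {a, b, c} ^ 3) (hξ₂ : v * ξ ∈ Ideal.span {a, b, c} ^ 3)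
    (hξ₃ : w * ξ ∈ Ideal.span {a, b, c} ^ 3) :
    ∃ s₁ s₂ s₃, ξ - (s₁ * a + s₂ * b + s₃ * c) * d ∈ Ideal.span {a, b, c} ^ 3 := by
  obtain ⟨P₁, hP₁⟩ := h.exists_lift_cube hξ₁
  obtain ⟨P₂, hP₂⟩ := h.exists_lift_cube hξ₂
  obtain ⟨P₃, hP₃⟩ := h.exists_lift_cube hξ₃
  obtain ⟨X₁, Y₁, h₁⟩ := h.relation (ι w * P₂ - ι v * P₃) (by
    simp only [map_sub, map_mul, hP₂, hP₃, h.map_coeff]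
    ring)
  obtain ⟨X₂, Y₂, h₂⟩ := h.relation (ι u * P₃ - ι w * P₁) (by
    simp only [map_sub, map_mul, hP₁, hP₃, h.map_coeff]
    ring)
  obtain ⟨X₃, Y₃, h₃⟩ := h.relation (ι v * P₁ - ι u * P₂) (by
    simp only [map_sub, map_mul, hP₁, hP₂, h.map_coeff]
    ring)
  obtain ⟨N, hX, hY⟩ := h.syzygy (ι u * X₁ + ι v * X₂ + ι w * X₃)
    (ι u * Y₁ + ι v * Y₂ + ι w * Y₃)
    (by linear_combination -ι u * h₁ - ι v * h₂ - ι w * h₃)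
  obtain ⟨M₁, M₂, M₃, -, -, hM⟩ := exists_koszul h.regular_u h.regular_v h.regular_w
    (x₁ := X₁ - N * (ι u * Γ)) (x₂ := X₂ - N * (ι v * ι p * A)) (x₃ := X₃ - N * (ι w * ι q * B))
    (by linear_combination hX)
  obtain ⟨L₁, L₂, L₃, -, -, hL⟩ := exists_koszul h.regular_u h.regular_v h.regular_w
    (x₁ := Y₁ + N * A) (x₂ := Y₂ + N * B) (x₃ := Y₃ + N * Γ)
    (by linear_combination hY)
  obtain ⟨P₀, hP₀⟩ := Ideal.mem_span_singleton'.1 (h.regular_v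
    (P₁ - (ι u * A + ι v * B + ι w * Γ) * M₁ -
      (ι v ^ 2 * ι p * A + ι w ^ 2 * ι q * B + ι u ^ 2 * Γ) * L₁ -
      N * (ι w * ι q * B ^ 2 - ι v * ι p * (A * Γ))) (Ideal.mem_span_singleton'.2
    ⟨P₂ - (ι u * A + ι v * B + ι w * Γ) * M₂ -
      (ι v ^ 2 * ι p * A + ι w ^ 2 * ι q * B + ι u ^ 2 * Γ) * L₂ -
      N * (ι u * Γ ^ 2 - ι w * ι q * (A * B)), by
      linear_combination -h₃ - (ι u * A + ι v * B + ι w * Γ) * hM -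
        (ι v ^ 2 * ι p * A + ι w ^ 2 * ι q * B + ι u ^ 2 * Γ) * hL⟩))
  have hφf : φ (ι u * A + ι v * B + ι w * Γ) = 0 := by
    rw [h.map_linear, hf]
    simp
  have hφg : φ (ι v ^ 2 * ι p * A + ι w ^ 2 * ι q * B + ι u ^ 2 * Γ) = 0 := by
    have := h.map_linear (v ^ 2 * p) (w ^ 2 * q) (u ^ 2)
    rw [hg] at this
    simpa using this
  have h' := congrArg φ hP₀
  rw [map_sub, map_sub, map_sub, map_mul, map_mul φ (_ + _), map_mul φ (_ + _), map_mul φ N, hφf,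
    hφg, hP₁, h.map_minor₁ hd₁, h.map_coeff] at h'
  have h₀ := hu.map_C (C ξ * X ^ 3 - φ N * C d * X ^ 2 - φ P₀) (by
    rw [Ideal.map_bot, Ideal.mem_bot]
    simp only [map_mul] at h'
    linear_combination -h')
  rw [Ideal.map_bot, Ideal.mem_bot] at h₀
  have h₃ : ξ - (φ N).coeff 1 * d = (φ P₀).coeff 3 := by
    simpa [sub_eq_zero, coeff_mul_X_pow', coeff_mul_C] using congrArg (fun r => coeff r 3) h₀
  have hN := h.coeff_mem N 1
  rw [pow_one] at hN
  obtain ⟨s₁, s₂, s₃, hs⟩ := Submodule.mem_span_triple.1 hN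
  refine ⟨s₁, s₂, s₃, ?_⟩
  simp only [smul_eq_mul] at hs
  rw [hs, h₃]
  exact h.coeff_mem P₀ 3

lemma symmetrized_coeff_mem (h : ReesPresentation u v w p q a b c S ι φ A B Γ)
    (hd₁ : u * d = w * q * b ^ 2 - v * p * (a * c))
    (hd₂ : v * d = u * c ^ 2 - w * q * (a * b)) (hd₃ : w * d = v * p * a ^ 2 - u * (b * c))
    {ξ x₁ x₂ x₃ y₁ y₂ y₃ z₁ z₂ z₃ : R}
    (hx : u * ξ - (x₁ * a + x₂ * b + x₃ * c) * d ∈ Ideal.span {a, b, c} ^ 3)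
    (hy : v * ξ - (y₁ * a + y₂ * b + y₃ * c) * d ∈ Ideal.span {a, b, c} ^ 3)
    (hz : w * ξ - (z₁ * a + z₂ * b + z₃ * c) * d ∈ Ideal.span {a, b, c} ^ 3) (r s t : R) :
    (x₁ * r + x₂ * s + x₃ * t) * r + (y₁ * r + y₂ * s + y₃ * t) * s +
      (z₁ * r + z₂ * s + z₃ * t) * t ∈ Ideal.span {u, v, w} := by
  obtain ⟨P₁, hP₁⟩ := h.exists_lift_cube hx
  obtain ⟨P₂, hP₂⟩ := h.exists_lift_cube hy
  obtain ⟨P₃, hP₃⟩ := h.exists_lift_cube hz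
  have hZ₁ := h.map_linear x₁ x₂ x₃
  have hZ₂ := h.map_linear y₁ y₂ y₃
  have hZ₃ := h.map_linear z₁ z₂ z₃
  obtain ⟨ε, hε, hA, hB, hΓ⟩ := h.exists_eval r s t
  have hεZ : ∀ s₁ s₂ s₃, ε (ι s₁ * A + ι s₂ * B + ι s₃ * Γ) = s₁ * r + s₂ * s + s₃ * t := by
    intro s₁ s₂ s₃
    simp only [map_add, map_mul, hε, hA, hB, hΓ]
  rw [← hεZ x₁, ← hεZ y₁, ← hεZ z₁]
  generalize ι x₁ * A + ι x₂ * B + ι x₃ * Γ = Z₁ at *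
  generalize ι y₁ * A + ι y₂ * B + ι y₃ * Γ = Z₂ at *
  generalize ι z₁ * A + ι z₂ * B + ι z₃ * Γ = Z₃ at *
  obtain ⟨X₁, Y₁, h₁⟩ := h.relation ((ι v * ι p * A ^ 2 - ι u * (B * Γ)) * Z₂ -
      (ι u * Γ ^ 2 - ι w * ι q * (A * B)) * Z₃ + ι w * P₂ - ι v * P₃) (by
    rw [map_sub, map_add, map_sub, map_mul, map_mul, h.map_minor₂ hd₂, h.map_minor₃ hd₃, hZ₂, hZ₃]
    simp only [map_sub, map_mul, hP₂, hP₃, h.map_coeff]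
    ring)
  obtain ⟨X₂, Y₂, h₂⟩ := h.relation ((ι w * ι q * B ^ 2 - ι v * ι p * (A * Γ)) * Z₃ -
      (ι v * ι p * A ^ 2 - ι u * (B * Γ)) * Z₁ + ι u * P₃ - ι w * P₁) (by
    rw [map_sub, map_add, map_sub, map_mul, map_mul, h.map_minor₁ hd₁, h.map_minor₃ hd₃, hZ₁, hZ₃]
    simp only [map_sub, map_mul, hP₁, hP₃, h.map_coeff]
    ring)
  obtain ⟨X₃, Y₃, h₃⟩ := h.relation ((ι u * Γ ^ 2 - ι w * ι q * (A * B)) * Z₁ -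
      (ι w * ι q * B ^ 2 - ι v * ι p * (A * Γ)) * Z₂ + ι v * P₁ - ι u * P₂) (by
    rw [map_sub, map_add, map_sub, map_mul, map_mul, h.map_minor₁ hd₁, h.map_minor₂ hd₂, hZ₁, hZ₂]
    simp only [map_sub, map_mul, hP₁, hP₂, h.map_coeff]
    ring)
  obtain ⟨N, -, hN⟩ := h.syzygy
    (ι u * X₁ + ι v * X₂ + ι w * X₃ - (ι u * Γ * Z₁ + ι v * ι p * A * Z₂ + ι w * ι q * B * Z₃))
    (ι u * Y₁ + ι v * Y₂ + ι w * Y₃ + (Z₁ * A + Z₂ * B + Z₃ * Γ))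
    (by linear_combination -ι u * h₁ - ι v * h₂ - ι w * h₃)
  have h' := congrArg ε hN
  simp only [map_add, map_mul, map_neg, hε, hA, hB, hΓ] at h'
  exact Submodule.mem_span_triple.2
    ⟨-(r * ε N) - ε Y₁, -(s * ε N) - ε Y₂, -(t * ε N) - ε Y₃, by
      simp only [smul_eq_mul]
      linear_combination -h'⟩

end ReesPresentation

end ReesPresentation

section ColonLayer

variable {R : Type*} [CommRing R]

lemma nonempty_quotient_equiv_pi {K₁ K₂ Q : Ideal R} {n : ℕ} (g : Fin n → R)
    (hg : ∀ i, g i ∈ K₂) (hker : ∀ s : Fin n → R, ∑ i, s i * g i ∈ K₁ ↔ ∀ i, s i ∈ Q)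
    (hsurj : ∀ ξ ∈ K₂, ∃ s : Fin n → R, ξ - ∑ i, s i * g i ∈ K₁) :
    Nonempty ((K₂ ⧸ Submodule.comap (Submodule.subtype K₂) K₁) ≃ₗ[R] (Fin n → R ⧸ Q)) := by
  let L : (Fin n → R) →ₗ[R] K₂ := Fintype.linearCombination R (fun i => ⟨g i, hg i⟩)
  have hL : ∀ s, (L s : R) = ∑ i, s i * g i := by
    intro s
    simp [L, Fintype.linearCombination_apply]
  let L₁ := (Submodule.comap (Submodule.subtype K₂) K₁).mkQ ∘ₗ L
  let L₂ : (Fin n → R) →ₗ[R] (Fin n → R ⧸ Q) :=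
    LinearMap.pi fun i => (Submodule.mkQ Q) ∘ₗ LinearMap.proj i
  have hL₁ : Function.Surjective L₁ := by
    intro m
    obtain ⟨⟨ξ, hξ⟩, rfl⟩ := Submodule.mkQ_surjective _ m
    obtain ⟨s, hs⟩ := hsurj ξ hξ
    refine ⟨s, ((Submodule.Quotient.eq _).2 ?_).symm⟩
    simpa [hL] using hs
  have hL₂ : Function.Surjective L₂ := by
    intro m
    choose s hs using fun i => Submodule.mkQ_surjective Q (m i)
    exact ⟨s, funext hs⟩
  have hK : LinearMap.ker L₁ = LinearMap.ker L₂ := by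
    ext s
    have h₁ : s ∈ LinearMap.ker L₁ ↔ ∑ i, s i * g i ∈ K₁ := by
      rw [← hL]
      simp [L₁]
    have h₂ : s ∈ LinearMap.ker L₂ ↔ ∀ i, s i ∈ Q := by
      simp [L₂, funext_iff, Ideal.Quotient.eq_zero_iff_mem]
    rw [h₁, h₂, hker]
  exact ⟨(L₁.quotKerEquivOfSurjective hL₁).symm ≪≫ₗ Submodule.quotEquivOfEq _ _ hK ≪≫ₗ
    L₂.quotKerEquivOfSurjective hL₂⟩

lemma mem_colon_span_triple {J : Ideal R} {u v w ξ : R} :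
    ξ ∈ Submodule.colon J (Ideal.span {u, v, w} : Set R) ↔ u * ξ ∈ J ∧ v * ξ ∈ J ∧ w * ξ ∈ J := by
  rw [Submodule.mem_colon]
  constructor
  · intro h
    refine ⟨?_, ?_, ?_⟩ <;> rw [mul_comm] <;> exact h _ (Ideal.subset_span (by simp))
  · rintro ⟨h₁, h₂, h₃⟩ s hs
    obtain ⟨r₁, r₂, r₃, rfl⟩ := Submodule.mem_span_triple.1 hs
    have : ξ • (r₁ • u + r₂ • v + r₃ • w) = r₁ * (u * ξ) + r₂ * (v * ξ) + r₃ * (w * ξ) := by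
      simp only [smul_eq_mul]
      ring
    rw [this]
    exact add_mem (add_mem (J.mul_mem_left _ h₁) (J.mul_mem_left _ h₂)) (J.mul_mem_left _ h₃)

lemma mem_colon_sq_iff {J Q : Ideal R} {ξ : R} :
    ξ ∈ Submodule.colon J ((Q ^ 2 : Ideal R) : Set R) ↔
      ∀ r ∈ Q, r * ξ ∈ Submodule.colon J (Q : Set R) := by
  simp only [Submodule.mem_colon, smul_eq_mul, SetLike.mem_coe]
  constructor
  · intro h r hr s hs
    have := h (r * s) (by rw [sq]; exact Ideal.mul_mem_mul hr hs)
    rwa [show r * ξ * s = ξ * (r * s) by ring]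
  · intro h s hs
    rw [sq] at hs
    refine Submodule.mul_induction_on hs ?_ ?_
    · intro r hr s hs
      have := h r hr s hs
      rwa [show r * ξ * s = ξ * (r * s) by ring] at this
    · intro s t hs ht
      rw [mul_add]
      exact add_mem hs ht

lemma regularModulo_of_isRegular {r s t : R} (h : RingTheory.Sequence.IsRegular R [r, s, t]) :
    RegularModulo ⊥ r ∧ RegularModulo (Ideal.span {r}) s ∧ RegularModulo (Ideal.span {r, s}) t := by
  have h' := fun i hi => (isSMulRegular_quotient_iff_mem_of_smul_mem _ _).1
    (h.toIsWeaklyRegular.regular_mod_prev i hi)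
  have h₀ := h' 0 (by simp)
  have h₁ := h' 1 (by simp)
  have h₂ := h' 2 (by simp)
  simp only [List.take, Ideal.ofList_nil, Ideal.ofList_cons, sup_bot_eq,
    smul_eq_mul, Ideal.mul_top, List.getElem_cons_zero, List.getElem_cons_succ] at h₀ h₁ h₂
  refine ⟨h₀, ?_, ?_⟩
  · exact fun m hm => h₁ m hm
  · intro m hm
    rw [Ideal.span_insert] at hm ⊢
    exact h₂ m hm

variable {u v w p q a b c d : R} {S : Type*} [CommRing S] {ι : R →+* S} {φ : S →+* R[X]}
  {A B Γ : S}

/-- The isomorphism type of the layer `(I³ : Q²) / (I³ : Q)`, where `I = (a, b, c)` and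
`Q = (u, v, w)`. -/
lemma ReesPresentation.nonempty_colon_layer_equiv
    (h : ReesPresentation u v w p q a b c S ι φ A B Γ) (hu : RegularModulo ⊥ u)
    (ha : a = w ^ 3 * q - u ^ 2 * v) (hb : b = u ^ 3 - v ^ 2 * p * w)
    (hc : c = v ^ 3 * p - u * (w ^ 2 * q)) {I Q : Ideal R} (hI : I = Ideal.span {a, b, c})
    (hQ : Q = Ideal.span {u, v, w}) :
    Nonempty ((↥(Submodule.colon (I ^ 3) ((Q ^ 2 : Ideal R) : Set R)) ⧸
      Submodule.comap (Submodule.subtype (Submodule.colon (I ^ 3) ((Q ^ 2 : Ideal R) : Set R)))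
        (Submodule.colon (I ^ 3) (Q : Set R))) ≃ₗ[R] (Fin 3 → R ⧸ Q)) := by
  obtain ⟨d, hd⟩ : ∃ d, d = w * q * u ^ 5 - 3 * u ^ 2 * v ^ 2 * w ^ 2 * p * q +
    v * w ^ 5 * p * q ^ 2 + u * v ^ 5 * p ^ 2 := ⟨_, rfl⟩
  have hd₁ : u * d = w * q * b ^ 2 - v * p * (a * c) := by rw [hd, ha, hb, hc]; ring
  have hd₂ : v * d = u * c ^ 2 - w * q * (a * b) := by rw [hd, ha, hb, hc]; ring
  have hd₃ : w * d = v * p * a ^ 2 - u * (b * c) := by rw [hd, ha, hb, hc]; ring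
  have hf : u * a + v * b + w * c = 0 := by rw [ha, hb, hc]; ring
  have hg : v ^ 2 * p * a + w ^ 2 * q * b + u ^ 2 * c = 0 := by rw [ha, hb, hc]; ring
  obtain ⟨e₁, he₁⟩ : ∃ e, e = -u ^ 8 * q + 3 * u ^ 5 * v ^ 2 * w * p * q -
    5 * u ^ 2 * v ^ 4 * w ^ 2 * p ^ 2 * q + 2 * v ^ 3 * w ^ 5 * p ^ 2 * q ^ 2 -
    u * w ^ 7 * p * q ^ 3 + u * v ^ 7 * p ^ 3 + u ^ 3 * v * w ^ 4 * p * q ^ 2 := ⟨_, rfl⟩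
  obtain ⟨e₂, he₂⟩ : ∃ e, e = -(u ^ 4 * v ^ 3 * w * p * q) - 3 * u * v ^ 5 * w ^ 2 * p ^ 2 * q +
    v ^ 8 * p ^ 3 - 2 * u ^ 5 * w ^ 3 * q ^ 2 + 5 * u ^ 2 * v ^ 2 * w ^ 4 * p * q ^ 2 -
    v * w ^ 7 * p * q ^ 3 + u ^ 7 * v * q := ⟨_, rfl⟩
  obtain ⟨e₃, he₃⟩ : ∃ e, e = -(u ^ 7 * w * q) + 5 * u ^ 4 * v ^ 2 * w ^ 2 * p * q -
    3 * u ^ 2 * v * w ^ 5 * p * q ^ 2 - 2 * u ^ 3 * v ^ 5 * p ^ 2 - u * v ^ 4 * w ^ 3 * p ^ 2 * q +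
    v ^ 7 * w * p ^ 3 + w ^ 8 * p * q ^ 3 := ⟨_, rfl⟩
  have hu₁ : u * e₁ = -q * b ^ 3 - p * (a * c ^ 2) := by rw [he₁, ha, hb, hc]; ring
  have hv₁ : v * e₁ = c * d + q * (a * b ^ 2) := by rw [he₁, hd, ha, hb, hc]; ring
  have hw₁ : w * e₁ = p * (a ^ 2 * c) - b * d := by rw [he₁, hd, ha, hb, hc]; ring
  have hu₂ : u * e₂ = c * d - q * (a * b ^ 2) := by rw [he₂, hd, ha, hb, hc]; ring
  have hv₂ : v * e₂ = c ^ 3 + q * (a ^ 2 * b) := by rw [he₂, ha, hb, hc]; ring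
  have hw₂ : w * e₂ = -a * d - b * c ^ 2 := by rw [he₂, hd, ha, hb, hc]; ring
  have hu₃ : u * e₃ = -b * d - p * (a ^ 2 * c) := by rw [he₃, hd, ha, hb, hc]; ring
  have hv₃ : v * e₃ = a * d - b * c ^ 2 := by rw [he₃, hd, ha, hb, hc]; ring
  have hw₃ : w * e₃ = p * a ^ 3 + b ^ 2 * c := by rw [he₃, ha, hb, hc]; ring
  have ha' : a ∈ I := hI ▸ Ideal.subset_span (by simp)
  have hb' : b ∈ I := hI ▸ Ideal.subset_span (by simp)
  have hc' : c ∈ I := hI ▸ Ideal.subset_span (by simp)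
  have hu' : u ∈ Q := hQ ▸ Ideal.subset_span (by simp)
  have hv' : v ∈ Q := hQ ▸ Ideal.subset_span (by simp)
  have hw' : w ∈ Q := hQ ▸ Ideal.subset_span (by simp)
  have sq_mem : ∀ {r s}, r ∈ I → s ∈ I → ∀ t, t * (r * s) ∈ I ^ 2 := fun hr hs t =>
    Ideal.mul_mem_left _ t (by rw [sq]; exact Ideal.mul_mem_mul hr hs)
  have cube_mem : ∀ {r s t}, r ∈ I → s ∈ I → t ∈ I → ∀ m, m * (r * (s * t)) ∈ I ^ 3 :=
    fun hr hs ht m => Ideal.mul_mem_left _ m (by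
      rw [pow_three]; exact Ideal.mul_mem_mul hr (Ideal.mul_mem_mul hs ht))
  have mul_d_mem : ∀ {r}, r ∈ Q → r * d ∈ I ^ 2 := by
    intro r hr
    rw [hQ] at hr
    obtain ⟨r₁, r₂, r₃, rfl⟩ := Submodule.mem_span_triple.1 hr
    have : (r₁ • u + r₂ • v + r₃ • w) * d = r₁ * (w * q) * (b * b) + -(r₁ * (v * p)) * (a * c) +
        r₂ * u * (c * c) + -(r₂ * (w * q)) * (a * b) + r₃ * (v * p) * (a * a) +
        -(r₃ * u) * (b * c) := by
      simp only [smul_eq_mul]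
      linear_combination r₁ * hd₁ + r₂ * hd₂ + r₃ * hd₃
    rw [this]
    exact add_mem (add_mem (add_mem (add_mem (add_mem (sq_mem hb' hb' _) (sq_mem ha' hc' _))
      (sq_mem hc' hc' _)) (sq_mem ha' hb' _)) (sq_mem ha' ha' _)) (sq_mem hb' hc' _)
  have mul_mul_d_mem : ∀ {r s}, r ∈ Q → s ∈ I → r * s * d ∈ I ^ 3 := by
    intro r s hr hs
    rw [show r * s * d = s * (r * d) by ring, pow_succ']
    exact Ideal.mul_mem_mul hs (mul_d_mem hr)
  have hK₁ : ∀ ξ, ξ ∈ Submodule.colon (I ^ 3) (Q : Set R) ↔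
      u * ξ ∈ I ^ 3 ∧ v * ξ ∈ I ^ 3 ∧ w * ξ ∈ I ^ 3 := fun ξ => hQ ▸ mem_colon_span_triple
  have hξ_d : ∀ {ξ}, ξ ∈ Submodule.colon (I ^ 3) (Q : Set R) →
      ∃ s₁ s₂ s₃, ξ - (s₁ * a + s₂ * b + s₃ * c) * d ∈ I ^ 3 := by
    intro ξ hξ
    obtain ⟨h₁, h₂, h₃⟩ := (hK₁ ξ).1 hξ
    rw [hI] at h₁ h₂ h₃ ⊢
    exact h.exists_sub_mul_mem hu hf hg hd₁ h₁ h₂ h₃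
  have colon_of_sub : ∀ {m s : R}, s ∈ I → m - s * d ∈ I ^ 3 →
      m ∈ Submodule.colon (I ^ 3) (Q : Set R) := by
    intro m s hs hm
    have : ∀ r ∈ Q, r * m ∈ I ^ 3 := by
      intro r hr
      have := add_mem (Ideal.mul_mem_left _ r hm) (mul_mul_d_mem hr hs)
      rwa [show r * (m - s * d) + r * s * d = r * m by ring] at this
    exact (hK₁ m).2 ⟨this u hu', this v hv', this w hw'⟩
  have hU : ∀ s₁ s₂ s₃, u * (s₁ * e₁ + s₂ * e₂ + s₃ * e₃) - (0 * a + -s₃ * b + s₂ * c) * d ∈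
      I ^ 3 := by
    intro s₁ s₂ s₃
    have : u * (s₁ * e₁ + s₂ * e₂ + s₃ * e₃) - (0 * a + -s₃ * b + s₂ * c) * d =
        -(s₁ * q) * (b * (b * b)) + -(s₁ * p) * (a * (c * c)) + -(s₂ * q) * (a * (b * b)) +
          -(s₃ * p) * (a * (a * c)) := by
      linear_combination s₁ * hu₁ + s₂ * hu₂ + s₃ * hu₃
    rw [this]
    exact add_mem (add_mem (add_mem (cube_mem hb' hb' hb' _) (cube_mem ha' hc' hc' _))
      (cube_mem ha' hb' hb' _)) (cube_mem ha' ha' hc' _)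
  have hV : ∀ s₁ s₂ s₃, v * (s₁ * e₁ + s₂ * e₂ + s₃ * e₃) - (s₃ * a + 0 * b + s₁ * c) * d ∈
      I ^ 3 := by
    intro s₁ s₂ s₃
    have : v * (s₁ * e₁ + s₂ * e₂ + s₃ * e₃) - (s₃ * a + 0 * b + s₁ * c) * d =
        s₁ * q * (a * (b * b)) + s₂ * (c * (c * c)) + s₂ * q * (a * (a * b)) +
          -s₃ * (b * (c * c)) := by
      linear_combination s₁ * hv₁ + s₂ * hv₂ + s₃ * hv₃
    rw [this]
    exact add_mem (add_mem (add_mem (cube_mem ha' hb' hb' _) (cube_mem hc' hc' hc' _))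
      (cube_mem ha' ha' hb' _)) (cube_mem hb' hc' hc' _)
  have hW : ∀ s₁ s₂ s₃, w * (s₁ * e₁ + s₂ * e₂ + s₃ * e₃) - (-s₂ * a + -s₁ * b + 0 * c) * d ∈
      I ^ 3 := by
    intro s₁ s₂ s₃
    have : w * (s₁ * e₁ + s₂ * e₂ + s₃ * e₃) - (-s₂ * a + -s₁ * b + 0 * c) * d =
        s₁ * p * (a * (a * c)) + -s₂ * (b * (c * c)) + s₃ * p * (a * (a * a)) +
          s₃ * (b * (b * c)) := by
      linear_combination s₁ * hw₁ + s₂ * hw₂ + s₃ * hw₃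
    rw [this]
    exact add_mem (add_mem (add_mem (cube_mem ha' ha' hc' _) (cube_mem hb' hc' hc' _))
      (cube_mem ha' ha' ha' _)) (cube_mem hb' hb' hc' _)
  have form_mem : ∀ s₁ s₂ s₃, s₁ * a + s₂ * b + s₃ * c ∈ I := fun s₁ s₂ s₃ =>
    add_mem (add_mem (I.mul_mem_left _ ha') (I.mul_mem_left _ hb')) (I.mul_mem_left _ hc')
  have mem_K₂ : ∀ s₁ s₂ s₃, s₁ * e₁ + s₂ * e₂ + s₃ * e₃ ∈
      Submodule.colon (I ^ 3) ((Q ^ 2 : Ideal R) : Set R) := by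
    intro s₁ s₂ s₃
    rw [mem_colon_sq_iff]
    have : s₁ * e₁ + s₂ * e₂ + s₃ * e₃ ∈
        Submodule.colon (Submodule.colon (I ^ 3) (Q : Set R)) (Q : Set R) := by
      rw [hQ, mem_colon_span_triple, ← hQ]
      exact ⟨colon_of_sub (form_mem _ _ _) (hU _ _ _), colon_of_sub (form_mem _ _ _) (hV _ _ _),
        colon_of_sub (form_mem _ _ _) (hW _ _ _)⟩
    intro r hr
    rw [mul_comm]
    exact Submodule.mem_colon.1 this r hr
  refine nonempty_quotient_equiv_pi ![e₁, e₂, e₃] ?_ ?_ ?_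
  · intro i
    fin_cases i
    · simpa using mem_K₂ 1 0 0
    · simpa using mem_K₂ 0 1 0
    · simpa using mem_K₂ 0 0 1
  · intro s
    simp only [Fin.sum_univ_three, Fin.forall_fin_succ, IsEmpty.forall_iff, and_true]
    simp only [Matrix.cons_val_zero, Matrix.cons_val_one, Matrix.cons_val, Fin.succ_zero_eq_one,
      Fin.succ_one_eq_two]
    constructor
    · intro hs
      obtain ⟨h₁, h₂, -⟩ := (hK₁ _).1 hs
      have h₁' := (Submodule.sub_mem_iff_right _ h₁).1 (hU (s 0) (s 1) (s 2))
      have h₂' := (Submodule.sub_mem_iff_right _ h₂).1 (hV (s 0) (s 1) (s 2))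
      rw [hI] at h₁' h₂'
      have h₁'' := h.coeff_mem_of_mul_mem hd₁ hd₂ h₁'
      have h₂'' := h.coeff_mem_of_mul_mem hd₁ hd₂ h₂'
      rw [← hQ] at h₁'' h₂''
      exact ⟨h₂''.2.2, h₁''.2.2, h₂''.1⟩
    · rintro ⟨h₀, h₁, h₂⟩
      have hmem : ∀ {r e}, r ∈ Q → e ∈ Submodule.colon (I ^ 3) ((Q ^ 2 : Ideal R) : Set R) →
          r * e ∈ Submodule.colon (I ^ 3) (Q : Set R) := fun hr he => mem_colon_sq_iff.1 he _ hr
      exact add_mem (add_mem (hmem h₀ (by simpa using mem_K₂ 1 0 0))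
        (hmem h₁ (by simpa using mem_K₂ 0 1 0))) (hmem h₂ (by simpa using mem_K₂ 0 0 1))
  · intro ξ hξ
    rw [mem_colon_sq_iff] at hξ
    obtain ⟨x₁, x₂, x₃, hx⟩ := hξ_d (hξ u hu')
    obtain ⟨y₁, y₂, y₃, hy⟩ := hξ_d (hξ v hv')
    obtain ⟨z₁, z₂, z₃, hz⟩ := hξ_d (hξ w hw')
    have key : ∀ r s t, (x₁ * r + x₂ * s + x₃ * t) * r + (y₁ * r + y₂ * s + y₃ * t) * s +
        (z₁ * r + z₂ * s + z₃ * t) * t ∈ Q := by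
      rw [hI] at hx hy hz
      rw [hQ]
      exact h.symmetrized_coeff_mem hd₁ hd₂ hd₃ hx hy hz
    have hx₁ : x₁ ∈ Q := by simpa using key 1 0 0
    have hy₂ : y₂ ∈ Q := by simpa using key 0 1 0
    have hz₃ : z₃ ∈ Q := by simpa using key 0 0 1
    have hxy : x₂ + y₁ ∈ Q := by
      convert sub_mem (sub_mem (key 1 1 0) hx₁) hy₂ using 1
      ring
    have hxz : x₃ + z₁ ∈ Q := by
      convert sub_mem (sub_mem (key 1 0 1) hx₁) hz₃ using 1
      ring
    have hyz : y₃ + z₂ ∈ Q := by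
      convert sub_mem (sub_mem (key 0 1 1) hy₂) hz₃ using 1
      ring
    refine ⟨![y₃, x₃, -x₂], ?_⟩
    simp only [Fin.sum_univ_three, Matrix.cons_val_zero, Matrix.cons_val_one, Matrix.cons_val]
    rw [hK₁]
    refine ⟨?_, ?_, ?_⟩
    · convert add_mem (sub_mem hx (hU y₃ x₃ (-x₂))) (mul_mul_d_mem hx₁ ha') using 1
      ring
    · convert add_mem (add_mem (sub_mem hy (hV y₃ x₃ (-x₂))) (mul_mul_d_mem hxy ha'))
        (mul_mul_d_mem hy₂ hb') using 1
      ring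
    · convert add_mem (add_mem (add_mem (sub_mem hz (hW y₃ x₃ (-x₂))) (mul_mul_d_mem hxz ha'))
        (mul_mul_d_mem hyz hb')) (mul_mul_d_mem hz₃ hc') using 1
      ring

end ColonLayer

section Radical

variable {R : Type*} [CommRing R] [IsLocalRing R]

lemma radical_span_triple_eq_maximalIdeal_s13 {x y z r s t : R}
    (h : (Ideal.span {x, y, z}).radical = maximalIdeal R) (hr : r ∈ maximalIdeal R)
    (hs : s ∈ maximalIdeal R) (ht : t ∈ maximalIdeal R)
    (hx : x ∈ (Ideal.span {r, s, t}).radical) (hy : y ∈ (Ideal.span {r, s, t}).radical)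
    (hz : z ∈ (Ideal.span {r, s, t}).radical) :
    (Ideal.span {r, s, t}).radical = maximalIdeal R := by
  apply le_antisymm
  · rw [(maximalIdeal.isMaximal R).isPrime.radical_le_iff, Ideal.span_le]
    rintro m (rfl | rfl | rfl) <;> assumption
  · rw [← h, Ideal.radical_le_radical_iff, Ideal.span_le]
    rintro m (rfl | rfl | rfl) <;> assumption

end Radical

/-- Assume `α = 1`, `α' = 2`, `2β ≤ β'`, `2γ ≤ γ'` and `Q = (x, y^β, z^γ)`.
Then `(I³ :_R Q²)/(I³ :_R Q) ≅ (R/Q)^{⊕3}`. -/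
theorem third_power_colon_layer
    {R : Type*} [CommRing R] [IsNoetherianRing R] [IsLocalRing R]
    (hdim : ringKrullDim R = 3)
    (hCM : ∀ u v w : R, (Ideal.span {u, v, w}).radical = maximalIdeal R →
      RingTheory.Sequence.IsRegular R [u, v, w])
    (x y z : R) (hsop : (Ideal.span {x, y, z}).radical = maximalIdeal R)
    (β γ β' γ' : ℕ)
    (hβ : 0 < β) (hγ : 0 < γ)
    (hββ' : 2 * β ≤ β') (hγγ' : 2 * γ ≤ γ')
    (a b c : R)
    (ha : a = z ^ (γ + γ') - x ^ 2 * y ^ β)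
    (hb : b = x ^ 3 - y ^ β' * z ^ γ)
    (hc : c = y ^ (β + β') - x * z ^ γ')
    (I : Ideal R) (hI : I = Ideal.span {a, b, c})
    (Q : Ideal R) (hQ : Q = Ideal.span {x, y ^ β, z ^ γ}) :
    Nonempty
      ((↥(Submodule.colon ((I ^ 3 : Ideal R) : Submodule R R)
            ((Q ^ 2 : Ideal R) : Submodule R R)) ⧸
          Submodule.comap
            (Submodule.colon ((I ^ 3 : Ideal R) : Submodule R R)
              ((Q ^ 2 : Ideal R) : Submodule R R)).subtype
            (Submodule.colon ((I ^ 3 : Ideal R) : Submodule R R) (Q : Submodule R R)))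
        ≃ₗ[R] (Fin 3 → R ⧸ Q)) := by
  obtain ⟨k, rfl⟩ := Nat.exists_eq_add_of_le hββ'
  obtain ⟨l, rfl⟩ := Nat.exists_eq_add_of_le hγγ'
  have hxm : x ∈ maximalIdeal R := hsop ▸ Ideal.le_radical (Ideal.subset_span (by simp))
  have hym : y ∈ maximalIdeal R := hsop ▸ Ideal.le_radical (Ideal.subset_span (by simp))
  have hzm : z ∈ maximalIdeal R := hsop ▸ Ideal.le_radical (Ideal.subset_span (by simp))
  have pow_mem : ∀ {r : R} {n : ℕ}, r ∈ maximalIdeal R → 0 < n → r ^ n ∈ maximalIdeal R :=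
    fun hr hn => Ideal.pow_mem_of_mem _ hr _ hn
  have hbm : b ∈ maximalIdeal R := hb ▸ sub_mem (pow_mem hxm (by norm_num))
    (Ideal.mul_mem_left _ _ (pow_mem hzm hγ))
  have hcm : c ∈ maximalIdeal R := hc ▸ sub_mem (pow_mem hym (by lia))
    (Ideal.mul_mem_right _ _ hxm)
  have powers : ∀ {m n : ℕ}, 0 < m → 0 < n →
      (Ideal.span {x, y ^ m, z ^ n}).radical = maximalIdeal R := fun {m n} hm hn =>
    radical_span_triple_eq_maximalIdeal_s13 hsop hxm (pow_mem hym hm) (pow_mem hzm hn)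
      (Ideal.le_radical (Ideal.subset_span (by simp))) ⟨m, Ideal.subset_span (by simp)⟩
      ⟨n, Ideal.subset_span (by simp)⟩
  have hz_rad : z ∈ (Ideal.span {b, c, z ^ γ}).radical := ⟨γ, Ideal.subset_span (by simp)⟩
  have hx_rad : x ∈ (Ideal.span {b, c, z ^ γ}).radical := by
    refine ⟨3, ?_⟩
    rw [show x ^ 3 = b + y ^ (2 * β + k) * z ^ γ by rw [hb]; ring]
    exact add_mem (Ideal.subset_span (by simp))
      (Ideal.mul_mem_left _ _ (Ideal.subset_span (by simp)))
  have hy_rad : y ∈ (Ideal.span {b, c, z ^ γ}).radical := by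
    refine ⟨β + (2 * β + k), ?_⟩
    rw [show y ^ (β + (2 * β + k)) = c + x * z ^ (γ + l) * z ^ γ by rw [hc]; ring]
    exact add_mem (Ideal.subset_span (by simp))
      (Ideal.mul_mem_left _ _ (Ideal.subset_span (by simp)))
  have hbc := radical_span_triple_eq_maximalIdeal_s13 hsop hbm hcm (pow_mem hzm hγ)
    hx_rad hy_rad hz_rad
  have hcb : (Ideal.span {c, b, z ^ γ}).radical = maximalIdeal R := by
    rwa [Set.insert_comm]
  obtain ⟨hu, hvu, hwuv⟩ := regularModulo_of_isRegular (hCM _ _ _ (powers hβ hγ))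
  obtain ⟨-, hvp, hwq⟩ := regularModulo_of_isRegular
    (hCM _ _ _ (powers (m := 2 * β + k) (n := 2 * γ + l) (by lia) (by lia)))
  obtain ⟨hb₀, hc_b, -⟩ := regularModulo_of_isRegular (hCM _ _ _ hbc)
  obtain ⟨hc₀, -, -⟩ := regularModulo_of_isRegular (hCM _ _ _ hcb)
  have hy_pow : y ^ (2 * β + k) = (y ^ β) ^ 2 * y ^ k := by ring
  have hz_pow : z ^ (2 * γ + l) = (z ^ γ) ^ 2 * z ^ l := by ring
  rw [hy_pow] at hvp hwq
  rw [hz_pow] at hwq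
  have ha' : a = (z ^ γ) ^ 3 * z ^ l - x ^ 2 * y ^ β := by rw [ha]; ring
  have hb' : b = x ^ 3 - (y ^ β) ^ 2 * y ^ k * z ^ γ := by rw [hb]; ring
  have hc' : c = (y ^ β) ^ 3 * y ^ k - x * ((z ^ γ) ^ 2 * z ^ l) := by rw [hc]; ring
  exact (reesPresentation_polynomial ha' hb' hc' hu hvu hwuv hvp hwq hb₀ hc₀
    hc_b).nonempty_colon_layer_equiv hu ha' hb' hc' hI hQ
end
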